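/- arXiv:1203.3735 — 2 statements merged into one kernel-verified Lean document; each statement's English description precedes it below -/
import Mathlib

section
/- There is a constant c > 0 such that for every finite collection 𝔏 of lines in ℝ³ with |𝔏| = L, the set J of joints of 𝔏 is finite and ∑_{x ∈ J} N(x)^{1/2} ≤ c · L^{3/2}, where N(x) is the multiplicity of the joint x. -/
/-!
The proof is a polynomial method with unequal orders of vanishing, controlled by integer
*handicaps* `α p` attached to the joints `p`.

Fix a degree `n = 3 * m`. On a line `ℓ`, let `t` be the largest integer for which the numbers
`b p ℓ = (t + α p)₊`, over the joints `p ∈ ℓ`, add up to at most `n`; these are the *shares* of the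
joints on `ℓ` (`sum_share_le`). For any choice of a triple of independent lines at each joint,
`∑ p, ∏ ℓ, (b p ℓ + 1) ≥ (m + 1) ^ 3`, the product running over the chosen triple (`joint_count`).
Otherwise some nonzero `q` of degree at most `n` has no Taylor coefficient at any `p`, in the frame
of its triple, with all exponents at most the shares. Take the joint `p` minimizing
`ord_p q - α p`, and a monomial of degree `ord_p q` occurring at `p`. One of its exponents, `a`,
along a line `ℓ` say, exceeds `b p ℓ`. If `j` is the degree of its remaining part, the
corresponding transversal derivative of order `j`, restricted to `ℓ`, is nonzero of degree at
most `n`, yet by minimality it vanishes at each `p' ∈ ℓ` to order at least `a - α p + α p'`; by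
definition of the shares these orders add up to more than `n`.

The handicaps can be chosen so that at each joint *every* triple has product of shares at least
about `s * N(p) ^ (1/2) * m ^ 3`, where `s = 1 / ∑ N(p) ^ (1/2)` (`exists_weights`): take the
largest `α ≥ 0` for which each `p` has `α p = 0` or a triple with product at most that bound. Such
`α` are bounded, because a large gap in the values of `α` would isolate the joints above the gap
from the others and contradict the counting inequality for those joints alone.

Finally, summing over the `N(p)` triples at `p` gives
`N(p) * s * N(p) ^ (1/2) * m ^ 3 ≤ (∑ ℓ ∋ p, (b p ℓ + 2)) ^ 3`, that is,
`s ^ (1/3) * m * N(p) ^ (1/2) ≤ ∑ ℓ ∋ p, (b p ℓ + 2)`. Sum over `p`: with `m = |J|` the right-hand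
side is at most `5 * m * L`, since the shares on each line add up to at most `3 * m`
(`weighted_bound`).
-/

/-- A line in `ℝⁿ`: a set of the form `{a + t • v : t ∈ ℝ}` with `v ≠ 0`. -/
def IsLine (n : ℕ) (ℓ : Set (Fin n → ℝ)) : Prop :=
  ∃ a v : Fin n → ℝ, v ≠ 0 ∧ ℓ = {p | ∃ t : ℝ, p = a + t • v}

/-- `v` is a direction vector of the line `ℓ`. -/
def HasDir (n : ℕ) (ℓ : Set (Fin n → ℝ)) (v : Fin n → ℝ) : Prop :=
  v ≠ 0 ∧ ∃ a : Fin n → ℝ, ℓ = {p | ∃ t : ℝ, p = a + t • v}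

/-- `x` is a joint for the collection `𝔏` of lines: at least three lines of `𝔏` pass
through `x` and have linearly independent direction vectors. -/
def IsJoint (𝔏 : Finset (Set (Fin 3 → ℝ))) (x : Fin 3 → ℝ) : Prop :=
  ∃ ℓ₁ ∈ 𝔏, ∃ ℓ₂ ∈ 𝔏, ∃ ℓ₃ ∈ 𝔏, x ∈ ℓ₁ ∧ x ∈ ℓ₂ ∧ x ∈ ℓ₃ ∧
    ∃ v₁ v₂ v₃ : Fin 3 → ℝ, HasDir 3 ℓ₁ v₁ ∧ HasDir 3 ℓ₂ v₂ ∧ HasDir 3 ℓ₃ v₃ ∧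
      LinearIndependent ℝ ![v₁, v₂, v₃]

open scoped Classical in
/-- The multiplicity `N(x)` of a joint `x`: the number of unordered triples of lines
of `𝔏`, each passing through `x`, whose direction vectors are linearly independent. -/
noncomputable def jointMult (𝔏 : Finset (Set (Fin 3 → ℝ))) (x : Fin 3 → ℝ) : ℕ :=
  ((𝔏.powersetCard 3).filter fun T =>
    ∃ ℓ₁ ℓ₂ ℓ₃ : Set (Fin 3 → ℝ), T = {ℓ₁, ℓ₂, ℓ₃} ∧ x ∈ ℓ₁ ∧ x ∈ ℓ₂ ∧ x ∈ ℓ₃ ∧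
      ∃ v₁ v₂ v₃ : Fin 3 → ℝ, HasDir 3 ℓ₁ v₁ ∧ HasDir 3 ℓ₂ v₂ ∧ HasDir 3 ℓ₃ v₃ ∧
        LinearIndependent ℝ ![v₁, v₂, v₃]).card

/-! ### Polynomials in affine coordinates -/

open MvPolynomial in
/-- The polynomial `q` written in the affine coordinates with origin `p` and axes `v 0, v 1, v 2`:
`chart p v q` is `q (p + X₀ • v 0 + X₁ • v 1 + X₂ • v 2)`. -/
noncomputable def chart (p : Fin 3 → ℝ) (v : Fin 3 → Fin 3 → ℝ) :
    MvPolynomial (Fin 3) ℝ →ₐ[ℝ] MvPolynomial (Fin 3) ℝ :=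
  aeval fun k => C (p k) + ∑ i, C (v i k) * X i

open MvPolynomial in
/-- `ℝ[X₀, X₁, X₂]` viewed as polynomials in the transversal variables `X j`, `j ≠ i`, with
coefficients in `ℝ[X i]`. The variable `X i` of the target is simply never used. The coefficient of
a transversal monomial `e` is, up to a factor, a transversal derivative of order `|e|` restricted
to the `i`-th axis. -/
noncomputable def alongLine (i : Fin 3) :
    MvPolynomial (Fin 3) ℝ →ₐ[ℝ] MvPolynomial (Fin 3) (Polynomial ℝ) :=
  aeval fun k => if k = i then C Polynomial.X else X k

section
open MvPolynomial

theorem totalDegree_chart_le (p : Fin 3 → ℝ) (v : Fin 3 → Fin 3 → ℝ)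
    (q : MvPolynomial (Fin 3) ℝ) : (chart p v q).totalDegree ≤ q.totalDegree := by
  have hL : ∀ k, (C (p k) + ∑ i, C (v i k) * X i : MvPolynomial (Fin 3) ℝ).totalDegree ≤ 1 := by
    intro k
    refine (totalDegree_add _ _).trans (max_le (by simp) ?_)
    refine (totalDegree_finsetSum _ _).trans (Finset.sup_le fun i _ => ?_)
    exact (isHomogeneous_C_mul_X (v i k) i).totalDegree_le
  rw [chart, aeval_def, eval₂_eq]
  refine (totalDegree_finsetSum _ _).trans (Finset.sup_le fun d hd => ?_)
  refine (totalDegree_mul _ _).trans ?_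
  have h1 : (algebraMap ℝ (MvPolynomial (Fin 3) ℝ) (coeff d q)).totalDegree = 0 :=
    totalDegree_C _
  rw [h1, zero_add]
  refine (totalDegree_finsetProd _ _).trans ?_
  refine le_trans ?_ (le_totalDegree hd)
  rw [Finsupp.sum]
  refine Finset.sum_le_sum fun k _ => (totalDegree_pow _ _).trans ?_
  nlinarith [hL k]

/-- A linear change of variables does not decrease the order of vanishing at the origin. -/
theorem coeff_aeval_linear_eq_zero (A : Fin 3 → Fin 3 → ℝ) (r : MvPolynomial (Fin 3) ℝ) (m : ℕ)
    (hr : ∀ d, d.degree < m → coeff d r = 0) (d : Fin 3 →₀ ℕ) (hd : d.degree < m) :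
    coeff d (aeval (fun j => ∑ i, C (A i j) * X i : Fin 3 → MvPolynomial (Fin 3) ℝ) r) = 0 := by
  conv_lhs => rw [r.as_sum]
  rw [map_sum, coeff_sum]
  refine Finset.sum_eq_zero fun e he => ?_
  have hem : m ≤ e.degree := by
    by_contra! h
    exact (mem_support_iff.1 he) (hr e h)
  have h1 : (aeval (fun j => ∑ i, C (A i j) * X i : Fin 3 → MvPolynomial (Fin 3) ℝ)
      (monomial e (coeff e r))).IsHomogeneous (1 * e.degree) :=
    (isHomogeneous_monomial _ rfl).aeval _ fun j =>
      IsHomogeneous.sum _ _ _ fun i _ => isHomogeneous_C_mul_X _ _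
  exact h1.coeff_eq_zero (by omega)

/-- Two charts with the same origin differ by a linear change of variables. -/
theorem chart_change (p : Fin 3 → ℝ) {v : Fin 3 → Fin 3 → ℝ} (hv : LinearIndependent ℝ v)
    (w : Fin 3 → Fin 3 → ℝ) : ∃ A : Fin 3 → Fin 3 → ℝ, ∀ q, chart p w q =
      aeval (fun j => ∑ i, C (A i j) * X i : Fin 3 → MvPolynomial (Fin 3) ℝ) (chart p v q) := by
  let b := basisOfLinearIndependentOfCardEqFinrank hv (by simp)
  have hb : ∀ j, b j = v j := fun j => by simp [b]
  refine ⟨fun i j => b.repr (w i) j, fun q => ?_⟩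
  have hw : ∀ i k, w i k = ∑ j, b.repr (w i) j * v j k := by
    intro i k
    conv_lhs => rw [← b.sum_repr (w i)]
    simp [hb]
  rw [← AlgHom.comp_apply]
  refine AlgHom.congr_fun (MvPolynomial.algHom_ext fun k => ?_) q
  simp only [chart, aeval_X, AlgHom.comp_apply, map_add, map_sum, map_mul, algHom_C,
    MvPolynomial.algebraMap_eq]
  congr 1
  simp_rw [hw _ k, map_sum, Finset.sum_mul, Finset.mul_sum]
  rw [Finset.sum_comm]
  refine Finset.sum_congr rfl fun i _ => Finset.sum_congr rfl fun j _ => ?_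
  rw [C_mul]; ring

theorem chart_injective (p : Fin 3 → ℝ) {v : Fin 3 → Fin 3 → ℝ} (hv : LinearIndependent ℝ v)
    {q : MvPolynomial (Fin 3) ℝ} (hq : chart p v q = 0) : q = 0 := by
  obtain ⟨A, hA⟩ := chart_change p hv (fun i k => if i = k then 1 else 0)
  have h := hA q
  rw [hq, map_zero] at h
  have h2 : (aeval (fun k => X k - C (p k) : Fin 3 → MvPolynomial (Fin 3) ℝ)).comp
      (chart p (fun i k => if i = k then 1 else 0)) = AlgHom.id ℝ _ := by
    refine MvPolynomial.algHom_ext fun k => ?_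
    simp [chart, algHom_C]
  have := congrArg (fun f => f q) h2
  simpa [h] using this.symm

theorem coeff_alongLine (i : Fin 3) (r : MvPolynomial (Fin 3) ℝ) (e : Fin 3 →₀ ℕ) (he : e i = 0)
    (k : ℕ) : (coeff e (alongLine i r)).coeff k = coeff (e + Finsupp.single i k) r := by
  induction r using MvPolynomial.induction_on' with
  | add p q hp hq => simp [hp, hq]
  | monomial d a =>
    have h1 : alongLine i (monomial d a) =
        monomial (d.erase i) (Polynomial.C a * Polynomial.X ^ d i) := by
      have h3 : (algebraMap ℝ (MvPolynomial (Fin 3) (Polynomial ℝ))) a = C (Polynomial.C a) := rfl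
      have h4 : ∏ j, (if j = i then C Polynomial.X else X j :
          MvPolynomial (Fin 3) (Polynomial ℝ)) ^ d j =
          C (Polynomial.X ^ d i) * ∏ j, X j ^ (d.erase i) j := by
        rw [← Finset.mul_prod_erase _ _ (Finset.mem_univ i), ← Finset.mul_prod_erase
          (a := i) (f := fun j => X j ^ (d.erase i) j) _ (Finset.mem_univ i)]
        rw [if_pos rfl, Finsupp.erase_same, pow_zero, one_mul, C_pow]
        congr 1
        refine Finset.prod_congr rfl fun j hj => ?_
        have hj' := Finset.ne_of_mem_erase hj
        rw [if_neg hj', Finsupp.erase_ne hj']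
      rw [alongLine, aeval_monomial, monomial_eq, Finsupp.prod_fintype _ _ (by simp),
        Finsupp.prod_fintype _ _ (by simp), h3, h4, C_mul, mul_assoc]
    rw [h1, coeff_monomial, coeff_monomial]
    by_cases hd : d = e + Finsupp.single i k
    · subst hd
      have : (e + Finsupp.single i k).erase i = e := by
        ext j
        by_cases hj : j = i
        · subst hj; simp [he]
        · simp [hj]
      simp [this, he]
    · rw [if_neg hd]
      split_ifs with h
      · rw [Polynomial.coeff_C_mul_X_pow, if_neg]
        rintro rfl
        apply hd
        rw [← h, Finsupp.erase_add_single]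
      · simp

/-- Moving the origin of a chart along its `i`-th axis translates the coefficients in `ℝ[X i]`. -/
theorem alongLine_chart_translate (p : Fin 3 → ℝ) (v : Fin 3 → Fin 3 → ℝ) (i : Fin 3) (t : ℝ)
    (q : MvPolynomial (Fin 3) ℝ) :
    alongLine i (chart (p + t • v i) v q) =
      mapAlgHom (Polynomial.aeval (Polynomial.X + Polynomial.C t : Polynomial ℝ))
        (alongLine i (chart p v q)) := by
  rw [← AlgHom.comp_apply, ← AlgHom.comp_apply (alongLine i), ← AlgHom.comp_apply]
  refine AlgHom.congr_fun (MvPolynomial.algHom_ext fun k => ?_) q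
  have hC : ∀ a : ℝ, alongLine i (C a) = C (Polynomial.C a) := fun a => by
    rw [algHom_C]; rfl
  have hX : ∀ j, alongLine i (X j) = if j = i then C Polynomial.X else X j := fun j => by
    rw [alongLine, aeval_X]
  have hmC : ∀ a : ℝ, mapAlgHom (Polynomial.aeval (Polynomial.X + Polynomial.C t : Polynomial ℝ))
      (C (Polynomial.C a) : MvPolynomial (Fin 3) (Polynomial ℝ)) = C (Polynomial.C a) := fun a => by
    simp [mapAlgHom_apply]
  have hmX : ∀ j, mapAlgHom (Polynomial.aeval (Polynomial.X + Polynomial.C t : Polynomial ℝ))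
      (if j = i then C Polynomial.X else X j : MvPolynomial (Fin 3) (Polynomial ℝ)) =
      if j = i then C Polynomial.X + C (Polynomial.C t) else X j := fun j => by
    split_ifs <;> simp [mapAlgHom_apply]
  simp only [chart, AlgHom.comp_apply, aeval_X, map_add, map_mul, hC, hX, hmC, hmX,
    Pi.add_apply, Pi.smul_apply, smul_eq_mul, Fin.sum_univ_three]
  fin_cases i <;> simp <;> ring
end

/-! ### The polynomial-method inequality -/

section
open MvPolynomial

/-- Parameter counting: the `(m + 1) ^ 3` monomials with all exponents at most `m` leave room for a
nonzero polynomial whose Taylor coefficients at each `p ∈ U`, in the frame `v p`, vanish on the box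
of exponents bounded by `B p`. -/
theorem exists_poly (U : Finset (Fin 3 → ℝ)) (v : (Fin 3 → ℝ) → Fin 3 → Fin 3 → ℝ)
    (B : (Fin 3 → ℝ) → Fin 3 → ℕ) (m : ℕ) (h : ∑ p ∈ U, ∏ i, (B p i + 1) < (m + 1) ^ 3) :
    ∃ q : MvPolynomial (Fin 3) ℝ, q ≠ 0 ∧ q.totalDegree ≤ 3 * m ∧
      ∀ p ∈ U, ∀ d : Fin 3 →₀ ℕ, (∀ i, d i ≤ B p i) → coeff d (chart p (v p) q) = 0 := by
  classical
  let e : (Fin 3 → Fin (m + 1)) → (Fin 3 →₀ ℕ) := fun f =>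
    Finsupp.equivFunOnFinite.symm fun i => (f i : ℕ)
  have he : Function.Injective e := by
    intro f g hfg
    funext i
    have := DFunLike.congr_fun hfg i
    exact Fin.ext (by simpa [e] using this)
  let ev : ((Fin 3 → Fin (m + 1)) → ℝ) →ₗ[ℝ] MvPolynomial (Fin 3) ℝ :=
    Fintype.linearCombination ℝ fun f => monomial (e f) 1
  have hev : ∀ c, ev c = ∑ f, monomial (e f) (c f) := by
    intro c
    simp [ev, Fintype.linearCombination_apply, smul_monomial]
  let Φ : ((Fin 3 → Fin (m + 1)) → ℝ) →ₗ[ℝ]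
      ((Σ p : U, ∀ i : Fin 3, Fin (B p i + 1)) → ℝ) :=
    LinearMap.pi fun x => (lcoeff ℝ (Finsupp.equivFunOnFinite.symm fun i => (x.2 i : ℕ))).comp
      ((chart x.1 (v x.1)).toLinearMap.comp ev)
  have hker : LinearMap.ker Φ ≠ ⊥ := by
    apply LinearMap.ker_ne_bot_of_finrank_lt
    simp only [Module.finrank_fintype_fun_eq_card, Fintype.card_sigma, Fintype.card_pi,
      Fintype.card_fin, Finset.prod_const, Finset.card_univ]
    rwa [Finset.sum_coe_sort U (fun p => ∏ i, (B p i + 1))]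
  obtain ⟨c, hc, hc0⟩ := (Submodule.ne_bot_iff _).1 hker
  refine ⟨ev c, ?_, ?_, ?_⟩
  · intro h0
    apply hc0
    funext f
    have := congrArg (coeff (e f)) h0
    rw [hev, coeff_sum] at this
    simpa [coeff_monomial, he.eq_iff] using this
  · rw [hev]
    refine (totalDegree_finsetSum _ _).trans (Finset.sup_le fun f _ => ?_)
    refine (totalDegree_monomial_le _ _).trans ?_
    rw [Finsupp.sum_fintype _ _ (by simp), Fin.sum_univ_three]
    have h0 := (f 0).is_lt
    have h1 := (f 1).is_lt
    have h2 := (f 2).is_lt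
    simp only [e, Finsupp.equivFunOnFinite_symm_apply_apply, id_eq]
    omega
  · intro p hp d hd
    have := congrFun (LinearMap.mem_ker.1 hc) ⟨⟨p, hp⟩, fun i => ⟨d i, Nat.lt_succ_of_le (hd i)⟩⟩
    have hdd : (Finsupp.equivFunOnFinite.symm fun i => d i) = d := by ext; simp
    simpa [Φ, lcoeff_apply, hdd] using this

/-- If `q` vanishes to order `M` at a point `p'` of the `i`-th axis of a chart, then its transversal
derivatives of order `|e|`, restricted to that axis, vanish to order `M - |e|` at `p'`. -/
theorem line_vanishing {p p' : Fin 3 → ℝ} {v v' : Fin 3 → Fin 3 → ℝ} {i : Fin 3} {t : ℝ} (hv' : LinearIndependent ℝ v')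
    (hp' : p' = p + t • v i) {q : MvPolynomial (Fin 3) ℝ} {M : ℕ}
    (hM : ∀ d, d.degree < M → coeff d (chart p' v' q) = 0) {e : Fin 3 →₀ ℕ} (he : e i = 0) :
    (Polynomial.X - Polynomial.C t) ^ (M - e.degree) ∣ coeff e (alongLine i (chart p v q)) := by
  obtain ⟨A, hA⟩ := chart_change p' hv' v
  have hM' : ∀ d, d.degree < M → coeff d (chart p' v q) = 0 := by
    rw [hA q]; exact coeff_aeval_linear_eq_zero A _ M hM
  have h1 := alongLine_chart_translate p v i t q
  have h2 := congrArg (coeff e) h1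
  rw [mapAlgHom_apply, coeff_map, ← hp'] at h2
  have h3 : Polynomial.X ^ (M - e.degree) ∣ coeff e (alongLine i (chart p' v q)) := by
    rw [Polynomial.X_pow_dvd_iff]
    intro k hk
    rw [coeff_alongLine i _ e he k]
    apply hM'
    rw [map_add, Finsupp.degree_single]
    omega
  rw [h2] at h3
  have h4 := map_dvd (Polynomial.aeval (Polynomial.X - Polynomial.C t : Polynomial ℝ)) h3
  have h5 : (Polynomial.aeval (Polynomial.X - Polynomial.C t : Polynomial ℝ)).comp
      (Polynomial.aeval (Polynomial.X + Polynomial.C t : Polynomial ℝ)) = AlgHom.id ℝ _ :=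
    Polynomial.algHom_ext (by simp)
  have h6 := AlgHom.congr_fun h5 (coeff e (alongLine i (chart p v q)))
  rw [AlgHom.comp_apply] at h6
  rw [map_pow, Polynomial.aeval_X] at h4
  exact h4.trans (dvd_of_eq h6)

/-- The polynomial-method inequality. `S p i` is a set of points of `U` on the line through `p` in
direction `v p i`. If `B p i` is so large that any order `a > B p i` at `p`, propagated to the other
points of the line by the handicaps `α`, exceeds the degree `3 * m`, then the boxes of side lengths
`B p i + 1` contain at least `(m + 1) ^ 3` exponents in total. -/
theorem joint_count (U : Finset (Fin 3 → ℝ)) (hU : U.Nonempty) (α : (Fin 3 → ℝ) → ℤ)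
    (v : (Fin 3 → ℝ) → Fin 3 → Fin 3 → ℝ) (hv : ∀ p ∈ U, LinearIndependent ℝ (v p))
    (B : (Fin 3 → ℝ) → Fin 3 → ℕ) (m : ℕ) (S : (Fin 3 → ℝ) → Fin 3 → Finset (Fin 3 → ℝ))
    (hS : ∀ p ∈ U, ∀ i, ∀ p' ∈ S p i, p' ∈ U ∧ ∃ t : ℝ, p' = p + t • v p i)
    (hB : ∀ p ∈ U, ∀ i, ∀ a : ℕ, B p i < a →
      3 * m < ∑ p' ∈ S p i, ((a : ℤ) - α p + α p').toNat) :
    (m + 1) ^ 3 ≤ ∑ p ∈ U, ∏ i, (B p i + 1) := by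
  classical
  by_contra! hlt
  obtain ⟨q, hq0, hqd, hq⟩ := exists_poly U v B m hlt
  have hD : ∀ p ∈ U, ∃ D : Fin 3 →₀ ℕ, coeff D (chart p (v p) q) ≠ 0 ∧
      ∀ d : Fin 3 →₀ ℕ, d.degree < D.degree → coeff d (chart p (v p) q) = 0 := by
    intro p hp
    have hne : (chart p (v p) q).support.Nonempty := by
      rw [Finset.nonempty_iff_ne_empty, Ne, support_eq_empty]
      exact fun h => hq0 (chart_injective p (hv p hp) h)
    obtain ⟨D, hD, hmin⟩ := Finset.exists_min_image _ (fun d : Fin 3 →₀ ℕ => d.degree) hne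
    refine ⟨D, mem_support_iff.1 hD, fun d hd => ?_⟩
    by_contra hd0
    exact absurd (hmin d (mem_support_iff.2 hd0)) (by simpa using hd)
  choose! D hD0 hDmin using hD
  -- At the point where (order of vanishing) - (handicap) is least, the handicaps give lower bounds
  -- for the orders of vanishing at all the other points.
  obtain ⟨p, hp, hpmin⟩ := Finset.exists_min_image U (fun p => ((D p).degree : ℤ) - α p) hU
  obtain ⟨i, hi⟩ : ∃ i, B p i < D p i := by
    by_contra! h
    exact hD0 p hp (hq p hp (D p) h)
  set e := (D p).erase i with he
  have hei : e i = 0 := Finsupp.erase_same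
  have hsplit : e + Finsupp.single i (D p i) = D p := Finsupp.erase_add_single i (D p)
  have hdeg : (D p).degree = e.degree + D p i := by
    conv_lhs => rw [← hsplit]
    rw [map_add, Finsupp.degree_single]
  set g := coeff e (alongLine i (chart p (v p) q)) with hg
  have hg0 : g ≠ 0 := by
    intro h0
    have := coeff_alongLine i (chart p (v p) q) e hei (D p i)
    rw [← hg, h0, hsplit] at this
    exact hD0 p hp (by simpa using this.symm)
  have hgd : g.natDegree ≤ 3 * m := by
    rw [Polynomial.natDegree_le_iff_coeff_eq_zero]
    intro k hk
    rw [hg, coeff_alongLine i _ e hei k]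
    apply coeff_eq_zero_of_totalDegree_lt
    refine lt_of_le_of_lt ((totalDegree_chart_le _ _ _).trans hqd) (hk.trans_le ?_)
    change k ≤ (e + Finsupp.single i k).degree
    rw [map_add, Finsupp.degree_single]
    omega
  choose! τ hτ using fun p' (hp' : p' ∈ S p i) => (hS p hp i p' hp').2
  have hinj : Set.InjOn τ (S p i) := by
    intro x hx y hy hxy
    rw [hτ x hx, hτ y hy, hxy]
  -- The cancellation of `|e|`: at `p'` the polynomial `g` vanishes to order at least
  -- `(deg (D p') - |e|)`, and `deg (D p') - α p' ≥ D p i + |e| - α p`.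
  have key : ∑ p' ∈ S p i, ((D p i : ℤ) - α p + α p').toNat ≤ g.natDegree := by
    calc ∑ p' ∈ S p i, ((D p i : ℤ) - α p + α p').toNat
        ≤ ∑ p' ∈ S p i, g.roots.count (τ p') := by
          refine Finset.sum_le_sum fun p' hp' => ?_
          have hp'U := (hS p hp i p' hp').1
          have h1 := line_vanishing (v := v p) (hv p' hp'U) (hτ p' hp') (hDmin p' hp'U) hei
          rw [Polynomial.count_roots]
          refine le_trans ?_ ((Polynomial.le_rootMultiplicity_iff hg0).2 h1)
          have := hpmin p' hp'U
          omega
      _ = ∑ x ∈ (S p i).image τ, g.roots.count x :=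
          (Finset.sum_image (f := fun x => g.roots.count x) hinj).symm
      _ ≤ g.roots.card := by
          rw [← Multiset.toFinset_sum_count_eq]
          refine Finset.sum_le_sum_of_ne_zero fun x _ hx => ?_
          rw [Multiset.mem_toFinset]
          exact Multiset.count_ne_zero.1 hx
      _ ≤ g.natDegree := Polynomial.card_roots' g
  exact absurd (hB p hp i _ hi) (not_lt.2 (key.trans hgd))
end

/-! ### Shares and handicaps -/

section
variable {P : Type*}

/-- For a finite set `S` of points on a line, with handicaps `α`, the greatest integer `t` such that
orders of vanishing `(t + α p)₊` at the points `p ∈ S` add up to at most `n`. When `S` is empty this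
is the junk value of `sSup`. -/
noncomputable def level (S : Finset P) (n : ℕ) (α : P → ℕ) : ℤ :=
  sSup {t : ℤ | ∑ p ∈ S, (t + α p).toNat ≤ n}

/-- The share `(level + α p)₊` of the point `p` in the degree `n` available on the line. -/
noncomputable def share (S : Finset P) (n : ℕ) (α : P → ℕ) (p : P) : ℕ :=
  (level S n α + α p).toNat

theorem level_bddAbove {S : Finset P} (hS : S.Nonempty) (n : ℕ) (α : P → ℕ) :
    BddAbove {t : ℤ | ∑ p ∈ S, (t + α p).toNat ≤ n} := by
  obtain ⟨p, hp⟩ := hS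
  refine ⟨n, fun t ht => ?_⟩
  have h1 := Finset.single_le_sum (f := fun p => (t + α p).toNat) (fun _ _ => Nat.zero_le _) hp
  have h2 : (t + α p).toNat ≤ n := h1.trans ht
  omega

theorem sum_share_le (S : Finset P) (n : ℕ) (α : P → ℕ) : ∑ p ∈ S, share S n α p ≤ n := by
  rcases S.eq_empty_or_nonempty with rfl | hS
  · simp
  have hne : {t : ℤ | ∑ p ∈ S, (t + α p).toNat ≤ n}.Nonempty := by
    refine ⟨-(∑ p ∈ S, α p : ℕ), ?_⟩
    have : ∑ p ∈ S, (-((∑ p ∈ S, α p : ℕ) : ℤ) + α p).toNat = 0 := by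
      refine Finset.sum_eq_zero fun p hp => ?_
      have := Finset.single_le_sum (f := α) (fun _ _ => Nat.zero_le _) hp
      omega
    exact this.trans_le (Nat.zero_le n)
  exact Int.csSup_mem hne (level_bddAbove hS n α)

theorem le_level {S : Finset P} (hS : S.Nonempty) {n : ℕ} {α : P → ℕ} {t : ℤ}
    (ht : ∑ p ∈ S, (t + α p).toNat ≤ n) : t ≤ level S n α :=
  le_csSup (level_bddAbove hS n α) ht

theorem level_anti {S : Finset P} (hS : S.Nonempty) (n : ℕ) {α β : P → ℕ} (h : ∀ p, α p ≤ β p) :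
    level S n β ≤ level S n α := by
  apply le_level hS
  refine le_trans (Finset.sum_le_sum fun p _ => ?_) (sum_share_le S n β)
  have := h p
  unfold share
  omega

theorem sum_prod_powersetCard_le {ι : Type*} [DecidableEq ι] (x : ι → ℝ) (hx : ∀ i, 0 ≤ x i)
    (s : Finset ι) (k : ℕ) : ∑ T ∈ s.powersetCard k, ∏ i ∈ T, x i ≤ (∑ i ∈ s, x i) ^ k := by
  induction s using Finset.induction_on generalizing k with
  | empty =>
    cases k with
    | zero => simp
    | succ k => rw [Finset.powersetCard_eq_empty.2 (by simp)]; simp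
  | insert a s ha ih =>
    cases k with
    | zero => simp
    | succ k =>
      have hY : 0 ≤ ∑ i ∈ s, x i := Finset.sum_nonneg fun i _ => hx i
      rw [Finset.powersetCard_succ_insert ha, Finset.sum_union, Finset.sum_image,
        Finset.sum_insert ha]
      · have h1 : ∑ T ∈ s.powersetCard k, ∏ i ∈ insert a T, x i =
            x a * ∑ T ∈ s.powersetCard k, ∏ i ∈ T, x i := by
          rw [Finset.mul_sum]
          refine Finset.sum_congr rfl fun T hT => Finset.prod_insert fun h => ?_
          exact ha ((Finset.mem_powersetCard.1 hT).1 h)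
        rw [h1]
        calc _ ≤ (∑ i ∈ s, x i) ^ (k + 1) + x a * (∑ i ∈ s, x i) ^ k :=
              add_le_add (ih _) (mul_le_mul_of_nonneg_left (ih _) (hx a))
          _ = (x a + ∑ i ∈ s, x i) * (∑ i ∈ s, x i) ^ k := by ring
          _ ≤ (x a + ∑ i ∈ s, x i) * (x a + ∑ i ∈ s, x i) ^ k := by
              gcongr
              · exact add_nonneg (hx a) hY
              · linarith [hx a]
          _ = _ := by ring
      · intro T hT T' hT' h
        have h1 : a ∉ T := fun h => ha ((Finset.mem_powersetCard.1 hT).1 h)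
        have h2 : a ∉ T' := fun h => ha ((Finset.mem_powersetCard.1 hT').1 h)
        rw [← Finset.erase_insert h1, ← Finset.erase_insert h2, h]
      · rw [Finset.disjoint_left]
        intro T hT hT'
        obtain ⟨T', -, rfl⟩ := Finset.mem_image.1 hT'
        exact ha ((Finset.mem_powersetCard.1 hT).1 (Finset.mem_insert_self _ _))

/-- Choice of handicaps. Given the counting inequality `hcount` for all handicaps and all nonempty
`U ⊆ J`, the handicaps can be chosen so that at every `p ∈ J` every triple has a product of shares
at least (up to the shift by `2`) the prescribed weight `s * w p * m ^ 3`. They maximize the total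
handicap among those for which each `p` with `α p ≠ 0` has a triple of product at most that
weight. -/
theorem exists_weights {ι : Type*} [DecidableEq P] [DecidableEq ι] (J : Finset P)
    (S : ι → Finset P) (hSJ : ∀ ℓ, S ℓ ⊆ J) (Tr : P → Finset (Finset ι))
    (hTr : ∀ p ∈ J, ∀ T ∈ Tr p, ∀ ℓ ∈ T, p ∈ S ℓ)
    (m : ℕ) (w : P → ℝ) (hw : ∀ p, 0 ≤ w p)
    (hcount : ∀ U ⊆ J, U.Nonempty → ∀ (α : P → ℤ) (T : P → Finset ι) (B : P → ι → ℕ),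
      (∀ p ∈ U, T p ∈ Tr p) →
      (∀ p ∈ U, ∀ ℓ ∈ T p, ∀ a : ℕ, B p ℓ < a →
        3 * m < ∑ p' ∈ S ℓ ∩ U, ((a : ℤ) - α p + α p').toNat) →
      (m + 1) ^ 3 ≤ ∑ p ∈ U, ∏ ℓ ∈ T p, (B p ℓ + 1))
    (s : ℝ) (hs0 : 0 ≤ s) (hs : s * ∑ p ∈ J, w p ≤ 1) :
    ∃ α : P → ℕ, ∀ p ∈ J, ∀ T ∈ Tr p,
      s * w p * m ^ 3 ≤ ∏ ℓ ∈ T, ((share (S ℓ) (3 * m) α p : ℝ) + 2) := by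
  set n := 3 * m with hn
  let A : Set (P → ℕ) := {α | ∀ p ∈ J, α p ≠ 0 →
    ∃ T ∈ Tr p, ∏ ℓ ∈ T, ((share (S ℓ) n α p : ℝ) + 1) ≤ s * w p * m ^ 3}
  -- No admissible `α` has a gap of length more than `n` in its values below a nonempty set `U` of
  -- points: across the gap shares are `0`, so the counting inequality for `U` would be violated.
  have gap : ∀ α ∈ A, ∀ k : ℕ, {p ∈ J | n * (k + 1) < α p}.Nonempty →
      {p ∈ J | n * (k + 1) < α p} ≠ {p ∈ J | n * k < α p} := by
    intro α hα k hne heq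
    set U := {p ∈ J | n * (k + 1) < α p} with hU
    have hUJ : U ⊆ J := Finset.filter_subset _ _
    have hT : ∀ p ∈ U, ∃ T ∈ Tr p,
        ∏ ℓ ∈ T, ((share (S ℓ) n α p : ℝ) + 1) ≤ s * w p * m ^ 3 := fun p hp =>
      hα p (hUJ hp) (by have := (Finset.mem_filter.1 hp).2; omega)
    choose! T hT1 hT2 using hT
    have h1 := hcount U hUJ hne (fun p => (α p : ℤ)) T (fun p ℓ => share (S ℓ) n α p) hT1 (by
      intro p hp ℓ hℓ a ha
      have hpS : p ∈ S ℓ := hTr p (hUJ hp) _ (hT1 p hp) ℓ hℓ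
      have hpk := (Finset.mem_filter.1 hp).2
      rcases lt_or_ge n a with han | han
      · refine lt_of_lt_of_le ?_ (Finset.single_le_sum
          (f := fun p' => ((a : ℤ) - α p + α p').toNat) (fun _ _ => Nat.zero_le _)
          (Finset.mem_inter.2 ⟨hpS, hp⟩))
        omega
      · have h2 : ¬ ((a : ℤ) - α p ≤ level (S ℓ) n α) := by
          unfold share at ha
          omega
        have h3 : n < ∑ p' ∈ S ℓ, ((a : ℤ) - α p + α p').toNat := by
          by_contra! h
          exact h2 (le_level ⟨p, hpS⟩ h)
        refine h3.trans_eq (Finset.sum_subset Finset.inter_subset_left fun p' hp' hp'U => ?_).symm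
        have h4 : ¬ (n * k < α p') := by
          intro h
          apply hp'U
          rw [Finset.mem_inter, heq]
          exact ⟨hp', Finset.mem_filter.2 ⟨hSJ ℓ hp', h⟩⟩
        have h5 : n * (k + 1) = n * k + n := by ring
        omega)
    have h6 : ((m : ℝ) + 1) ^ 3 ≤ ∑ p ∈ U, ∏ ℓ ∈ T p, ((share (S ℓ) n α p : ℝ) + 1) := by
      exact_mod_cast h1
    have h7 : ∑ p ∈ U, ∏ ℓ ∈ T p, ((share (S ℓ) n α p : ℝ) + 1) ≤ 1 * (m : ℝ) ^ 3 := by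
      calc _ ≤ ∑ p ∈ U, s * w p * m ^ 3 := Finset.sum_le_sum hT2
        _ = s * (∑ p ∈ U, w p) * m ^ 3 := by rw [Finset.mul_sum, Finset.sum_mul]
        _ ≤ s * (∑ p ∈ J, w p) * m ^ 3 := by
            gcongr
            exact fun p _ _ => hw p
        _ ≤ _ := by gcongr
    have h8 : (m : ℝ) ^ 3 < ((m : ℝ) + 1) ^ 3 := by gcongr; linarith
    linarith
  -- Without gaps, the sets `{α p > n * k}` shrink strictly until they are empty.
  have hbdd : ∀ α ∈ A, ∀ p ∈ J, α p ≤ n * J.card := by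
    intro α hα
    have h1 : ∀ k : ℕ, {p ∈ J | n * k < α p}.Nonempty → {p ∈ J | n * k < α p}.card + k ≤ J.card := by
      intro k
      induction k with
      | zero => exact fun _ => Finset.card_le_card (Finset.filter_subset _ _)
      | succ k ih =>
        intro hne
        have hsub : {p ∈ J | n * (k + 1) < α p} ⊆ {p ∈ J | n * k < α p} := by
          refine Finset.monotone_filter_right _ fun p _ hp => ?_
          exact lt_of_le_of_lt (Nat.mul_le_mul_left n (Nat.le_succ k)) hp
        have h2 := Finset.card_lt_card (hsub.ssubset_of_ne (gap α hα k hne))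
        have h3 := ih (hne.mono hsub)
        omega
    intro p hp
    by_contra! h
    have hne : {p ∈ J | n * J.card < α p}.Nonempty := ⟨p, Finset.mem_filter.2 ⟨hp, h⟩⟩
    have := h1 _ hne
    have := hne.card_pos
    omega
  have hne : {k | ∃ α ∈ A, ∑ p ∈ J, α p = k}.Nonempty :=
    ⟨_, fun _ => 0, fun p _ h => absurd rfl h, rfl⟩
  have hbd : BddAbove {k | ∃ α ∈ A, ∑ p ∈ J, α p = k} := by
    refine ⟨J.card • (n * J.card), ?_⟩
    rintro k ⟨α, hα, rfl⟩
    exact Finset.sum_le_card_nsmul _ _ _ (hbdd α hα)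
  obtain ⟨α, hα, hαs⟩ := Nat.sSup_mem hne hbd
  refine ⟨α, fun p hp T hT => ?_⟩
  by_contra! hlt
  -- Raising a handicap by `1` raises the shares of that point by at most `1` and no other share.
  set β := Function.update α p (α p + 1) with hβ
  have hαβ : ∀ x, α x ≤ β x := by
    intro x
    by_cases hx : x = p
    · subst hx; simp [hβ]
    · simp [hβ, hx]
  have hβA : β ∈ A := by
    intro x hx hx0
    by_cases hxp : x = p
    · subst hxp
      refine ⟨T, hT, le_trans (Finset.prod_le_prod (fun _ _ => by positivity) fun ℓ hℓ => ?_) hlt.le⟩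
      have h1 := level_anti ⟨x, hTr x hx T hT ℓ hℓ⟩ n hαβ
      have h2 : share (S ℓ) n β x ≤ share (S ℓ) n α x + 1 := by
        have : β x = α x + 1 := by simp [hβ]
        unfold share
        omega
      have h3 : (share (S ℓ) n β x : ℝ) ≤ share (S ℓ) n α x + 1 := by exact_mod_cast h2
      linarith
    · have hx1 : β x = α x := by simp [hβ, hxp]
      obtain ⟨T', hT', hle⟩ := hα x hx (hx1 ▸ hx0)
      refine ⟨T', hT', le_trans (Finset.prod_le_prod (fun _ _ => by positivity) fun ℓ hℓ => ?_) hle⟩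
      have h1 := level_anti ⟨x, hTr x hx T' hT' ℓ hℓ⟩ n hαβ
      have h2 : share (S ℓ) n β x ≤ share (S ℓ) n α x := by
        unfold share
        omega
      have h3 : (share (S ℓ) n β x : ℝ) ≤ share (S ℓ) n α x := by exact_mod_cast h2
      linarith
  have h1 : ∑ x ∈ J, β x ≤ sSup {k | ∃ α ∈ A, ∑ p ∈ J, α p = k} := le_csSup hbd ⟨β, hβA, rfl⟩
  have h2 : ∑ x ∈ J, α x < ∑ x ∈ J, β x :=
    Finset.sum_lt_sum (fun x _ => hαβ x) ⟨p, hp, by simp [hβ]⟩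
  omega

/-- The joints inequality in abstract form: `S ℓ` is the set of joints on the line `ℓ`, and `Tr p`
the set of triples of lines counted at the joint `p`. -/
theorem weighted_bound {ι : Type*} [DecidableEq P] [DecidableEq ι] (J : Finset P)
    (L : Finset ι) (S : ι → Finset P) (hSJ : ∀ ℓ, S ℓ ⊆ J) (Tr : P → Finset (Finset ι))
    (hTr : ∀ p ∈ J, ∀ T ∈ Tr p, T ∈ L.powersetCard 3 ∧ ∀ ℓ ∈ T, p ∈ S ℓ)
    (hcount : ∀ m : ℕ, ∀ U ⊆ J, U.Nonempty → ∀ (α : P → ℤ) (T : P → Finset ι) (B : P → ι → ℕ),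
      (∀ p ∈ U, T p ∈ Tr p) →
      (∀ p ∈ U, ∀ ℓ ∈ T p, ∀ a : ℕ, B p ℓ < a →
        3 * m < ∑ p' ∈ S ℓ ∩ U, ((a : ℤ) - α p + α p').toNat) →
      (m + 1) ^ 3 ≤ ∑ p ∈ U, ∏ ℓ ∈ T p, (B p ℓ + 1)) :
    (∑ p ∈ J, √((Tr p).card : ℝ)) ^ 2 ≤ 125 * (L.card : ℝ) ^ 3 := by
  set w : P → ℝ := fun p => √((Tr p).card : ℝ) with hwdef
  have hw : ∀ p, 0 ≤ w p := fun p => Real.sqrt_nonneg _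
  set W := ∑ p ∈ J, w p with hW
  clear_value W
  have hW0 : 0 ≤ W := hW ▸ Finset.sum_nonneg fun p _ => hw p
  rcases hW0.eq_or_lt with h0 | hWpos
  · rw [← h0, zero_pow two_ne_zero]; positivity
  set m := J.card with hm
  have hmpos : 0 < m := by
    rw [hm, Finset.card_pos]
    by_contra h
    rw [Finset.not_nonempty_iff_eq_empty] at h
    rw [hW, h] at hWpos
    simp at hWpos
  -- The cube root of the constant `s = 1 / W` for which the weights `s * w p` add up to `1`.
  obtain ⟨σ, hσ0, hσ3⟩ : ∃ σ : ℝ, 0 ≤ σ ∧ σ ^ 3 = 1 / W := by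
    have hW' : 0 ≤ 1 / W := (one_div_pos.2 hWpos).le
    refine ⟨(1 / W) ^ (((3 : ℕ) : ℝ)⁻¹), Real.rpow_nonneg hW' _, ?_⟩
    exact Real.rpow_inv_natCast_pow hW' three_ne_zero
  obtain ⟨α, hα⟩ := exists_weights J S hSJ Tr (fun p hp T hT => (hTr p hp T hT).2) m w hw
    (hcount m) (σ ^ 3) (pow_nonneg hσ0 3) (by rw [hσ3, ← hW]; exact (one_div_mul_cancel hWpos.ne').le)
  -- Every triple has a large product of shares, so summing over triples bounds the sum of the
  -- shares at `p` below; `N ^ (1 / 2)` is exactly the weight making both sides cubes.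
  have hX : ∀ p ∈ J, σ * w p * m ≤
      ∑ ℓ ∈ L with p ∈ S ℓ, ((share (S ℓ) (3 * m) α p : ℝ) + 2) := by
    intro p hp
    have hX0 : 0 ≤ ∑ ℓ ∈ L with p ∈ S ℓ, ((share (S ℓ) (3 * m) α p : ℝ) + 2) :=
      Finset.sum_nonneg fun _ _ => by positivity
    refine le_of_pow_le_pow_left₀ (n := 3) (by norm_num) hX0 ?_
    calc (σ * w p * m) ^ 3 = (w p) ^ 2 * (σ ^ 3 * w p * m ^ 3) := by ring
      _ = (Tr p).card • (σ ^ 3 * w p * m ^ 3) := by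
          rw [hwdef, Real.sq_sqrt (Nat.cast_nonneg _), nsmul_eq_mul]
      _ ≤ ∑ T ∈ Tr p, ∏ ℓ ∈ T, ((share (S ℓ) (3 * m) α p : ℝ) + 2) :=
          Finset.card_nsmul_le_sum _ _ _ (hα p hp)
      _ ≤ ∑ T ∈ (L.filter fun ℓ => p ∈ S ℓ).powersetCard 3,
            ∏ ℓ ∈ T, ((share (S ℓ) (3 * m) α p : ℝ) + 2) := by
          refine Finset.sum_le_sum_of_subset_of_nonneg (fun T hT => ?_) fun _ _ _ =>
            Finset.prod_nonneg fun _ _ => by positivity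
          obtain ⟨h1, h2⟩ := hTr p hp T hT
          rw [Finset.mem_powersetCard] at h1 ⊢
          exact ⟨fun ℓ hℓ => Finset.mem_filter.2 ⟨h1.1 hℓ, h2 ℓ hℓ⟩, h1.2⟩
      _ ≤ _ := sum_prod_powersetCard_le _ (fun _ => by positivity) _ 3
  have hsum : σ * W * m ≤ L.card * (5 * m) := by
    calc σ * W * m = ∑ p ∈ J, σ * w p * m := by rw [hW, Finset.mul_sum, Finset.sum_mul]
      _ ≤ ∑ p ∈ J, ∑ ℓ ∈ L with p ∈ S ℓ, ((share (S ℓ) (3 * m) α p : ℝ) + 2) :=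
          Finset.sum_le_sum hX
      _ = ∑ ℓ ∈ L, ∑ p ∈ S ℓ, ((share (S ℓ) (3 * m) α p : ℝ) + 2) := by
          refine Finset.sum_comm' fun p ℓ => ?_
          rw [Finset.mem_filter]
          exact ⟨fun h => ⟨h.2.2, h.2.1⟩, fun h => ⟨hSJ ℓ h.1, h.2, h.1⟩⟩
      _ ≤ ∑ ℓ ∈ L, (5 * m : ℝ) := by
          refine Finset.sum_le_sum fun ℓ _ => ?_
          rw [Finset.sum_add_distrib, Finset.sum_const, nsmul_eq_mul]
          have h1 : (∑ p ∈ S ℓ, (share (S ℓ) (3 * m) α p : ℝ)) ≤ 3 * m := by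
            exact_mod_cast sum_share_le (S ℓ) (3 * m) α
          have h2 : ((S ℓ).card : ℝ) ≤ m := by exact_mod_cast Finset.card_le_card (hSJ ℓ)
          linarith
      _ = _ := by rw [Finset.sum_const, nsmul_eq_mul]
  have hm0 : (0 : ℝ) < m := by exact_mod_cast hmpos
  have h1 : σ * W ≤ 5 * L.card := by
    by_contra! h
    nlinarith
  have h2 : (σ * W) ^ 3 ≤ (5 * L.card) ^ 3 := by gcongr
  rw [mul_pow, hσ3] at h2
  have h3 : 1 / W * W ^ 3 = W ^ 2 := by field_simp
  rw [h3] at h2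
  calc W ^ 2 ≤ _ := h2
    _ = _ := by ring
end

/-! ### Lines and joints in space -/

section

theorem HasDir.exists_eq_add_smul {ℓ : Set (Fin 3 → ℝ)} {v x y : Fin 3 → ℝ} (h : HasDir 3 ℓ v)
    (hx : x ∈ ℓ) (hy : y ∈ ℓ) : ∃ t : ℝ, y = x + t • v := by
  obtain ⟨-, a, rfl⟩ := h
  obtain ⟨s, rfl⟩ := hx
  obtain ⟨t, rfl⟩ := hy
  exact ⟨t - s, by rw [sub_smul]; abel⟩

theorem finite_joints (𝔏 : Finset (Set (Fin 3 → ℝ))) :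
    {x : Fin 3 → ℝ | IsJoint 𝔏 x}.Finite := by
  have hfin : (⋃ ℓ ∈ (𝔏 : Set (Set (Fin 3 → ℝ))), ⋃ ℓ' ∈ (𝔏 : Set (Set (Fin 3 → ℝ))),
      {x | x ∈ ℓ ∩ ℓ' ∧ (ℓ ∩ ℓ').Subsingleton}).Finite := by
    refine 𝔏.finite_toSet.biUnion fun ℓ _ => 𝔏.finite_toSet.biUnion fun ℓ' _ => ?_
    exact Set.Subsingleton.finite fun x hx y hy => hx.2 hx.1 hy.1
  refine hfin.subset ?_
  rintro x ⟨ℓ₁, h₁, ℓ₂, h₂, ℓ₃, h₃, hx₁, hx₂, hx₃, v₁, v₂, v₃, d₁, d₂, d₃, hv⟩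
  refine Set.mem_biUnion h₁ (Set.mem_biUnion h₂ ⟨⟨hx₁, hx₂⟩, ?_⟩)
  have key : ∀ y ∈ ℓ₁ ∩ ℓ₂, y = x := by
    intro y hy
    obtain ⟨s, hs⟩ := d₁.exists_eq_add_smul hx₁ hy.1
    obtain ⟨t, ht⟩ := d₂.exists_eq_add_smul hx₂ hy.2
    have hst : s • v₁ = t • v₂ := add_left_cancel (hs.symm.trans ht)
    have h0 := Fintype.linearIndependent_iff.1 hv ![s, -t, 0]
      (by simp [Fin.sum_univ_three, hst]) 0
    have hs0 : s = 0 := by simpa using h0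
    rw [hs, hs0, zero_smul, add_zero]
  exact fun y hy z hz => (key y hy).trans (key z hz).symm

/-- The inequality holds for every finite set `J` of points, since points that are not joints have
multiplicity `0`. -/
theorem sum_sqrt_jointMult_sq_le (𝔏 : Finset (Set (Fin 3 → ℝ))) (J : Finset (Fin 3 → ℝ)) :
    (∑ x ∈ J, √(jointMult 𝔏 x : ℝ)) ^ 2 ≤ 125 * (𝔏.card : ℝ) ^ 3 := by
  classical
  let Tr : (Fin 3 → ℝ) → Finset (Finset (Set (Fin 3 → ℝ))) := fun x =>
    (𝔏.powersetCard 3).filter fun T =>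
    ∃ ℓ₁ ℓ₂ ℓ₃ : Set (Fin 3 → ℝ), T = {ℓ₁, ℓ₂, ℓ₃} ∧ x ∈ ℓ₁ ∧ x ∈ ℓ₂ ∧ x ∈ ℓ₃ ∧
      ∃ v₁ v₂ v₃ : Fin 3 → ℝ, HasDir 3 ℓ₁ v₁ ∧ HasDir 3 ℓ₂ v₂ ∧ HasDir 3 ℓ₃ v₃ ∧
        LinearIndependent ℝ ![v₁, v₂, v₃]
  have hmult : ∀ x, jointMult 𝔏 x = (Tr x).card := fun x => by
    unfold jointMult
    congr
  have hframe : ∀ x, ∀ T ∈ Tr x, ∃ (l : Fin 3 → Set (Fin 3 → ℝ)) (v : Fin 3 → Fin 3 → ℝ),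
      T = Finset.univ.image l ∧ Function.Injective l ∧ (∀ i, x ∈ l i) ∧
      (∀ i, HasDir 3 (l i) (v i)) ∧ LinearIndependent ℝ v := by
    intro x T hT
    obtain ⟨hT3, ℓ₁, ℓ₂, ℓ₃, hTe, hx₁, hx₂, hx₃, v₁, v₂, v₃, d₁, d₂, d₃, hv⟩ :=
      Finset.mem_filter.1 hT
    have him : T = Finset.univ.image ![ℓ₁, ℓ₂, ℓ₃] := by
      rw [hTe]
      ext ℓ
      simp [Fin.exists_fin_succ, eq_comm]
    refine ⟨![ℓ₁, ℓ₂, ℓ₃], ![v₁, v₂, v₃], him, ?_, ?_, ?_, hv⟩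
    · have hc := (Finset.mem_powersetCard.1 hT3).2
      rw [him] at hc
      have := Finset.card_image_iff.1 (hc.trans (by simp : 3 = (Finset.univ : Finset (Fin 3)).card))
      simpa using this
    · intro i; fin_cases i <;> assumption
    · intro i; fin_cases i <;> assumption
  simp_rw [hmult]
  refine weighted_bound J 𝔏 (fun ℓ => J.filter (· ∈ ℓ)) (fun ℓ => Finset.filter_subset _ _) Tr
    ?_ ?_
  · intro p hp T hT
    obtain ⟨l, v, him, -, hpl, -⟩ := hframe p T hT
    refine ⟨(Finset.mem_filter.1 hT).1, fun ℓ hℓ => ?_⟩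
    rw [him] at hℓ
    obtain ⟨i, -, rfl⟩ := Finset.mem_image.1 hℓ
    exact Finset.mem_filter.2 ⟨hp, hpl i⟩
  · intro m U hUJ hU α T B hT hB
    choose! l v him hinj hpl hdir hli using fun p (hp : p ∈ U) => hframe p (T p) (hT p hp)
    have hprod : ∀ p ∈ U, ∏ ℓ ∈ T p, (B p ℓ + 1) = ∏ i, (B p (l p i) + 1) := by
      intro p hp
      rw [him p hp, Finset.prod_image (hinj p hp).injOn]
    rw [Finset.sum_congr rfl hprod]
    refine joint_count U hU α v hli (fun p i => B p (l p i)) m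
      (fun p i => J.filter (· ∈ l p i) ∩ U) ?_ ?_
    · intro p hp i p' hp'
      rw [Finset.mem_inter, Finset.mem_filter] at hp'
      exact ⟨hp'.2, (hdir p hp i).exists_eq_add_smul (hpl p hp i) hp'.1.2⟩
    · intro p hp i a ha
      refine hB p hp (l p i) ?_ a ha
      rw [him p hp]
      exact Finset.mem_image_of_mem _ (Finset.mem_univ i)
end

/-- There is a constant `c > 0` such that for every finite collection `𝔏` of `L` lines
in `ℝ³`, the set `J` of joints of `𝔏` is finite and `∑_{x ∈ J} N(x)^{1/2} ≤ c · L^{3/2}`. -/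
theorem joints_with_multiplicities :
    ∃ c : ℝ, 0 < c ∧ ∀ 𝔏 : Finset (Set (Fin 3 → ℝ)), (∀ ℓ ∈ 𝔏, IsLine 3 ℓ) →
      ∃ hJ : {x : Fin 3 → ℝ | IsJoint 𝔏 x}.Finite,
        ∑ x ∈ hJ.toFinset, Real.sqrt (jointMult 𝔏 x) ≤
          c * (𝔏.card : ℝ) ^ (3 / 2 : ℝ) := by
  refine ⟨12, by norm_num, fun 𝔏 _ => ⟨finite_joints 𝔏, ?_⟩⟩
  have hL : (0 : ℝ) ≤ 𝔏.card := Nat.cast_nonneg _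
  refine le_of_pow_le_pow_left₀ two_ne_zero (by positivity)
    ((sum_sqrt_jointMult_sq_le 𝔏 _).trans ?_)
  have h1 : ((𝔏.card : ℝ) ^ (3 / 2 : ℝ)) ^ 2 = (𝔏.card : ℝ) ^ 3 := by
    rw [← Real.rpow_natCast, ← Real.rpow_mul hL, ← Real.rpow_natCast]
    norm_num
  rw [mul_pow, h1]
  nlinarith [pow_nonneg hL 3]
end

section
/- There is a constant c > 0 such that for every finite collection 𝔏 of lines in ℝ³ with |𝔏| = L and all natural numbers N ≥ 1 and k ≥ 1, one has |J_N^k| · N^{1/2} ≤ c · ( L^{3/2}/k^{1/2} + (L/k) · N^{1/2} ). -/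
open scoped Classical in
/-- The number of lines of `𝔏` passing through `x`. -/
noncomputable def linesThrough (𝔏 : Finset (Set (Fin 3 → ℝ))) (x : Fin 3 → ℝ) : ℕ :=
  (𝔏.filter fun ℓ => x ∈ ℓ).card

/-- `J_N^k`: the set of joints `x` of `𝔏` with `N ≤ N(x) < 2N`, lying on at least `k`
and fewer than `2k` lines of `𝔏`. -/
def JNk (𝔏 : Finset (Set (Fin 3 → ℝ))) (N k : ℕ) : Set (Fin 3 → ℝ) :=
  {x | IsJoint 𝔏 x ∧ N ≤ jointMult 𝔏 x ∧ jointMult 𝔏 x < 2 * N ∧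
    k ≤ linesThrough 𝔏 x ∧ linesThrough 𝔏 x < 2 * k}

/-! ### Radial isotropic position -/

section Isotropic

open Matrix

/-- The weighted moment matrix `∑ₓ wₓ eₓ eₓᵀ` of a finite family of vectors. -/
noncomputable def momentMat {ι κ : Type*} [Fintype ι] (e : ι → κ → ℝ) (w : ι → ℝ) :
    Matrix κ κ ℝ := ∑ x, w x • vecMulVec (e x) (e x)

variable {ι κ : Type*} [Fintype ι] [Fintype κ]

lemma momentMat_mulVec (e : ι → κ → ℝ) (w : ι → ℝ) (z : κ → ℝ) :
    momentMat e w *ᵥ z = ∑ x, (w x * (e x ⬝ᵥ z)) • e x := by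
  unfold momentMat
  rw [Matrix.sum_mulVec]
  refine Finset.sum_congr rfl fun x _ => ?_
  rw [Matrix.smul_mulVec, Matrix.vecMulVec_mulVec]
  ext i
  simp
  ring

lemma momentMat_quad (e : ι → κ → ℝ) (w : ι → ℝ) (z : κ → ℝ) :
    z ⬝ᵥ (momentMat e w *ᵥ z) = ∑ x, w x * (e x ⬝ᵥ z) ^ 2 := by
  rw [momentMat_mulVec, dotProduct_sum]
  refine Finset.sum_congr rfl fun x _ => ?_
  rw [dotProduct_smul, dotProduct_comm z]
  simp
  ring

lemma momentMat_isHermitian (e : ι → κ → ℝ) (w : ι → ℝ) : (momentMat e w).IsHermitian := by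
  unfold momentMat Matrix.IsHermitian
  rw [conjTranspose_sum]
  refine Finset.sum_congr rfl fun x _ => ?_
  ext i j
  simp [vecMulVec_apply, mul_comm]

lemma momentMat_posDef {e : ι → κ → ℝ} {w : ι → ℝ} (hw : ∀ x, 0 < w x)
    (he : ∀ z, z ≠ 0 → ∃ x, e x ⬝ᵥ z ≠ 0) : (momentMat e w).PosDef := by
  refine Matrix.PosDef.of_dotProduct_mulVec_pos (momentMat_isHermitian e w) fun z hz => ?_
  obtain ⟨x, hx⟩ := he z hz
  rw [star_trivial, momentMat_quad]
  refine Finset.sum_pos' (fun y _ => mul_nonneg (hw y).le (sq_nonneg _)) ⟨x, Finset.mem_univ _, ?_⟩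
  have := hw x
  positivity

variable [DecidableEq κ]

/-- The vectors `√w_y e_y` form a Parseval frame for the inner product given by the inverse moment
matrix. -/
lemma isotropy {e : ι → κ → ℝ} {w : ι → ℝ} (hM : (momentMat e w).PosDef) (z : κ → ℝ) :
    ∑ y, w y * (e y ⬝ᵥ ((momentMat e w)⁻¹ *ᵥ z)) ^ 2 = z ⬝ᵥ ((momentMat e w)⁻¹ *ᵥ z) := by
  rw [← momentMat_quad, Matrix.mulVec_mulVec, Matrix.mul_nonsing_inv _ hM.det_pos.ne'.isUnit,
    one_mulVec, dotProduct_comm]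

/-- The leverages `w_x ⟨e_x, M⁻¹ e_x⟩` sum to the dimension of the space. -/
lemma sum_leverage {e : ι → κ → ℝ} {w : ι → ℝ} (hM : (momentMat e w).PosDef) :
    ∑ x, w x * (e x ⬝ᵥ ((momentMat e w)⁻¹ *ᵥ e x)) = Fintype.card κ := by
  have h : ((momentMat e w)⁻¹ * momentMat e w).trace = Fintype.card κ := by
    rw [Matrix.nonsing_inv_mul _ hM.det_pos.ne'.isUnit, trace_one]
  rw [← h]
  obtain ⟨A, hA⟩ : ∃ A, A = (momentMat e w)⁻¹ := ⟨_, rfl⟩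
  rw [← hA, momentMat, Matrix.mul_sum, trace_sum]
  refine Finset.sum_congr rfl fun x _ => ?_
  rw [Matrix.mul_smul, trace_smul, mul_vecMulVec, trace_vecMulVec, smul_eq_mul, dotProduct_comm]

lemma continuousOn_objective {e : ι → κ → ℝ} (he : ∀ z, z ≠ 0 → ∃ x, e x ⬝ᵥ z ≠ 0) (c W : ℝ) :
    ContinuousOn (fun w : ι → ℝ => Real.log (momentMat e w).det - c * ∑ y, Real.log (w y))
      (Set.Icc (fun _ => 1) (fun _ => W)) := by
  have hp : ∀ w ∈ Set.Icc (fun _ : ι => (1 : ℝ)) (fun _ => W), ∀ x, 0 < w x := fun w hw x =>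
    lt_of_lt_of_le one_pos (hw.1 x)
  refine ContinuousOn.sub (ContinuousOn.log ?_ fun w hw =>
    (momentMat_posDef (hp w hw) he).det_pos.ne') (ContinuousOn.mul continuousOn_const ?_)
  · refine Continuous.continuousOn (Continuous.matrix_det ?_)
    unfold momentMat
    fun_prop
  · refine continuousOn_finsetSum _ fun y _ => ContinuousOn.log (by fun_prop) fun w hw =>
      (hp w hw y).ne'

variable [DecidableEq ι]

lemma momentMat_update (e : ι → κ → ℝ) (w : ι → ℝ) (x : ι) (b : ℝ) :
    momentMat e (Function.update w x b) =
      momentMat e w + (b - w x) • vecMulVec (e x) (e x) := by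
  unfold momentMat
  rw [← Finset.add_sum_erase Finset.univ
      (fun y => Function.update w x b y • vecMulVec (e y) (e y)) (Finset.mem_univ x),
    ← Finset.add_sum_erase Finset.univ (fun y => w y • vecMulVec (e y) (e y))
      (Finset.mem_univ x)]
  have : ∑ y ∈ Finset.univ.erase x, Function.update w x b y • vecMulVec (e y) (e y) =
      ∑ y ∈ Finset.univ.erase x, w y • vecMulVec (e y) (e y) := by
    refine Finset.sum_congr rfl fun y hy => ?_
    rw [Function.update_of_ne (Finset.ne_of_mem_erase hy)]
  rw [this, Function.update_self, sub_smul]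
  abel

/-- Changing one weight changes the moment matrix by a rank-one matrix; the effect on the determinant
is the matrix determinant lemma. -/
lemma det_momentMat_update {e : ι → κ → ℝ} {w : ι → ℝ} (hM : (momentMat e w).PosDef)
    (x : ι) (b : ℝ) :
    (momentMat e (Function.update w x b)).det =
      (momentMat e w).det * (1 + (b - w x) * (e x ⬝ᵥ ((momentMat e w)⁻¹ *ᵥ e x))) := by
  have h := det_add_replicateCol_mul_replicateRow (ι := Unit) (A := momentMat e w)
    hM.det_pos.ne'.isUnit ((b - w x) • e x) (e x)
  rw [momentMat_update]
  have h2 : (b - w x) • vecMulVec (e x) (e x) =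
      replicateCol Unit ((b - w x) • e x) * replicateRow Unit (e x) := by
    rw [← vecMulVec_eq, smul_vecMulVec]
  rw [h2, h]
  congr 1
  rw [det_unique, Matrix.add_apply, one_apply_eq]
  congr 1
  rw [Matrix.mul_assoc, replicateCol_smul, Matrix.mul_smul, Matrix.mul_smul, Matrix.smul_apply, smul_eq_mul]
  rw [← replicateCol_mulVec, replicateRow_mul_replicateCol_apply]

/-- The first order inequality satisfied by a weight minimising
`log det - c ∑ log w` when it is moved in one coordinate. -/
lemma leverage_ineq {e : ι → κ → ℝ} {w : ι → ℝ} {c : ℝ} (hc : 0 < c) (hw : ∀ x, 0 < w x)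
    (he : ∀ z, z ≠ 0 → ∃ x, e x ⬝ᵥ z ≠ 0) (x : ι) {b : ℝ} (hb : 0 < b)
    (hmin : Real.log (momentMat e w).det - c * ∑ y, Real.log (w y) ≤
      Real.log (momentMat e (Function.update w x b)).det -
        c * ∑ y, Real.log (Function.update w x b y)) :
    c * (b - w x) / b ≤ (b - w x) * (e x ⬝ᵥ ((momentMat e w)⁻¹ *ᵥ e x)) := by
  have hM := momentMat_posDef hw he
  have hw' : ∀ y, 0 < Function.update w x b y := by
    intro y
    by_cases h : y = x
    · subst h; simpa using hb
    · simpa [Function.update_of_ne h] using hw y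
  have hM' := (momentMat_posDef hw' he).det_pos
  rw [det_momentMat_update hM] at hM' hmin
  set g := e x ⬝ᵥ ((momentMat e w)⁻¹ *ᵥ e x)
  have hg : 0 < 1 + (b - w x) * g := (mul_pos_iff_of_pos_left hM.det_pos).1 hM'
  rw [Real.log_mul hM.det_pos.ne' hg.ne'] at hmin
  have hs : ∑ y, Real.log (Function.update w x b y) =
      ∑ y, Real.log (w y) + (Real.log b - Real.log (w x)) := by
    rw [← Finset.add_sum_erase Finset.univ
        (fun y => Real.log (Function.update w x b y)) (Finset.mem_univ x),
      ← Finset.add_sum_erase Finset.univ (fun y => Real.log (w y)) (Finset.mem_univ x)]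
    have : ∑ y ∈ Finset.univ.erase x, Real.log (Function.update w x b y) =
        ∑ y ∈ Finset.univ.erase x, Real.log (w y) := by
      refine Finset.sum_congr rfl fun y hy => ?_
      rw [Function.update_of_ne (Finset.ne_of_mem_erase hy)]
    rw [this, Function.update_self]
    ring
  rw [hs, ← Real.log_div hb.ne' (hw x).ne'] at hmin
  have h1 := Real.log_le_sub_one_of_pos hg
  have h2 := Real.one_sub_inv_le_log_of_pos (div_pos hb (hw x))
  have h3 : c * (b - w x) / b = c * (1 - (b / w x)⁻¹) := by
    have := (hw x).ne'
    field_simp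
  rw [h3]
  have h4 := mul_le_mul_of_nonneg_left h2 hc.le
  linarith

/-- Minimising `log det M_w - c ∑ log w` over the box `[1, W]^ι`: at the minimiser the leverage is at
least `c` where the upper bound is not attained, and at most `c` where the lower bound is not. -/
lemma exists_minimiser_bounds {e : ι → κ → ℝ} (he : ∀ z, z ≠ 0 → ∃ x, e x ⬝ᵥ z ≠ 0)
    {c W : ℝ} (hc : 0 < c) (hW : 1 < W) :
    ∃ w : ι → ℝ, (∀ x, 1 ≤ w x ∧ w x ≤ W) ∧
      (∀ x, w x < W → c ≤ w x * (e x ⬝ᵥ ((momentMat e w)⁻¹ *ᵥ e x))) ∧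
      (∀ x, 1 < w x → w x * (e x ⬝ᵥ ((momentMat e w)⁻¹ *ᵥ e x)) ≤ c) := by
  obtain ⟨w, hwm, hmin⟩ := (isCompact_Icc (a := fun _ : ι => (1 : ℝ)) (b := fun _ => W)).exists_isMinOn
    ⟨fun _ => 1, ⟨le_refl _, fun _ => hW.le⟩⟩ (continuousOn_objective he c W)
  have hw : ∀ x, 0 < w x := fun x => lt_of_lt_of_le one_pos (hwm.1 x)
  have key : ∀ x b, 1 ≤ b → b ≤ W →
      c * (b - w x) / b ≤ (b - w x) * (e x ⬝ᵥ ((momentMat e w)⁻¹ *ᵥ e x)) := by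
    intro x b hb1 hb2
    refine leverage_ineq hc hw he x (by linarith) (hmin ?_)
    constructor
    · intro y
      by_cases h : y = x
      · subst h; simpa using hb1
      · simpa [Function.update_of_ne h] using hwm.1 y
    · intro y
      by_cases h : y = x
      · subst h; simpa using hb2
      · simpa [Function.update_of_ne h] using hwm.2 y
  refine ⟨w, fun x => ⟨hwm.1 x, hwm.2 x⟩, fun x hx => ?_, fun x hx => ?_⟩
  · set g := e x ⬝ᵥ ((momentMat e w)⁻¹ *ᵥ e x) with hg
    have h1 : ∀ b, w x < b → b ≤ W → c ≤ b * g := by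
      intro b hb hbW
      have hb0 : 0 < b := (hw x).trans hb
      have := key x b ((hwm.1 x).trans hb.le) hbW
      rw [div_le_iff₀ hb0] at this
      have h2 : 0 < b - w x := by linarith
      nlinarith
    have hg0 : 0 < g := by
      have := h1 W hx le_rfl
      by_contra h
      nlinarith
    have h3 : c / g ≤ w x := by
      refine le_of_forall_gt_imp_ge_of_dense fun b hb => ?_
      rw [div_le_iff₀ hg0]
      rcases le_total b W with hbW | hbW
      · exact h1 b hb hbW
      · exact (h1 W hx le_rfl).trans (by gcongr)
    rwa [div_le_iff₀ hg0] at h3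
  · set g := e x ⬝ᵥ ((momentMat e w)⁻¹ *ᵥ e x) with hg
    rcases le_or_gt g 0 with hg0 | hg0
    · exact (mul_nonpos_of_nonneg_of_nonpos (hw x).le hg0).trans hc.le
    have h1 : ∀ b, b < w x → 1 ≤ b → b * g ≤ c := by
      intro b hb hb1
      have hb0 : 0 < b := by linarith
      have := key x b hb1 (hb.le.trans (hwm.2 x))
      rw [div_le_iff₀ hb0] at this
      have h2 : 0 < w x - b := by linarith
      nlinarith
    have h3 : w x ≤ c / g := by
      refine le_of_forall_lt_imp_le_of_dense fun b hb => ?_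
      rw [le_div_iff₀ hg0]
      rcases le_total 1 b with hb1 | hb1
      · exact h1 b hb hb1
      · exact le_trans (by gcongr) (h1 1 hx le_rfl)
    rwa [le_div_iff₀ hg0] at h3

/-- A linear functional on `κ → ℝ` vanishing on a family but not at a vector outside its span. -/
lemma exists_dotProduct_separating (s : Set (κ → ℝ)) (v : κ → ℝ)
    (hv : v ∉ Submodule.span ℝ s) : ∃ z : κ → ℝ, v ⬝ᵥ z ≠ 0 ∧ ∀ u ∈ s, u ⬝ᵥ z = 0 := by
  obtain ⟨f, hf, hf0⟩ := Submodule.exists_dual_map_eq_bot_of_notMem hv inferInstance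
  have hrep : ∀ u : κ → ℝ, u ⬝ᵥ (fun i => f (fun j => if i = j then 1 else 0)) = f u := fun u => by
    rw [LinearMap.pi_apply_eq_sum_univ f u]; simp [dotProduct]
  refine ⟨fun i => f (fun j => if i = j then 1 else 0), by rwa [hrep], fun u hu => ?_⟩
  rw [hrep]
  have : f u ∈ (Submodule.span ℝ s).map f := ⟨u, Submodule.subset_span hu, rfl⟩
  rw [hf0] at this
  simpa using this

/-- For a spanning family there are weights for which every vector outside some hyperplane `z^⊥` has
leverage at least `|κ| / |ι|`, the average value. The hyperplane cannot be dispensed with: the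
infimum of `log det M_w - c ∑ log w` need not be attained. The weights are minimisers over a large
box. Either all leverages equal `c`, or some weight is `1`; in that case a vector of weight `1` is
not in the span of the vectors whose weight is the upper bound `W`, and `z` separates it from them. -/
lemma exists_leverage (e : ι → κ → ℝ) [Nonempty κ] (he : ∀ z, z ≠ 0 → ∃ x, e x ⬝ᵥ z ≠ 0) :
    ∃ (z : κ → ℝ) (w : ι → ℝ), z ≠ 0 ∧ (∀ x, 0 < w x) ∧
      ∀ x, e x ⬝ᵥ z ≠ 0 → (Fintype.card κ : ℝ) / Fintype.card ι ≤
        w x * (e x ⬝ᵥ ((momentMat e w)⁻¹ *ᵥ e x)) := by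
  classical
  set c : ℝ := (Fintype.card κ : ℝ) / Fintype.card ι with hcdef
  obtain ⟨x₁, -⟩ := he (fun _ => 1) (fun h => one_ne_zero (congrFun h (Classical.arbitrary κ)))
  have hS : (0 : ℝ) < Fintype.card ι := by
    exact_mod_cast Fintype.card_pos_iff.2 ⟨x₁⟩
  have hc : 0 < c := div_pos (by exact_mod_cast Fintype.card_pos) hS
  have hβ : ∀ (Y : Finset ι) (x : ι), ∃ β : ι → ℝ,
      e x ∈ Submodule.span ℝ (e '' (Y : Set ι)) → ∑ y ∈ Y, β y • e y = e x := by
    intro Y x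
    by_cases h : e x ∈ Submodule.span ℝ (e '' (Y : Set ι))
    · obtain ⟨β, hβ⟩ := (Submodule.mem_span_image_finset_iff_exists_fun' ℝ).1 h
      exact ⟨β, fun _ => hβ⟩
    · exact ⟨0, fun h' => absurd h' h⟩
  choose β hβ using hβ
  -- `B` bounds the size of all linear relations `β` among the `e y`; it determines a sufficiently
  -- large side for the box.
  set B := ∑ Y, ∑ x, ∑ y, β Y x y ^ 2 with hB
  have hB0 : 0 ≤ B := by positivity
  obtain ⟨w, hwW, hup, hdown⟩ := exists_minimiser_bounds he hc (W := B / c + 2) (by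
    have : 0 ≤ B / c := by positivity
    linarith)
  set W := B / c + 2 with hW
  have hW1 : 1 < W := by
    have : 0 ≤ B / c := by positivity
    linarith
  have hw : ∀ x, 0 < w x := fun x => lt_of_lt_of_le one_pos (hwW x).1
  have hM := momentMat_posDef hw he
  by_cases hall : ∀ x, 1 < w x
  -- all leverages are at most `c`, and their average is `c`
  · refine ⟨fun _ => 1, w, fun h => one_ne_zero (congrFun h (Classical.arbitrary κ)), hw,
      fun x _ => ?_⟩
    have hsum := sum_leverage hM
    have hconst : ∑ _x : ι, c = Fintype.card κ := by
      rw [Finset.sum_const, Finset.card_univ, nsmul_eq_mul, hcdef]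
      field_simp
    have := (Finset.sum_eq_sum_iff_of_le (s := Finset.univ) (fun x _ => hdown x (hall x))).1
      (hsum.trans hconst.symm) x (Finset.mem_univ x)
    exact this.ge
  · push Not at hall
    obtain ⟨x₀, hx₀⟩ := hall
    have hx1 : w x₀ = 1 := le_antisymm hx₀ (hwW x₀).1
    have hg := hup x₀ (by rw [hx1]; exact hW1)
    rw [hx1, one_mul] at hg
    set Y := Finset.univ.filter (fun y => w y = W) with hY
    have hnot : e x₀ ∉ Submodule.span ℝ (e '' (Y : Set ι)) := by
      -- A relation expressing `e x₀` through vectors of weight `W` makes its leverage at most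
      -- `B / W`, by Cauchy–Schwarz and isotropy, hence smaller than `c`.
      intro hmem
      have hexp := hβ Y x₀ hmem
      set q := (momentMat e w)⁻¹ *ᵥ e x₀ with hq
      set g := e x₀ ⬝ᵥ q with hgdef
      have h1 : g = ∑ y ∈ Y, β Y x₀ y * (e y ⬝ᵥ q) := by
        rw [hgdef]
        conv_lhs => rw [← hexp]
        rw [sum_dotProduct]
        simp [smul_dotProduct]
      have h2 : g ^ 2 ≤ (∑ y ∈ Y, β Y x₀ y ^ 2) * ∑ y ∈ Y, (e y ⬝ᵥ q) ^ 2 := by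
        rw [h1]; exact Finset.sum_mul_sq_le_sq_mul_sq _ _ _
      have h3 : W * ∑ y ∈ Y, (e y ⬝ᵥ q) ^ 2 ≤ g := by
        rw [hgdef, ← isotropy hM (e x₀), Finset.mul_sum]
        calc ∑ y ∈ Y, W * (e y ⬝ᵥ q) ^ 2 = ∑ y ∈ Y, w y * (e y ⬝ᵥ q) ^ 2 :=
              Finset.sum_congr rfl fun y hy => by rw [(Finset.mem_filter.1 hy).2]
          _ ≤ _ := Finset.sum_le_sum_of_subset_of_nonneg (Finset.subset_univ _)
              fun y _ _ => mul_nonneg (hw y).le (sq_nonneg _)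
      have h4 : ∑ y ∈ Y, β Y x₀ y ^ 2 ≤ B := by
        calc ∑ y ∈ Y, β Y x₀ y ^ 2 ≤ ∑ y, β Y x₀ y ^ 2 :=
              Finset.sum_le_sum_of_subset_of_nonneg (Finset.subset_univ _)
                fun y _ _ => sq_nonneg _
          _ ≤ ∑ x, ∑ y, β Y x y ^ 2 :=
              Finset.single_le_sum (f := fun x => ∑ y, β Y x y ^ 2)
                (fun x _ => Finset.sum_nonneg fun y _ => sq_nonneg _) (Finset.mem_univ x₀)
          _ ≤ B := Finset.single_le_sum (f := fun Y => ∑ x, ∑ y, β Y x y ^ 2)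
                (fun Y _ => Finset.sum_nonneg fun x _ => Finset.sum_nonneg fun y _ => sq_nonneg _)
                (Finset.mem_univ Y)
      have hg0 : 0 < g := hc.trans_le hg
      have h5 : W * g ^ 2 ≤ B * g := by
        have h6 : 0 ≤ ∑ y ∈ Y, (e y ⬝ᵥ q) ^ 2 := Finset.sum_nonneg fun y _ => sq_nonneg _
        calc W * g ^ 2 ≤ W * (B * ∑ y ∈ Y, (e y ⬝ᵥ q) ^ 2) := by
              have : 0 < W := by linarith
              gcongr
              exact h2.trans (by gcongr)
          _ = B * (W * ∑ y ∈ Y, (e y ⬝ᵥ q) ^ 2) := by ring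
          _ ≤ B * g := by gcongr
      have h7 : W * g ≤ B := by nlinarith
      have h8 : W * c ≤ B := le_trans (by gcongr) h7
      have h9 : W * c = B + 2 * c := by rw [hW]; field_simp
      linarith
    obtain ⟨z, hz, hzY⟩ := exists_dotProduct_separating _ _ hnot
    refine ⟨z, w, fun h => hz (by rw [h, dotProduct_zero]), hw, fun x hx => hup x ?_⟩
    refine lt_of_le_of_ne (hwW x).2 fun h => hx (hzY _ ⟨x, ?_, rfl⟩)
    simpa [hY] using h

/-- Radial isotropic position, up to a hyperplane. Any finite family `e` of vectors in `κ → ℝ`, after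
a linear map `T` and with weights `w`, satisfies Bessel's inequality for its own members, and each vector
off the hyperplane `z^⊥` has weighted norm squared at least the average value `|κ| / |ι|`. If the
family does not span, `z` is taken orthogonal to it and `T = 0`. -/
theorem exists_isotropic (e : ι → κ → ℝ) [Nonempty κ] :
    ∃ (z : κ → ℝ) (m : ℕ) (T : (κ → ℝ) →ₗ[ℝ] EuclideanSpace ℝ (Fin m)) (w : ι → ℝ),
      z ≠ 0 ∧ (∀ x, 0 < w x) ∧
      (∀ x, e x ⬝ᵥ z ≠ 0 → (Fintype.card κ : ℝ) / Fintype.card ι ≤ w x * ‖T (e x)‖ ^ 2) ∧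
      ∀ x, ∑ y, w y * inner ℝ (T (e y)) (T (e x)) ^ 2 ≤ ‖T (e x)‖ ^ 2 := by
  by_cases he : ∀ z, z ≠ 0 → ∃ x, e x ⬝ᵥ z ≠ 0
  swap
  · push Not at he
    obtain ⟨z, hz, hez⟩ := he
    exact ⟨z, 0, 0, fun _ => 1, hz, fun _ => one_pos, fun x hx => absurd (hez x) hx, by simp⟩
  obtain ⟨z, w, hz, hw, hlev⟩ := exists_leverage e he
  have hM := momentMat_posDef hw he
  -- `T` realises the inner product `⟨u, M⁻¹ v⟩`: write `M⁻¹` as a sum of `m` rank-one matrices.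
  obtain ⟨m, a, ha⟩ := Matrix.posSemidef_iff_eq_sum_vecMulVec.1 hM.inv.posSemidef
  have hT : ∃ T : (κ → ℝ) →ₗ[ℝ] EuclideanSpace ℝ (Fin m), ∀ u v,
      inner ℝ (T u) (T v) = u ⬝ᵥ ((momentMat e w)⁻¹ *ᵥ v) := by
    refine ⟨{ toFun := fun u => WithLp.toLp 2 (fun i => a i ⬝ᵥ u),
              map_add' := fun u v => by ext i; simp [dotProduct_add],
              map_smul' := fun r u => by ext i; simp [dotProduct_smul] }, fun u v => ?_⟩
    rw [ha, Matrix.sum_mulVec, dotProduct_sum]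
    simp only [LinearMap.coe_mk, AddHom.coe_mk, PiLp.inner_apply, RCLike.inner_apply, conj_trivial]
    refine Finset.sum_congr rfl fun i _ => ?_
    rw [Matrix.vecMulVec_mulVec, star_trivial]
    simp [dotProduct_smul, dotProduct_comm, mul_comm]
  obtain ⟨T, hT⟩ := hT
  refine ⟨z, m, T, w, hz, hw, fun x hx => ?_, fun x => ?_⟩
  · rw [← real_inner_self_eq_norm_sq, hT]
    exact hlev x hx
  · rw [← real_inner_self_eq_norm_sq, hT]
    simp only [hT]
    exact (isotropy hM (e x)).le

end Isotropic

/-! ### From isotropy to a polynomial dichotomy for incidences -/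

section Incidence

open Matrix
open scoped Classical

variable {κ : Type*} [Fintype κ]

/-- Normalised form of `exists_isotropic`: the unit vectors `u x` proportional to `T (e x)`, for `x`
with `e x ∉ z^⊥`, have total squared correlation at most `|X| / |κ|` with each one of them. -/
lemma exists_unit_vectors [Nonempty κ] {α : Type*} (X : Finset α) (e : α → κ → ℝ) :
    ∃ (z : κ → ℝ) (m : ℕ) (T : (κ → ℝ) →ₗ[ℝ] EuclideanSpace ℝ (Fin m))
      (u : α → EuclideanSpace ℝ (Fin m)), z ≠ 0 ∧ (∀ x, ∃ a : ℝ, u x = a • T (e x)) ∧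
      ∀ x ∈ X, e x ⬝ᵥ z ≠ 0 → ‖u x‖ = 1 ∧
        Fintype.card κ * ∑ y ∈ X with e y ⬝ᵥ z ≠ 0, inner ℝ (u y) (u x) ^ 2 ≤ X.card := by
  obtain ⟨z, m, T, w, hz, hw, hlev, hiso⟩ := exists_isotropic (fun x : X => e x)
  refine ⟨z, m, T, fun x => ‖T (e x)‖⁻¹ • T (e x), hz, fun x => ⟨_, rfl⟩, fun x hx hxz => ?_⟩
  have hS : (0 : ℝ) < X.card := by exact_mod_cast Finset.card_pos.2 ⟨x, hx⟩
  have hD : (0 : ℝ) < Fintype.card κ := by exact_mod_cast Fintype.card_pos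
  have hpos : ∀ y ∈ X, e y ⬝ᵥ z ≠ 0 → 0 < ‖T (e y)‖ := by
    intro y hy hyz
    have h1 := hlev ⟨y, hy⟩ hyz
    rw [Fintype.card_coe] at h1
    refine lt_of_le_of_ne (norm_nonneg _) fun h => ?_
    simp only [← h] at h1
    have : (0 : ℝ) < Fintype.card κ / X.card := by positivity
    simp at h1
    linarith
  have hx0 := hpos x hx hxz
  refine ⟨by rw [norm_smul, norm_inv, norm_norm, inv_mul_cancel₀ hx0.ne'], ?_⟩
  have h2 := hiso ⟨x, hx⟩
  have h3 : ∀ y (hy : y ∈ X), e y ⬝ᵥ z ≠ 0 →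
      (Fintype.card κ : ℝ) / X.card * ‖T (e x)‖ ^ 2 *
        inner ℝ (‖T (e y)‖⁻¹ • T (e y)) (‖T (e x)‖⁻¹ • T (e x)) ^ 2 ≤
      w ⟨y, hy⟩ * inner ℝ (T (e y)) (T (e x)) ^ 2 := by
    intro y hy hyz
    have h4 := hlev ⟨y, hy⟩ hyz
    rw [Fintype.card_coe] at h4
    have hy0 := hpos y hy hyz
    have h5 : w ⟨y, hy⟩ * inner ℝ (T (e y)) (T (e x)) ^ 2 =
        (w ⟨y, hy⟩ * ‖T (e y)‖ ^ 2) * ‖T (e x)‖ ^ 2 *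
          inner ℝ (‖T (e y)‖⁻¹ • T (e y)) (‖T (e x)‖⁻¹ • T (e x)) ^ 2 := by
      rw [real_inner_smul_left, real_inner_smul_right]
      field_simp
    rw [h5]
    gcongr
  have h6 : (Fintype.card κ : ℝ) / X.card * ‖T (e x)‖ ^ 2 *
      ∑ y ∈ X with e y ⬝ᵥ z ≠ 0,
        inner ℝ (‖T (e y)‖⁻¹ • T (e y)) (‖T (e x)‖⁻¹ • T (e x)) ^ 2 ≤ ‖T (e x)‖ ^ 2 := by
    refine le_trans ?_ h2
    rw [Finset.mul_sum, Finset.sum_filter, ← Finset.sum_coe_sort X]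
    refine Finset.sum_le_sum fun y _ => ?_
    split_ifs with h
    · exact h3 y y.2 h
    · exact mul_nonneg (hw y).le (sq_nonneg _)
  have h7 : 0 < ‖T (e x)‖ ^ 2 := by positivity
  have h8 : (Fintype.card κ : ℝ) / X.card *
      ∑ y ∈ X with e y ⬝ᵥ z ≠ 0,
        inner ℝ (‖T (e y)‖⁻¹ • T (e y)) (‖T (e x)‖⁻¹ • T (e x)) ^ 2 ≤ 1 := by
    rw [mul_right_comm] at h6
    exact le_of_mul_le_mul_right (by rwa [one_mul]) h7
  rwa [div_mul_eq_mul_div, div_le_one hS] at h8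

/-- A family of unit vectors in a space of dimension at most `m` has large frame energy, because
the trace of its Gram operator is its cardinality. -/
lemma card_sq_le_frame_energy {E α : Type*} [NormedAddCommGroup E] [InnerProductSpace ℝ E]
    (V : Submodule ℝ E) [FiniteDimensional ℝ V] {m : ℕ} (hV : Module.finrank ℝ V ≤ m)
    (A : Finset α) (u : α → E) (hu : ∀ x ∈ A, ‖u x‖ = 1) (huV : ∀ x ∈ A, u x ∈ V) :
    (A.card : ℝ) ^ 2 ≤ m * ∑ x ∈ A, ∑ y ∈ A, inner ℝ (u x) (u y) ^ 2 := by
  set b := stdOrthonormalBasis ℝ V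
  set n := Module.finrank ℝ V
  set a : Fin n → α → ℝ := fun i x => inner ℝ (b i : E) (u x) with ha
  have hinner : ∀ x ∈ A, ∀ y ∈ A, inner ℝ (u x) (u y) = ∑ i, a i x * a i y := by
    intro x hx y hy
    have := b.sum_inner_mul_inner (⟨u x, huV x hx⟩ : V) ⟨u y, huV y hy⟩
    simp only [Submodule.coe_inner] at this
    rw [← this]
    refine Finset.sum_congr rfl fun i _ => ?_
    rw [ha]; simp only; rw [real_inner_comm]
  set G : Fin n → Fin n → ℝ := fun i j => ∑ x ∈ A, a i x * a j x with hG
  have h1 : (A.card : ℝ) = ∑ i, G i i := by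
    rw [hG]; simp only
    rw [Finset.sum_comm, Finset.card_eq_sum_ones, Nat.cast_sum]
    refine Finset.sum_congr rfl fun x hx => ?_
    rw [← hinner x hx x hx, real_inner_self_eq_norm_sq, hu x hx]; simp
  have h2 : ∑ x ∈ A, ∑ y ∈ A, inner ℝ (u x) (u y) ^ 2 = ∑ i, ∑ j, G i j ^ 2 := by
    have hl : ∑ x ∈ A, ∑ y ∈ A, inner ℝ (u x) (u y) ^ 2 =
        ∑ x ∈ A, ∑ y ∈ A, ∑ i, ∑ j, (a i x * a i y) * (a j x * a j y) := by
      refine Finset.sum_congr rfl fun x hx => Finset.sum_congr rfl fun y hy => ?_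
      rw [hinner x hx y hy, sq, Finset.sum_mul_sum]
    have hr : ∑ i, ∑ j, G i j ^ 2 =
        ∑ i, ∑ j, ∑ x ∈ A, ∑ y ∈ A, (a i x * a j x) * (a i y * a j y) := by
      refine Finset.sum_congr rfl fun i _ => Finset.sum_congr rfl fun j _ => ?_
      rw [hG]; simp only; rw [sq, Finset.sum_mul_sum]
    rw [hl, hr]
    calc _ = ∑ x ∈ A, ∑ i, ∑ y ∈ A, ∑ j, (a i x * a i y) * (a j x * a j y) :=
          Finset.sum_congr rfl fun x _ => Finset.sum_comm
      _ = ∑ i, ∑ x ∈ A, ∑ y ∈ A, ∑ j, (a i x * a i y) * (a j x * a j y) := Finset.sum_comm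
      _ = ∑ i, ∑ x ∈ A, ∑ j, ∑ y ∈ A, (a i x * a i y) * (a j x * a j y) :=
          Finset.sum_congr rfl fun i _ => Finset.sum_congr rfl fun x _ => Finset.sum_comm
      _ = ∑ i, ∑ j, ∑ x ∈ A, ∑ y ∈ A, (a i x * a i y) * (a j x * a j y) :=
          Finset.sum_congr rfl fun i _ => Finset.sum_comm
      _ = _ := by
          refine Finset.sum_congr rfl fun i _ => Finset.sum_congr rfl fun j _ =>
            Finset.sum_congr rfl fun x _ => Finset.sum_congr rfl fun y _ => by ring
  rw [h1, h2]
  calc (∑ i, G i i) ^ 2 ≤ (Finset.univ : Finset (Fin n)).card * ∑ i, G i i ^ 2 :=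
        sq_sum_le_card_mul_sum_sq
    _ = n * ∑ i, G i i ^ 2 := by simp
    _ ≤ m * ∑ i, ∑ j, G i j ^ 2 := by
        have h3 : ∀ i, G i i ^ 2 ≤ ∑ j, G i j ^ 2 := fun i =>
          Finset.single_le_sum (f := fun j => G i j ^ 2) (fun j _ => sq_nonneg _)
            (Finset.mem_univ i)
        have h4 : (n : ℝ) ≤ m := by exact_mod_cast hV
        have h5 : ∑ i, G i i ^ 2 ≤ ∑ i, ∑ j, G i j ^ 2 := Finset.sum_le_sum fun i _ => h3 i
        gcongr

/-- Let `R` be an incidence relation between points `X` and lines `Λ`, two points having at most one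
common line, every point being on at least `k` lines, and the vectors attached to the points of a
line spanning dimension at most `m`. If `|X| ≤ k |κ|`, some hyperplane `z^⊥` contains so many of
the vectors that the remaining points have at most `2 m |Λ|` incidences. The frame energy of
the remaining unit vectors, summed over lines, is large by `card_sq_le_frame_energy`. It is small
because distinct points share a line at most once, so each point contributes at most its number
of lines plus `|X| / |κ| ≤ k`. -/
theorem incidence_dichotomy [Nonempty κ] {α β : Type*} (X : Finset α) (Λ : Finset β)
    (R : α → β → Prop) (e : α → κ → ℝ) (m k : ℕ)
    (hrank : ∀ ℓ ∈ Λ, ∃ V : Submodule ℝ (κ → ℝ), Module.finrank ℝ V ≤ m ∧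
      ∀ x ∈ X, R x ℓ → e x ∈ V)
    (huniq : ∀ x ∈ X, ∀ y ∈ X, x ≠ y → ∀ ℓ ∈ Λ, ∀ ℓ' ∈ Λ,
      R x ℓ → R y ℓ → R x ℓ' → R y ℓ' → ℓ = ℓ')
    (hdeg : ∀ x ∈ X, k ≤ (Λ.filter (R x)).card)
    (hcard : X.card ≤ k * Fintype.card κ) :
    ∃ z : κ → ℝ, z ≠ 0 ∧
      ∑ x ∈ X with e x ⬝ᵥ z ≠ 0, (Λ.filter (R x)).card ≤ 2 * m * Λ.card := by
  obtain ⟨z, n, T, u, hz, hu, hux⟩ := exists_unit_vectors X e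
  refine ⟨z, hz, ?_⟩
  set X' := X.filter (fun x => e x ⬝ᵥ z ≠ 0) with hX'
  have hX'm : ∀ x ∈ X', x ∈ X ∧ e x ⬝ᵥ z ≠ 0 := fun x hx => Finset.mem_filter.1 hx
  set I := ∑ x ∈ X', (Λ.filter (R x)).card with hI
  set A : β → Finset α := fun ℓ => X'.filter (fun x => R x ℓ) with hA
  set g : α → α → ℝ := fun x y => inner ℝ (u x) (u y) ^ 2 with hg
  have hIA : I = ∑ ℓ ∈ Λ, (A ℓ).card :=
    Finset.sum_card_bipartiteAbove_eq_sum_card_bipartiteBelow R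
  have hline : ∀ ℓ ∈ Λ, ((A ℓ).card : ℝ) ^ 2 ≤ m * ∑ x ∈ A ℓ, ∑ y ∈ A ℓ, g x y := by
    intro ℓ hℓ
    obtain ⟨V, hV, hVx⟩ := hrank ℓ hℓ
    refine card_sq_le_frame_energy (V.map T) ((Submodule.finrank_map_le T V).trans hV) _ _
      (fun x hx => ?_) (fun x hx => ?_)
    · have := hX'm x (Finset.mem_filter.1 hx).1
      exact (hux x this.1 this.2).1
    · obtain ⟨a, ha⟩ := hu x
      rw [ha]
      exact Submodule.smul_mem _ _ ⟨e x, hVx x (hX'm x (Finset.mem_filter.1 hx).1).1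
        (Finset.mem_filter.1 hx).2, rfl⟩
  have hpairs : ∑ ℓ ∈ Λ, ∑ x ∈ A ℓ, ∑ y ∈ A ℓ, g x y ≤
      ∑ x ∈ X', ((Λ.filter (R x)).card + ∑ y ∈ X', g y x : ℝ) := by
    calc ∑ ℓ ∈ Λ, ∑ x ∈ A ℓ, ∑ y ∈ A ℓ, g x y
        = ∑ x ∈ X', ∑ y ∈ X', ∑ ℓ ∈ Λ, if R x ℓ ∧ R y ℓ then g x y else 0 := by
          have : ∀ ℓ ∈ Λ, ∑ x ∈ A ℓ, ∑ y ∈ A ℓ, g x y =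
              ∑ x ∈ X', ∑ y ∈ X', if R x ℓ ∧ R y ℓ then g x y else 0 := by
            intro ℓ _
            rw [hA]; simp only
            rw [Finset.sum_filter]
            refine Finset.sum_congr rfl fun x _ => ?_
            rw [Finset.sum_filter]
            by_cases h : R x ℓ <;> simp [h]
          rw [Finset.sum_congr rfl this, Finset.sum_comm]
          exact Finset.sum_congr rfl fun x _ => Finset.sum_comm
      _ ≤ _ := by
          refine Finset.sum_le_sum fun x hx => ?_
          have hterm : ∀ y ∈ X', (∑ ℓ ∈ Λ, if R x ℓ ∧ R y ℓ then g x y else 0) ≤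
              (if y = x then ((Λ.filter (R x)).card : ℝ) else 0) + g y x := by
            intro y hy
            have hgnn : 0 ≤ g y x := sq_nonneg _
            have hgs : g x y = g y x := by rw [hg]; simp only; rw [real_inner_comm]
            rw [← Finset.sum_filter, Finset.sum_const, nsmul_eq_mul]
            by_cases hxy : y = x
            · subst hxy
              have : g y y = 1 := by
                have h1 := (hux y (hX'm y hy).1 (hX'm y hy).2).1
                rw [hg]; simp only; rw [real_inner_self_eq_norm_sq, h1]; simp
              simp [this]
            · rw [if_neg hxy, zero_add, hgs]
              have : (Λ.filter (fun ℓ => R x ℓ ∧ R y ℓ)).card ≤ 1 := by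
                refine Finset.card_le_one.2 fun ℓ hℓ ℓ' hℓ' => ?_
                rw [Finset.mem_filter] at hℓ hℓ'
                exact huniq x (hX'm x hx).1 y (hX'm y hy).1 (Ne.symm hxy) ℓ hℓ.1 ℓ' hℓ'.1
                  hℓ.2.1 hℓ.2.2 hℓ'.2.1 hℓ'.2.2
              have h2 : ((Λ.filter (fun ℓ => R x ℓ ∧ R y ℓ)).card : ℝ) ≤ 1 := by
                exact_mod_cast this
              nlinarith
          refine (Finset.sum_le_sum hterm).trans ?_
          rw [Finset.sum_add_distrib, Finset.sum_ite_eq' X' x, if_pos hx]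
  have henergy : ∀ x ∈ X', ∑ y ∈ X', g y x ≤ k := by
    intro x hx
    have h1 := (hux x (hX'm x hx).1 (hX'm x hx).2).2
    have hD : (0 : ℝ) < Fintype.card κ := by exact_mod_cast Fintype.card_pos
    have h2 : (X.card : ℝ) ≤ k * Fintype.card κ := by exact_mod_cast hcard
    have h3 := h1.trans h2
    rw [mul_comm (k : ℝ)] at h3
    exact le_of_mul_le_mul_left h3 hD
  have hpairs2 : ∑ x ∈ X', ((Λ.filter (R x)).card + ∑ y ∈ X', g y x : ℝ) ≤ 2 * I := by
    rw [hI, Nat.cast_sum, Finset.mul_sum]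
    refine Finset.sum_le_sum fun x hx => ?_
    have h1 : (k : ℝ) ≤ (Λ.filter (R x)).card := by exact_mod_cast hdeg x (hX'm x hx).1
    linarith [henergy x hx]
  have hmain : (I : ℝ) ^ 2 ≤ Λ.card * (m * (2 * I)) := by
    calc (I : ℝ) ^ 2 = (∑ ℓ ∈ Λ, ((A ℓ).card : ℝ)) ^ 2 := by rw [hIA]; push_cast; rfl
      _ ≤ Λ.card * ∑ ℓ ∈ Λ, ((A ℓ).card : ℝ) ^ 2 := sq_sum_le_card_mul_sum_sq
      _ ≤ Λ.card * ∑ ℓ ∈ Λ, (m * ∑ x ∈ A ℓ, ∑ y ∈ A ℓ, g x y) := by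
          gcongr with ℓ hℓ
          exact hline ℓ hℓ
      _ = Λ.card * (m * ∑ ℓ ∈ Λ, ∑ x ∈ A ℓ, ∑ y ∈ A ℓ, g x y) := by rw [← Finset.mul_sum]
      _ ≤ Λ.card * (m * (2 * I)) := by
          gcongr
          exact hpairs.trans hpairs2
  have hfin : (I : ℝ) ≤ 2 * m * Λ.card := by
    rcases Nat.eq_zero_or_pos I with h0 | h0
    · rw [h0]; push_cast; positivity
    · have : (0 : ℝ) < I := by exact_mod_cast h0
      nlinarith
  exact_mod_cast hfin

end Incidence

/-! ### Polynomials along lines -/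

section Lines

open scoped Classical
open Polynomial (X)

variable {n : ℕ}

lemma IsLine.eq_of_mem {ℓ : Set (Fin n → ℝ)} (hℓ : IsLine n ℓ) {x y : Fin n → ℝ}
    (hx : x ∈ ℓ) (hy : y ∈ ℓ) (hxy : x ≠ y) : ℓ = {p | ∃ t : ℝ, p = x + t • (y - x)} := by
  obtain ⟨a, v, hv, rfl⟩ := hℓ
  obtain ⟨s, rfl⟩ := hx
  obtain ⟨t, rfl⟩ := hy
  have hst : t - s ≠ 0 := by
    intro h
    exact hxy (by rw [sub_eq_zero.1 h])
  ext p
  constructor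
  · rintro ⟨r, rfl⟩
    refine ⟨(r - s) / (t - s), ?_⟩
    ext i
    simp
    field_simp
    ring
  · rintro ⟨r, rfl⟩
    refine ⟨s + r * (t - s), ?_⟩
    ext i
    simp
    ring

lemma IsLine.eq_of_two_points {ℓ ℓ' : Set (Fin n → ℝ)} (hℓ : IsLine n ℓ) (hℓ' : IsLine n ℓ')
    {x y : Fin n → ℝ} (hxy : x ≠ y) (hx : x ∈ ℓ) (hy : y ∈ ℓ) (hx' : x ∈ ℓ') (hy' : y ∈ ℓ') :
    ℓ = ℓ' := by
  rw [hℓ.eq_of_mem hx hy hxy, hℓ'.eq_of_mem hx' hy' hxy]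

/-- Restriction of a polynomial to the parametrised line `t ↦ a + t • v`, as a polynomial in `t`. -/
noncomputable def lineRestr (a v : Fin n → ℝ) :
    MvPolynomial (Fin n) ℝ →ₐ[ℝ] Polynomial ℝ :=
  MvPolynomial.aeval fun i => Polynomial.C (a i) + X * Polynomial.C (v i)

lemma eval_lineRestr (a v : Fin n → ℝ) (p : MvPolynomial (Fin n) ℝ) (t : ℝ) :
    (lineRestr a v p).eval t = MvPolynomial.eval (a + t • v) p := by
  induction p using MvPolynomial.induction_on with
  | C r => simp [lineRestr]
  | add p q hp hq => simp [hp, hq]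
  | mul_X p i hp =>
    rw [map_mul, Polynomial.eval_mul, hp, map_mul, MvPolynomial.eval_X]
    simp [lineRestr]
    left; ring

lemma natDegree_lineRestr_le (a v : Fin n → ℝ) {p : MvPolynomial (Fin n) ℝ} {δ : ℕ}
    (hp : p.totalDegree ≤ δ) : (lineRestr a v p).natDegree ≤ δ := by
  refine (MvPolynomial.aeval_natDegree_le p hp _ (n := 1) fun i => ?_).trans (mul_one δ).le
  compute_degree

lemma derivative_lineRestr (a v : Fin n → ℝ) (p : MvPolynomial (Fin n) ℝ) :
    Polynomial.derivative (lineRestr a v p) =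
      ∑ j, Polynomial.C (v j) * lineRestr a v (MvPolynomial.pderiv j p) := by
  induction p using MvPolynomial.induction_on with
  | C r => simp [lineRestr]
  | add p q hp hq => simp [hp, hq, mul_add, Finset.sum_add_distrib]
  | mul_X p i hp =>
    have h1 : lineRestr a v (MvPolynomial.X i) = Polynomial.C (a i) + X * Polynomial.C (v i) := by
      simp [lineRestr]
    have h2 : ∑ j, Polynomial.C (v j) * (lineRestr a v p *
        lineRestr a v (Pi.single (M := fun _ => MvPolynomial (Fin n) ℝ) j 1 i)) =
        Polynomial.C (v i) * lineRestr a v p := by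
      rw [Finset.sum_eq_single i]
      · simp
      · intro j _ hj
        rw [Pi.single_eq_of_ne (Ne.symm hj)]; simp
      · simp
    have h3 : ∀ j, Polynomial.C (v j) *
        lineRestr a v (MvPolynomial.pderiv j (p * MvPolynomial.X i)) =
        Polynomial.C (v j) * lineRestr a v (MvPolynomial.pderiv j p) *
          lineRestr a v (MvPolynomial.X i) + Polynomial.C (v j) * (lineRestr a v p *
        lineRestr a v (Pi.single (M := fun _ => MvPolynomial (Fin n) ℝ) j 1 i)) := by
      intro j
      rw [MvPolynomial.pderiv_mul, MvPolynomial.pderiv_X, map_add, map_mul, map_mul]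
      ring
    rw [Finset.sum_congr rfl fun j _ => h3 j, Finset.sum_add_distrib, h2, ← Finset.sum_mul, ← hp,
      map_mul, Polynomial.derivative_mul, h1]
    congr 1
    simp
    ring

lemma totalDegree_pderiv_le {p : MvPolynomial (Fin n) ℝ} {δ : ℕ} (hp : p.totalDegree ≤ δ + 1)
    (i : Fin n) : (MvPolynomial.pderiv i p).totalDegree ≤ δ := by
  rw [MvPolynomial.totalDegree]
  refine Finset.sup_le fun m hm => ?_
  rw [MvPolynomial.mem_support_iff, MvPolynomial.coeff_pderiv] at hm
  have h1 : m + Finsupp.single i 1 ∈ p.support := by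
    rw [MvPolynomial.mem_support_iff]
    exact left_ne_zero_of_mul hm
  have h2 := (MvPolynomial.le_totalDegree h1).trans hp
  rw [Finsupp.sum_add_index' (fun _ => rfl) (fun _ _ _ => rfl),
    Finsupp.sum_single_index rfl] at h2
  omega

lemma totalDegree_pderiv_le_self {p : MvPolynomial (Fin n) ℝ} {δ : ℕ} (hp : p.totalDegree ≤ δ)
    (i : Fin n) : (MvPolynomial.pderiv i p).totalDegree ≤ δ :=
  totalDegree_pderiv_le (hp.trans (Nat.le_succ δ)) i

lemma totalDegree_eq_zero_of_pderiv {p : MvPolynomial (Fin n) ℝ}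
    (h : ∀ i, MvPolynomial.pderiv i p = 0) : p.totalDegree = 0 := by
  rw [MvPolynomial.totalDegree, ← Nat.le_zero]
  refine Finset.sup_le fun m hm => ?_
  rw [MvPolynomial.mem_support_iff] at hm
  have : m = 0 := by
    ext i
    by_contra hi
    have h1 := MvPolynomial.coeff_pderiv (i := i) p (m - Finsupp.single i 1)
    have h2 : m - Finsupp.single i 1 + Finsupp.single i 1 = m := by
      refine tsub_add_cancel_of_le ?_
      rw [Finsupp.single_le_iff]
      exact Nat.one_le_iff_ne_zero.2 hi
    rw [h i, h2, MvPolynomial.coeff_zero] at h1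
    exact (mul_ne_zero hm (by positivity)) h1.symm
  simp [this]

lemma pderiv_comm' (i j : Fin n) (p : MvPolynomial (Fin n) ℝ) :
    MvPolynomial.pderiv i (MvPolynomial.pderiv j p) =
      MvPolynomial.pderiv j (MvPolynomial.pderiv i p) := by
  ext m
  rw [MvPolynomial.coeff_pderiv, MvPolynomial.coeff_pderiv, MvPolynomial.coeff_pderiv,
    MvPolynomial.coeff_pderiv, add_right_comm]
  by_cases h : i = j
  · subst h; rfl
  · simp [Finsupp.single_eq_of_ne h, Finsupp.single_eq_of_ne (Ne.symm h)]
    ring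

/-- A polynomial not vanishing identically on a line has few zeros there. -/
lemma card_zeros_on_line_le {ℓ : Set (Fin n → ℝ)} (hℓ : IsLine n ℓ) {f : MvPolynomial (Fin n) ℝ}
    {δ : ℕ} (hf : f.totalDegree ≤ δ) {A : Finset (Fin n → ℝ)} (hA : ∀ x ∈ A, x ∈ ℓ)
    (hzero : ∀ x ∈ A, MvPolynomial.eval x f = 0) {y : Fin n → ℝ} (hy : y ∈ ℓ)
    (hfy : MvPolynomial.eval y f ≠ 0) : A.card ≤ δ := by
  obtain ⟨a, v, hv, rfl⟩ := hℓ
  obtain ⟨t, rfl⟩ := hy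
  rw [← eval_lineRestr] at hfy
  have hne : lineRestr a v f ≠ 0 := fun h => hfy (by rw [h]; simp)
  have hsub : A ⊆ (lineRestr a v f).roots.toFinset.image (fun t => a + t • v) := by
    intro x hx
    obtain ⟨s, rfl⟩ := hA x hx
    refine Finset.mem_image.2 ⟨s, ?_, rfl⟩
    rw [Multiset.mem_toFinset, Polynomial.mem_roots hne, Polynomial.IsRoot, eval_lineRestr]
    exact hzero _ hx
  calc A.card ≤ _ := Finset.card_le_card hsub
    _ ≤ _ := Finset.card_image_le
    _ ≤ _ := Multiset.toFinset_card_le _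
    _ ≤ _ := Polynomial.card_roots' _
    _ ≤ δ := natDegree_lineRestr_le a v hf

/-- If every point of `X` is on at least `k` lines and `|X| ≤ k (d + 1)^n`, some nonzero polynomial of
degree at most `n d` vanishes at all points of `X` but those of a set having few incidences. This is
`incidence_dichotomy` for the vectors of monomials of degree at most `d` in each variable: on a line
these are polynomials of degree at most `n d` in the parameter, so the vectors attached to the points
of a line span dimension at most `n d + 1`. Linear algebra alone makes a polynomial
vanish on all of `X` if `|X| < (d + 1)^n`; tolerating few incidences gains the factor `k`. -/
theorem exists_poly_incidence (d k : ℕ) (X : Finset (Fin n → ℝ))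
    (𝔏 : Finset (Set (Fin n → ℝ))) (hL : ∀ ℓ ∈ 𝔏, IsLine n ℓ)
    (hdeg : ∀ x ∈ X, k ≤ (𝔏.filter (x ∈ ·)).card) (hcard : X.card ≤ k * (d + 1) ^ n) :
    ∃ p : MvPolynomial (Fin n) ℝ, p ≠ 0 ∧ p.totalDegree ≤ n * d ∧
      ∑ x ∈ X with MvPolynomial.eval x p ≠ 0, (𝔏.filter (x ∈ ·)).card
        ≤ 2 * (n * d + 1) * 𝔏.card := by
  set e : (Fin n → ℝ) → (Fin n → Fin (d + 1)) → ℝ := fun x s => ∏ i, x i ^ (s i : ℕ) with he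
  have hsum : ∀ s : Fin n → Fin (d + 1), ∑ i, (s i : ℕ) ≤ n * d := by
    intro s
    calc ∑ i, (s i : ℕ) ≤ ∑ _i : Fin n, d := Finset.sum_le_sum fun i _ => by
          have := (s i).2; omega
      _ = n * d := by simp
  obtain ⟨z, hz, hsumz⟩ := incidence_dichotomy X 𝔏 (fun x ℓ => x ∈ ℓ) e (n * d + 1) k
    (by
      intro ℓ hℓ
      obtain ⟨a, v, hv, rfl⟩ := hL ℓ hℓ
      set P : (Fin n → Fin (d + 1)) → Polynomial ℝ := fun s =>
        ∏ i, (Polynomial.C (a i) + Polynomial.X * Polynomial.C (v i)) ^ (s i : ℕ) with hP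
      refine ⟨Submodule.span ℝ (Set.range fun (j : Fin (n * d + 1)) s => (P s).coeff j), ?_, ?_⟩
      · refine (finrank_range_le_card (R := ℝ)
          (fun (j : Fin (n * d + 1)) s => (P s).coeff j)).trans ?_
        rw [Fintype.card_fin]
      · rintro x - ⟨t, rfl⟩
        have hdegP : ∀ s, (P s).natDegree < n * d + 1 := by
          intro s
          refine Nat.lt_succ_of_le ((Polynomial.natDegree_prod_le _ _).trans
            (le_trans (Finset.sum_le_sum fun i _ => ?_) (hsum s)))
          refine Polynomial.natDegree_pow_le.trans ?_
          have : (Polynomial.C (a i) + Polynomial.X * Polynomial.C (v i)).natDegree ≤ 1 := by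
            compute_degree
          simpa using Nat.mul_le_mul_left (s i : ℕ) this
        have hx : e (a + t • v) = ∑ j : Fin (n * d + 1), t ^ (j : ℕ) • fun s => (P s).coeff j := by
          ext s
          have h1 : e (a + t • v) s = (P s).eval t := by
            simp only [he, hP, Polynomial.eval_prod]
            refine Finset.prod_congr rfl fun i _ => ?_
            simp [mul_comm t]
          rw [h1, Polynomial.eval_eq_sum_range' (hdegP s), Finset.sum_apply, Finset.sum_range]
          simp [mul_comm]
        rw [hx]
        exact Submodule.sum_mem _ fun j _ => Submodule.smul_mem _ _
          (Submodule.subset_span ⟨j, rfl⟩))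
    (fun x _ y _ hxy ℓ hℓ ℓ' hℓ' h1 h2 h3 h4 =>
      (hL ℓ hℓ).eq_of_two_points (hL ℓ' hℓ') hxy h1 h2 h3 h4)
    hdeg (by simpa using hcard)
  set mon : (Fin n → Fin (d + 1)) → (Fin n →₀ ℕ) :=
    fun s => Finsupp.equivFunOnFinite.symm fun i => (s i : ℕ) with hmon
  have hinj : Function.Injective mon := by
    intro s s' h
    have := Finsupp.equivFunOnFinite.symm.injective h
    ext i
    exact congrFun this i
  set p : MvPolynomial (Fin n) ℝ := ∑ s, MvPolynomial.monomial (mon s) (z s) with hp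
  have heval : ∀ x, MvPolynomial.eval x p = e x ⬝ᵥ z := by
    intro x
    rw [hp, map_sum, dotProduct]
    refine Finset.sum_congr rfl fun s _ => ?_
    rw [MvPolynomial.eval_monomial, mul_comm, Finsupp.prod_fintype _ _ (by simp)]
    simp [he, hmon]
  refine ⟨p, fun h0 => hz ?_, ?_, ?_⟩
  · ext s
    have h1 : p.coeff (mon s) = z s := by
      rw [hp, MvPolynomial.coeff_sum, Finset.sum_eq_single s]
      · simp
      · intro s' _ hs'
        rw [MvPolynomial.coeff_monomial, if_neg fun h => hs' (hinj h)]
      · simp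
    rw [← h1, h0]; simp
  · refine (MvPolynomial.totalDegree_finsetSum _ _).trans (Finset.sup_le fun s _ => ?_)
    refine (MvPolynomial.totalDegree_monomial_le _ _).trans ?_
    rw [Finsupp.sum_fintype _ _ (by simp)]
    simpa [hmon] using hsum s
  · simpa only [heval] using hsumz

/-- The incidence of `x` with `ℓ` is good for the assignment `Q` of polynomials to lines if `Q ℓ` vanishes
on `ℓ` and its gradient does not vanish at `x`. That `x` lies on `ℓ` is not part of the definition. -/
def GoodInc (Q : Set (Fin n → ℝ) → MvPolynomial (Fin n) ℝ) (x : Fin n → ℝ)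
    (ℓ : Set (Fin n → ℝ)) : Prop :=
  (∀ y ∈ ℓ, MvPolynomial.eval y (Q ℓ) = 0) ∧ ∃ i, MvPolynomial.eval x (MvPolynomial.pderiv i (Q ℓ)) ≠ 0

/-- A polynomial `p ≠ 0` of degree at most `δ` can be replaced, separately on each line, by an iterated
partial derivative `Q ℓ`, so that each line has at most `δ` zeros of `p` whose incidence with it is
not good, and good lines through a common point have the same polynomial. The induction on the degree
replaces `p` by one partial derivative on those lines along which `p` and its gradient vanish. -/
theorem exists_line_polys (δ : ℕ) : ∀ p : MvPolynomial (Fin n) ℝ, p ≠ 0 → p.totalDegree ≤ δ →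
    ∃ Q : Set (Fin n → ℝ) → MvPolynomial (Fin n) ℝ, (∀ ℓ, (Q ℓ).totalDegree ≤ δ) ∧
      (∀ ℓ, IsLine n ℓ → ∀ A : Finset (Fin n → ℝ), (∀ x ∈ A, x ∈ ℓ) →
        (∀ x ∈ A, MvPolynomial.eval x p = 0) → (∀ x ∈ A, ¬ GoodInc Q x ℓ) → A.card ≤ δ) ∧
      ∀ x ℓ ℓ', x ∈ ℓ → x ∈ ℓ' → GoodInc Q x ℓ → GoodInc Q x ℓ' → Q ℓ = Q ℓ' := by
  have hconst : ∀ (p : MvPolynomial (Fin n) ℝ) (δ : ℕ), p ≠ 0 → p.totalDegree = 0 →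
    ∃ Q : Set (Fin n → ℝ) → MvPolynomial (Fin n) ℝ, (∀ ℓ, (Q ℓ).totalDegree ≤ δ) ∧
      (∀ ℓ, IsLine n ℓ → ∀ A : Finset (Fin n → ℝ), (∀ x ∈ A, x ∈ ℓ) →
        (∀ x ∈ A, MvPolynomial.eval x p = 0) → (∀ x ∈ A, ¬ GoodInc Q x ℓ) → A.card ≤ δ) ∧
      ∀ x ℓ ℓ', x ∈ ℓ → x ∈ ℓ' → GoodInc Q x ℓ → GoodInc Q x ℓ' → Q ℓ = Q ℓ' := by
    intro p δ hp hdeg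
    refine ⟨fun _ => p, fun _ => hdeg.le.trans (Nat.zero_le δ), fun ℓ _ A _ hA _ => ?_, fun _ _ _ _ _ _ _ => rfl⟩
    rw [MvPolynomial.totalDegree_eq_zero_iff_eq_C] at hdeg
    have hc : MvPolynomial.coeff 0 p ≠ 0 := fun h => hp (by rw [hdeg, h, map_zero])
    have : A = ∅ := by
      refine Finset.eq_empty_of_forall_notMem fun x hx => hc ?_
      have := hA x hx
      rw [hdeg] at this
      simpa using this
    simp [this]
  induction δ with
  | zero => exact fun p hp hdeg => hconst p 0 hp (Nat.le_zero.1 hdeg)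
  | succ δ ih =>
    intro p hp hdeg
    by_cases hall : ∀ i, MvPolynomial.pderiv i p = 0
    · exact hconst p _ hp (totalDegree_eq_zero_of_pderiv hall)
    push Not at hall
    obtain ⟨i, hi⟩ := hall
    obtain ⟨Q', hQ'deg, hQ'bad, hQ'eq⟩ := ih _ hi (totalDegree_pderiv_le hdeg i)
    -- lines along which `p` and its gradient vanish
    set sing : Set (Fin n → ℝ) → Prop := fun ℓ => ∀ y ∈ ℓ, MvPolynomial.eval y p = 0 ∧
      ∀ j, MvPolynomial.eval y (MvPolynomial.pderiv j p) = 0 with hsing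
    set Q : Set (Fin n → ℝ) → MvPolynomial (Fin n) ℝ := fun ℓ => if sing ℓ then Q' ℓ else p with hQ
    have hQ1 : ∀ ℓ, sing ℓ → Q ℓ = Q' ℓ := fun ℓ h => by rw [hQ]; simp only; rw [if_pos h]
    have hQ2 : ∀ ℓ, ¬ sing ℓ → Q ℓ = p := fun ℓ h => by rw [hQ]; simp only; rw [if_neg h]
    refine ⟨Q, fun ℓ => ?_, fun ℓ hℓ A hAℓ hA0 hAbad => ?_, fun x ℓ ℓ' hx hx' hg hg' => ?_⟩
    · by_cases h : sing ℓ
      · rw [hQ1 ℓ h]; exact (hQ'deg ℓ).trans (Nat.le_succ δ)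
      · rw [hQ2 ℓ h]; exact hdeg
    · by_cases h : sing ℓ
      · refine (hQ'bad ℓ hℓ A hAℓ (fun x hx => (h x (hAℓ x hx)).2 i) fun x hx hg => ?_).trans
          (Nat.le_succ δ)
        refine hAbad x hx ?_
        unfold GoodInc at hg ⊢
        rwa [hQ1 ℓ h]
      · by_cases h0 : ∀ y ∈ ℓ, MvPolynomial.eval y p = 0
        · have : ∃ y ∈ ℓ, ∃ j, MvPolynomial.eval y (MvPolynomial.pderiv j p) ≠ 0 := by
            by_contra hcon
            push Not at hcon
            exact h fun y hy => ⟨h0 y hy, hcon y hy⟩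
          obtain ⟨y, hy, j, hj⟩ := this
          refine card_zeros_on_line_le hℓ (totalDegree_pderiv_le_self hdeg j) hAℓ
            (fun x hx => ?_) hy hj
          by_contra hne
          refine hAbad x hx ?_
          unfold GoodInc
          rw [hQ2 ℓ h]
          exact ⟨h0, j, hne⟩
        · push Not at h0
          obtain ⟨y, hy, hy0⟩ := h0
          exact card_zeros_on_line_le hℓ hdeg hAℓ hA0 hy hy0
    · unfold GoodInc at hg hg'
      by_cases h : sing ℓ <;> by_cases h' : sing ℓ'
      · rw [hQ1 ℓ h] at hg ⊢; rw [hQ1 ℓ' h'] at hg' ⊢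
        exact hQ'eq x ℓ ℓ' hx hx' hg hg'
      · rw [hQ2 ℓ' h'] at hg'
        obtain ⟨-, j, hj⟩ := hg'
        exact absurd ((h x hx).2 j) hj
      · rw [hQ2 ℓ h] at hg
        obtain ⟨-, j, hj⟩ := hg
        exact absurd ((h' x hx').2 j) hj
      · rw [hQ2 ℓ h, hQ2 ℓ' h']

end Lines

/-! ### Stratification of incidences and the planar bound -/

section Counting

open scoped Classical
open MvPolynomial (eval pderiv)

/-- The least degree parameter `d` for which `exists_poly_incidence` applies to `S` points on at least
`k` lines each; it is `0` or of order `(S / k)^(1/n)`. -/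
lemma exists_degree (n k S : ℕ) (hn : n ≠ 0) (hk : 1 ≤ k) :
    ∃ d, S ≤ k * (d + 1) ^ n ∧ (d = 0 ∨ k * d ^ n < S) := by
  have hex : ∃ d, S ≤ k * (d + 1) ^ n := by
    refine ⟨S, ?_⟩
    calc S ≤ S + 1 := Nat.le_succ S
      _ ≤ (S + 1) ^ n := Nat.le_self_pow hn _
      _ ≤ k * (S + 1) ^ n := Nat.le_mul_of_pos_left _ hk
  refine ⟨Nat.find hex, Nat.find_spec hex, ?_⟩
  rcases Nat.eq_zero_or_pos (Nat.find hex) with h | h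
  · exact Or.inl h
  · right
    have := Nat.find_min hex (Nat.sub_lt h one_pos)
    rw [Nat.sub_one_add_one h.ne'] at this
    omega

variable {n : ℕ}

/-- `exists_poly_incidence` and `exists_line_polys` combined: the points of `X` outside the set `Y` of zeros
of a polynomial of degree at most `n d` have few incidences, and all but few incidences with points
of `Y` are good. -/
theorem exists_stratification (d k : ℕ) (X : Finset (Fin n → ℝ))
    (𝔏 : Finset (Set (Fin n → ℝ))) (hL : ∀ ℓ ∈ 𝔏, IsLine n ℓ)
    (hdeg : ∀ x ∈ X, k ≤ (𝔏.filter (x ∈ ·)).card) (hcard : X.card ≤ k * (d + 1) ^ n) :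
    ∃ (Q : Set (Fin n → ℝ) → MvPolynomial (Fin n) ℝ) (Y : Finset (Fin n → ℝ)),
      (∀ ℓ, (Q ℓ).totalDegree ≤ n * d) ∧
      (∀ x ℓ ℓ', x ∈ ℓ → x ∈ ℓ' → GoodInc Q x ℓ → GoodInc Q x ℓ' → Q ℓ = Q ℓ') ∧
      Y ⊆ X ∧
      ∑ x ∈ X \ Y, (𝔏.filter (x ∈ ·)).card ≤ 2 * (n * d + 1) * 𝔏.card ∧
      ∑ x ∈ Y, (𝔏.filter fun ℓ => x ∈ ℓ ∧ ¬ GoodInc Q x ℓ).card ≤ n * d * 𝔏.card := by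
  obtain ⟨p, hp, hpd, hpX⟩ := exists_poly_incidence d k X 𝔏 hL hdeg hcard
  obtain ⟨Q, hQd, hQbad, hQeq⟩ := exists_line_polys (n * d) p hp hpd
  refine ⟨Q, X.filter fun x => eval x p = 0, hQd, hQeq, Finset.filter_subset _ _, ?_, ?_⟩
  · rwa [← Finset.filter_not]
  · have h := Finset.sum_card_bipartiteAbove_eq_sum_card_bipartiteBelow
      (s := X.filter fun x => eval x p = 0) (t := 𝔏) (fun x ℓ => x ∈ ℓ ∧ ¬ GoodInc Q x ℓ)
    unfold Finset.bipartiteAbove Finset.bipartiteBelow at h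
    rw [h]
    calc _ ≤ ∑ _ℓ ∈ 𝔏, n * d := by
          refine Finset.sum_le_sum fun ℓ hℓ => hQbad ℓ (hL ℓ hℓ) _ (fun x hx => ?_)
            (fun x hx => ?_) (fun x hx => ?_)
          · exact (Finset.mem_filter.1 hx).2.1
          · exact (Finset.mem_filter.1 (Finset.mem_filter.1 hx).1).2
          · exact (Finset.mem_filter.1 hx).2.2
      _ = _ := by rw [Finset.sum_const, smul_eq_mul, mul_comm]

lemma HasDir.eq_through {ℓ : Set (Fin n → ℝ)} {v x : Fin n → ℝ} (h : HasDir n ℓ v) (hx : x ∈ ℓ) :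
    ℓ = {p | ∃ t : ℝ, p = x + t • v} := by
  obtain ⟨hv, a, rfl⟩ := h
  obtain ⟨s, rfl⟩ := hx
  ext p
  constructor
  · rintro ⟨r, rfl⟩
    exact ⟨r - s, by rw [add_assoc, ← add_smul]; congr 2; ring⟩
  · rintro ⟨r, rfl⟩
    exact ⟨s + r, by rw [add_assoc, ← add_smul]⟩

lemma IsLine.exists_hasDir {ℓ : Set (Fin n → ℝ)} (h : IsLine n ℓ) : ∃ v, HasDir n ℓ v := by
  obtain ⟨a, v, hv, rfl⟩ := h
  exact ⟨v, hv, a, rfl⟩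

/-- Distinct concurrent lines have independent directions. -/
lemma HasDir.not_parallel {ℓ ℓ' : Set (Fin n → ℝ)} {v v' x : Fin n → ℝ} (h : HasDir n ℓ v)
    (h' : HasDir n ℓ' v') (hx : x ∈ ℓ) (hx' : x ∈ ℓ') (hne : ℓ ≠ ℓ') (c : ℝ) : v' ≠ c • v := by
  rintro rfl
  refine hne ?_
  have hc : c ≠ 0 := by
    rintro rfl
    exact h'.1 (zero_smul _ _)
  rw [h.eq_through hx, h'.eq_through hx']
  ext p
  constructor
  · rintro ⟨t, rfl⟩
    refine ⟨t / c, ?_⟩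
    rw [smul_smul, div_mul_cancel₀ _ hc]
  · rintro ⟨t, rfl⟩
    exact ⟨t * c, by rw [smul_smul]⟩

/-- The gradient of a polynomial vanishing on a line is orthogonal to the line. -/
lemma sum_dir_pderiv_eq_zero {ℓ : Set (Fin n → ℝ)} {v x : Fin n → ℝ} {q : MvPolynomial (Fin n) ℝ}
    (h : HasDir n ℓ v) (hx : x ∈ ℓ) (hq : ∀ y ∈ ℓ, eval y q = 0) :
    ∑ j, v j * eval x (pderiv j q) = 0 := by
  have h0 : lineRestr x v q = 0 := by
    refine Polynomial.funext fun t => ?_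
    rw [eval_lineRestr, Polynomial.eval_zero]
    refine hq _ ?_
    rw [h.eq_through hx]
    exact ⟨t, rfl⟩
  have h1 := derivative_lineRestr x v q
  rw [h0, Polynomial.derivative_zero] at h1
  have h2 := congrArg (Polynomial.eval 0) h1
  rw [Polynomial.eval_finsetSum] at h2
  simpa [eval_lineRestr] using h2.symm

/-- The direction of a line on which a polynomial vanishes is isotropic for its Hessian. -/
lemma sum_dir_pderiv2_eq_zero {ℓ : Set (Fin n → ℝ)} {v x : Fin n → ℝ}
    {q : MvPolynomial (Fin n) ℝ} (h : HasDir n ℓ v) (hx : x ∈ ℓ) (hq : ∀ y ∈ ℓ, eval y q = 0) :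
    ∑ i, v i * ∑ j, v j * eval x (pderiv j (pderiv i q)) = 0 := by
  have h2 := sum_dir_pderiv_eq_zero (q := ∑ i, MvPolynomial.C (v i) * pderiv i q) h hx
    (fun y hy => by
      rw [map_sum]
      simpa using sum_dir_pderiv_eq_zero h hy hq)
  simp only [map_sum, MvPolynomial.pderiv_C_mul, map_mul, MvPolynomial.eval_C] at h2
  rw [← h2]
  simp only [Finset.mul_sum]
  rw [Finset.sum_comm]
  refine Finset.sum_congr rfl fun i _ => Finset.sum_congr rfl fun j _ => by ring

lemma exists_smul_of_orthogonal_plane {v v' g : Fin 2 → ℝ} (hv : v ≠ 0) {i : Fin 2} (hg : g i ≠ 0)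
    (h : ∑ j, v j * g j = 0) (h' : ∑ j, v' j * g j = 0) : ∃ c : ℝ, v' = c • v := by
  simp only [Fin.sum_univ_two] at h h'
  have hdet : v 0 * v' 1 = v 1 * v' 0 := by
    have h0 : (v 0 * v' 1 - v 1 * v' 0) * g 0 = 0 := by linear_combination v' 1 * h - v 1 * h'
    have h1 : (v 0 * v' 1 - v 1 * v' 0) * g 1 = 0 := by linear_combination v 0 * h' - v' 0 * h
    fin_cases i
    · exact sub_eq_zero.1 ((mul_eq_zero.1 h0).resolve_right hg)
    · exact sub_eq_zero.1 ((mul_eq_zero.1 h1).resolve_right hg)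
  by_cases h0 : v 0 = 0
  · have h1 : v 1 ≠ 0 := fun h1 => hv (by ext j; fin_cases j <;> assumption)
    refine ⟨v' 1 / v 1, ?_⟩
    ext j
    fin_cases j
    · have : v' 0 = 0 := by
        rw [h0, zero_mul] at hdet
        exact (mul_eq_zero.1 hdet.symm).resolve_left h1
      simp [h0, this]
    · simp [h1]
  · refine ⟨v' 0 / v 0, ?_⟩
    ext j
    fin_cases j
    · simp [h0]
    · simp; field_simp; linarith

/-- The Szemerédi–Trotter bound for the number of points of the plane on at least `k` lines. At most one
line through a point makes a good incidence, as good lines are orthogonal to a common nonzero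
gradient; hence at least half of the `k` incidences of each point are among the few exceptional ones. -/
theorem planar_rich_points {k : ℕ} (hk : 2 ≤ k) (X : Finset (Fin 2 → ℝ))
    (𝔏 : Finset (Set (Fin 2 → ℝ))) (hL : ∀ ℓ ∈ 𝔏, IsLine 2 ℓ)
    (hdeg : ∀ x ∈ X, k ≤ (𝔏.filter (x ∈ ·)).card) :
    X.card * k ≤ 2 * 𝔏.card ∨ X.card * k ^ 3 ≤ 100 * 𝔏.card ^ 2 := by
  obtain ⟨d, hd, hd'⟩ := exists_degree 2 k X.card two_ne_zero (by omega)
  obtain ⟨Q, Y, -, hQeq, hYX, hXY, hY⟩ := exists_stratification d k X 𝔏 hL hdeg hd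
  have hbad : ∀ x ∈ Y, k ≤ 2 * (𝔏.filter fun ℓ => x ∈ ℓ ∧ ¬ GoodInc Q x ℓ).card := by
    intro x hx
    have h1 := hdeg x (hYX hx)
    have h2 : (𝔏.filter fun ℓ => x ∈ ℓ ∧ GoodInc Q x ℓ).card ≤ 1 := by
      refine Finset.card_le_one.2 fun ℓ hℓ ℓ' hℓ' => ?_
      rw [Finset.mem_filter] at hℓ hℓ'
      by_contra hne
      obtain ⟨v, hv⟩ := (hL ℓ hℓ.1).exists_hasDir
      obtain ⟨v', hv'⟩ := (hL ℓ' hℓ'.1).exists_hasDir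
      have hq := hQeq x ℓ ℓ' hℓ.2.1 hℓ'.2.1 hℓ.2.2 hℓ'.2.2
      have e1 := sum_dir_pderiv_eq_zero hv hℓ.2.1 hℓ.2.2.1
      have e2 := sum_dir_pderiv_eq_zero hv' hℓ'.2.1 hℓ'.2.2.1
      obtain ⟨i, hi⟩ := hℓ.2.2.2
      rw [← hq] at e2
      have hpar := hv.not_parallel hv' hℓ.2.1 hℓ'.2.1 hne
      obtain ⟨c, hc⟩ := exists_smul_of_orthogonal_plane (g := fun i => eval x (pderiv i (Q ℓ)))
        hv.1 hi e1 e2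
      exact hpar c hc
    have h3 : (𝔏.filter (x ∈ ·)).card = (𝔏.filter fun ℓ => x ∈ ℓ ∧ GoodInc Q x ℓ).card +
        (𝔏.filter fun ℓ => x ∈ ℓ ∧ ¬ GoodInc Q x ℓ).card := by
      rw [← Finset.filter_filter, ← Finset.filter_filter,
        Finset.card_filter_add_card_filter_not]
    omega
  have h1 : Y.card * k ≤ 2 * (2 * d * 𝔏.card) := by
    calc Y.card * k = ∑ _x ∈ Y, k := by simp
      _ ≤ ∑ x ∈ Y, 2 * (𝔏.filter fun ℓ => x ∈ ℓ ∧ ¬ GoodInc Q x ℓ).card :=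
          Finset.sum_le_sum hbad
      _ ≤ _ := by rw [← Finset.mul_sum]; exact Nat.mul_le_mul_left 2 hY
  have h2 : (X \ Y).card * k ≤ 2 * (2 * d + 1) * 𝔏.card := by
    calc (X \ Y).card * k = ∑ _x ∈ X \ Y, k := by simp
      _ ≤ _ := (Finset.sum_le_sum fun x hx => hdeg x (Finset.sdiff_subset hx)).trans hXY
  have h3 : X.card = (X \ Y).card + Y.card := (Finset.card_sdiff_add_card_eq_card hYX).symm
  have h4 : X.card * k ≤ (8 * d + 2) * 𝔏.card := by rw [h3]; nlinarith
  rcases Nat.eq_zero_or_pos d with rfl | hd0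
  · left; simpa using h4
  · right
    replace hd' := hd'.resolve_left hd0.ne'
    have h5 : X.card * k ≤ 10 * d * 𝔏.card := h4.trans (Nat.mul_le_mul_right _ (by omega))
    have h6 : X.card * (X.card * k ^ 3) ≤ X.card * (100 * 𝔏.card ^ 2) := by
      calc X.card * (X.card * k ^ 3) = k * (X.card * k) ^ 2 := by ring
        _ ≤ k * (10 * d * 𝔏.card) ^ 2 := by gcongr
        _ = (k * d ^ 2) * (100 * 𝔏.card ^ 2) := by ring
        _ ≤ _ := by gcongr
    exact Nat.le_of_mul_le_mul_left h6 (by omega)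

end Counting

/-! ### The joints theorem and points in a plane of space -/

section Joints

open scoped Classical
open MvPolynomial (eval pderiv)

/-- The joints theorem: `L` lines have at most `O(L^(3/2))` joints. At a joint some incidence is not
good, since a nonzero gradient is not orthogonal to three independent directions. -/
theorem joints_theorem (𝔏 : Finset (Set (Fin 3 → ℝ))) (hL : ∀ ℓ ∈ 𝔏, IsLine 3 ℓ)
    (X : Finset (Fin 3 → ℝ)) (hX : ∀ x ∈ X, IsJoint 𝔏 x) :
    X.card ^ 2 ≤ 1331 * 𝔏.card ^ 3 := by
  have hdeg : ∀ x ∈ X, 1 ≤ (𝔏.filter (x ∈ ·)).card := by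
    intro x hx
    obtain ⟨ℓ, hℓ, -, -, -, -, hxℓ, -⟩ := hX x hx
    exact Finset.card_pos.2 ⟨ℓ, Finset.mem_filter.2 ⟨hℓ, hxℓ⟩⟩
  obtain ⟨d, hd, hd'⟩ := exists_degree 3 1 X.card three_ne_zero le_rfl
  obtain ⟨Q, Y, -, hQeq, hYX, hXY, hY⟩ := exists_stratification d 1 X 𝔏 hL hdeg hd
  have hbad : ∀ x ∈ Y, 1 ≤ (𝔏.filter fun ℓ => x ∈ ℓ ∧ ¬ GoodInc Q x ℓ).card := by
    intro x hx
    obtain ⟨ℓ₁, h₁, ℓ₂, h₂, ℓ₃, h₃, hx₁, hx₂, hx₃, v₁, v₂, v₃, hv₁, hv₂, hv₃, hli⟩ := hX x (hYX hx)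
    by_contra hcon
    have hall : ∀ ℓ ∈ 𝔏, x ∈ ℓ → GoodInc Q x ℓ := by
      intro ℓ hℓ hxℓ
      by_contra hb
      exact hcon (Finset.card_pos.2 ⟨ℓ, Finset.mem_filter.2 ⟨hℓ, hxℓ, hb⟩⟩)
    have g₁ := hall ℓ₁ h₁ hx₁
    have g₂ := hall ℓ₂ h₂ hx₂
    have g₃ := hall ℓ₃ h₃ hx₃
    have e₁ := sum_dir_pderiv_eq_zero hv₁ hx₁ g₁.1
    have e₂ := sum_dir_pderiv_eq_zero hv₂ hx₂ g₂.1
    have e₃ := sum_dir_pderiv_eq_zero hv₃ hx₃ g₃.1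
    rw [← hQeq x ℓ₁ ℓ₂ hx₁ hx₂ g₁ g₂] at e₂
    rw [← hQeq x ℓ₁ ℓ₃ hx₁ hx₃ g₁ g₃] at e₃
    obtain ⟨i, hi⟩ := g₁.2
    have hinj : Function.Injective (Matrix.mulVec (Matrix.of ![v₁, v₂, v₃])) := by
      rw [Matrix.mulVec_injective_iff_isUnit, ← Matrix.linearIndependent_rows_iff_isUnit]
      exact hli
    have h0 : (fun j => eval x (pderiv j (Q ℓ₁))) = 0 := by
      refine hinj ?_
      rw [Matrix.mulVec_zero]
      ext j
      fin_cases j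
      · simpa [Matrix.mulVec, dotProduct] using e₁
      · simpa [Matrix.mulVec, dotProduct] using e₂
      · simpa [Matrix.mulVec, dotProduct] using e₃
    exact hi (congrFun h0 i)
  have h1 : Y.card ≤ 3 * d * 𝔏.card := by
    calc Y.card = ∑ _x ∈ Y, 1 := by simp
      _ ≤ _ := (Finset.sum_le_sum hbad).trans hY
  have h2 : (X \ Y).card ≤ 2 * (3 * d + 1) * 𝔏.card := by
    calc (X \ Y).card = ∑ _x ∈ X \ Y, 1 := by simp
      _ ≤ _ := (Finset.sum_le_sum fun x hx => hdeg x (Finset.sdiff_subset hx)).trans hXY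
  have h3 : X.card = (X \ Y).card + Y.card := (Finset.card_sdiff_add_card_eq_card hYX).symm
  have h4 : X.card ≤ (9 * d + 2) * 𝔏.card := by rw [h3]; nlinarith
  rcases Nat.eq_zero_or_pos d with rfl | hd0
  · rcases Nat.eq_zero_or_pos 𝔏.card with hL0 | hL0
    · rw [hL0] at h4 ⊢
      have : X.card = 0 := by omega
      simp [this]
    · calc X.card ^ 2 ≤ (2 * 𝔏.card) ^ 2 := Nat.pow_le_pow_left (by simpa using h4) 2
        _ = 4 * (𝔏.card ^ 2 * 1) := by ring
        _ ≤ 1331 * (𝔏.card ^ 2 * 𝔏.card) := by gcongr <;> omega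
        _ = _ := by ring
  · replace hd' := hd'.resolve_left hd0.ne'
    rw [one_mul] at hd'
    have h5 : X.card ≤ 11 * d * 𝔏.card := h4.trans (Nat.mul_le_mul_right _ (by omega))
    have h6 : X.card * X.card ^ 2 ≤ X.card * (1331 * 𝔏.card ^ 3) := by
      calc X.card * X.card ^ 2 = X.card ^ 3 := by ring
        _ ≤ (11 * d * 𝔏.card) ^ 3 := by gcongr
        _ = d ^ 3 * (1331 * 𝔏.card ^ 3) := by ring
        _ ≤ _ := by gcongr
    exact Nat.le_of_mul_le_mul_left h6 (by omega)

/-- The bound of `planar_rich_points` for points and lines of a plane in `ℝ³`, by projection along a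
coordinate axis on which the normal vector `ν` has a nonzero component. -/
theorem rich_points_in_plane {k : ℕ} (hk : 2 ≤ k) (X : Finset (Fin 3 → ℝ))
    (𝔏 : Finset (Set (Fin 3 → ℝ))) (hL : ∀ ℓ ∈ 𝔏, IsLine 3 ℓ)
    (hdeg : ∀ x ∈ X, k ≤ (𝔏.filter (x ∈ ·)).card)
    {ν x₀ : Fin 3 → ℝ} (hν : ν ≠ 0) (hXpl : ∀ x ∈ X, ν ⬝ᵥ (x - x₀) = 0)
    (hLpl : ∀ ℓ ∈ 𝔏, ∀ y ∈ ℓ, ν ⬝ᵥ (y - x₀) = 0) :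
    X.card * k ≤ 2 * 𝔏.card ∨ X.card * k ^ 3 ≤ 100 * 𝔏.card ^ 2 := by
  obtain ⟨i, hi⟩ : ∃ i, ν i ≠ 0 := by
    by_contra h
    push Not at h
    exact hν (funext h)
  set π : (Fin 3 → ℝ) → Fin 2 → ℝ := fun x j => x (i.succAbove j) with hπ
  have hker : ∀ u : Fin 3 → ℝ, ν ⬝ᵥ u = 0 → π u = 0 → u = 0 := by
    intro u hu hπu
    have h1 : ∀ j, u (i.succAbove j) = 0 := fun j => congrFun hπu j
    have h2 : u i = 0 := by
      rw [dotProduct, Fin.sum_univ_succAbove _ i] at hu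
      simp only [h1, mul_zero, Finset.sum_const_zero, add_zero] at hu
      exact (mul_eq_zero.1 hu).resolve_left hi
    ext j
    rcases Fin.eq_self_or_eq_succAbove i j with rfl | ⟨j', rfl⟩
    · exact h2
    · exact h1 j'
  have hinj : ∀ x y, ν ⬝ᵥ (x - x₀) = 0 → ν ⬝ᵥ (y - x₀) = 0 → π x = π y → x = y := by
    intro x y hx hy hxy
    refine sub_eq_zero.1 (hker _ ?_ ?_)
    · have : x - y = (x - x₀) - (y - x₀) := by abel
      rw [this, dotProduct_sub, hx, hy, sub_zero]
    · ext j
      have := congrFun hxy j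
      simp only [hπ] at this ⊢
      simp [this]
  have hLinj : Set.InjOn (fun ℓ => π '' ℓ) (𝔏 : Set (Set (Fin 3 → ℝ))) := by
    have hsub : ∀ ℓ ∈ 𝔏, ∀ ℓ' ∈ 𝔏, π '' ℓ = π '' ℓ' → ℓ ⊆ ℓ' := by
      intro ℓ hℓ ℓ' hℓ' h y hy
      obtain ⟨y', hy', hyy⟩ : π y ∈ π '' ℓ' := h ▸ ⟨y, hy, rfl⟩
      rw [hinj y y' (hLpl ℓ hℓ y hy) (hLpl ℓ' hℓ' y' hy') hyy.symm]
      exact hy'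
    exact fun ℓ hℓ ℓ' hℓ' h => (hsub ℓ hℓ ℓ' hℓ' h).antisymm (hsub ℓ' hℓ' ℓ hℓ h.symm)
  have hmain := planar_rich_points hk (X.image π) (𝔏.image fun ℓ => π '' ℓ)
    (by
      intro ℓ' hℓ'
      obtain ⟨ℓ, hℓ, rfl⟩ := Finset.mem_image.1 hℓ'
      obtain ⟨a, v, hv, hav⟩ := hL ℓ hℓ
      refine ⟨π a, π v, fun h => hv (hker v ?_ h), ?_⟩
      · have h1 := hLpl ℓ hℓ a (by rw [hav]; exact ⟨0, by simp⟩)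
        have h2 := hLpl ℓ hℓ (a + v) (by rw [hav]; exact ⟨1, by simp⟩)
        rw [add_sub_right_comm, dotProduct_add, h1, zero_add] at h2
        exact h2
      · ext p
        rw [hav]
        constructor
        · rintro ⟨_, ⟨t, rfl⟩, rfl⟩
          exact ⟨t, by ext j; simp [hπ]⟩
        · rintro ⟨t, rfl⟩
          exact ⟨a + t • v, ⟨t, rfl⟩, by ext j; simp [hπ]⟩)
    (by
      intro x' hx'
      obtain ⟨x, hx, rfl⟩ := Finset.mem_image.1 hx'
      refine (hdeg x hx).trans ?_
      refine Finset.card_le_card_of_injOn (fun ℓ => π '' ℓ) (fun ℓ hℓ => ?_)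
        (hLinj.mono fun ℓ hℓ => (Finset.mem_filter.1 hℓ).1)
      have := Finset.mem_filter.1 hℓ
      exact Finset.mem_coe.2 (Finset.mem_filter.2
        ⟨Finset.mem_image_of_mem _ this.1, x, this.2, rfl⟩))
  rw [Finset.card_image_of_injOn fun x hx y hy h => hinj x y (hXpl x hx) (hXpl y hy) h,
    Finset.card_image_of_injOn hLinj] at hmain
  exact hmain

end Joints

/-! ### Flat points and the gradient along a line -/

section Flat

open scoped Classical Matrix
open MvPolynomial (eval pderiv)

/-- A vector orthogonal to two vectors is parallel to their cross product. -/
lemma cross_smul_of_orthogonal {v v' g : Fin 3 → ℝ} (h : g ⬝ᵥ v = 0) (h' : g ⬝ᵥ v' = 0) :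
    g ⨯₃ (v ⨯₃ v') = 0 := by
  simp only [dotProduct, Fin.sum_univ_three] at h h'
  rw [cross_apply, cross_apply]
  ext i
  fin_cases i <;> simp
  · linear_combination v 0 * h' - v' 0 * h
  · linear_combination v 1 * h' - v' 1 * h
  · linear_combination v 2 * h' - v' 2 * h

/-- Vectors parallel to a common nonzero vector are parallel. -/
lemma mul_eq_mul_of_cross {a w g : Fin 3 → ℝ} (ha : a ≠ 0) (hw : w ⨯₃ a = 0) (hg : g ⨯₃ a = 0)
    (i j : Fin 3) : w i * g j = w j * g i := by
  obtain ⟨k, hk⟩ : ∃ k, a k ≠ 0 := by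
    by_contra h
    push Not at h
    exact ha (funext h)
  have hpar : ∀ u : Fin 3 → ℝ, u ⨯₃ a = 0 → ∀ l, u l = u k / a k * a l := by
    intro u hu l
    rw [cross_apply] at hu
    have h0 := congrFun hu 0
    have h1 := congrFun hu 1
    have h2 := congrFun hu 2
    simp at h0 h1 h2
    rw [div_mul_eq_mul_div, eq_div_iff hk]
    fin_cases k <;> fin_cases l <;> simp <;> linarith
  rw [hpar w hw i, hpar w hw j, hpar g hg i, hpar g hg j]
  ring

/-- Three pairwise independent isotropic vectors for a quadratic form on a plane force the form to
vanish on the plane. For a symmetric matrix `H` and the plane `g^⊥`, the conclusion says that `H v₁`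
is parallel to `g`, that is, orthogonal to the plane. -/
lemma flat_of_three {H : Matrix (Fin 3) (Fin 3) ℝ} (hH : Hᵀ = H) {g v₁ v₂ v₃ : Fin 3 → ℝ}
    (hg : g ≠ 0) (h₁ : g ⬝ᵥ v₁ = 0) (h₂ : g ⬝ᵥ v₂ = 0) (h₃ : g ⬝ᵥ v₃ = 0)
    (h12 : v₁ ⨯₃ v₂ ≠ 0) (h13 : v₁ ⨯₃ v₃ ≠ 0) (h23 : v₂ ⨯₃ v₃ ≠ 0)
    (q₁ : v₁ ⬝ᵥ (H *ᵥ v₁) = 0) (q₂ : v₂ ⬝ᵥ (H *ᵥ v₂) = 0) (q₃ : v₃ ⬝ᵥ (H *ᵥ v₃) = 0)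
    (i j : Fin 3) : (H *ᵥ v₁) i * g j = (H *ᵥ v₁) j * g i := by
  have hga := cross_smul_of_orthogonal h₁ h₂
  have hsymm : ∀ u w, u ⬝ᵥ (H *ᵥ w) = w ⬝ᵥ (H *ᵥ u) := by
    intro u w
    rw [Matrix.dotProduct_mulVec, ← Matrix.mulVec_transpose, hH, dotProduct_comm]
  -- `v₃` lies in the span of `v₁` and `v₂`
  obtain ⟨α, β, hv₃⟩ : ∃ α β : ℝ, v₃ = α • v₁ + β • v₂ := by
    set a := v₁ ⨯₃ v₂ with ha
    have haa : a ⬝ᵥ a ≠ 0 := fun h => h12 (dotProduct_self_eq_zero.1 h)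
    have h3a : v₃ ⬝ᵥ a = 0 := by
      obtain ⟨k, hk⟩ : ∃ k, g k ≠ 0 := by
        by_contra h
        push Not at h
        exact hg (funext h)
      have hpar : ∀ l, a l * g k = a k * g l := fun l =>
        mul_eq_mul_of_cross hg (by rw [← cross_anticomm, hga, neg_zero]) (cross_self g) l k
      have : (v₃ ⬝ᵥ a) * g k = a k * (g ⬝ᵥ v₃) := by
        simp only [dotProduct, Fin.sum_univ_three]
        linear_combination v₃ 0 * hpar 0 + v₃ 1 * hpar 1 + v₃ 2 * hpar 2
      rw [h₃, mul_zero] at this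
      exact (mul_eq_zero.1 this).resolve_right hk
    refine ⟨(v₃ ⨯₃ v₂ ⬝ᵥ a) / (a ⬝ᵥ a), (v₁ ⨯₃ v₃ ⬝ᵥ a) / (a ⬝ᵥ a), ?_⟩
    have hcr : (a ⬝ᵥ a) • v₃ = (v₃ ⨯₃ v₂ ⬝ᵥ a) • v₁ + (v₁ ⨯₃ v₃ ⬝ᵥ a) • v₂ + (v₃ ⬝ᵥ a) • a := by
      rw [ha]
      simp only [cross_apply, dotProduct, Fin.sum_univ_three]
      ext l
      fin_cases l <;> simp <;> ring
    rw [h3a, zero_smul, add_zero] at hcr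
    ext l
    have := congrFun hcr l
    simp only [Pi.smul_apply, Pi.add_apply, smul_eq_mul] at this ⊢
    field_simp
    linarith
  have hα : α ≠ 0 := by
    rintro rfl
    refine h23 ?_
    rw [hv₃, zero_smul, zero_add, map_smul, cross_self, smul_zero]
  have hβ : β ≠ 0 := by
    rintro rfl
    refine h13 ?_
    rw [hv₃, zero_smul, add_zero, map_smul, cross_self, smul_zero]
  have h21 : v₂ ⬝ᵥ (H *ᵥ v₁) = 0 := by
    rw [hv₃] at q₃
    simp only [Matrix.mulVec_add, Matrix.mulVec_smul, dotProduct_add, add_dotProduct,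
      dotProduct_smul, smul_dotProduct, smul_eq_mul, q₁, q₂, hsymm v₁ v₂] at q₃
    have : (2 * (α * β)) * (v₂ ⬝ᵥ (H *ᵥ v₁)) = 0 := by linarith
    exact (mul_eq_zero.1 this).resolve_left (by positivity)
  refine mul_eq_mul_of_cross h12 (cross_smul_of_orthogonal ?_ ?_) hga i j
  · rw [dotProduct_comm]; exact q₁
  · rw [dotProduct_comm]; exact h21

lemma cross_ne_zero_of_not_parallel {v v' : Fin 3 → ℝ} (hv : v ≠ 0) (h : ∀ c : ℝ, v' ≠ c • v) :
    v ⨯₃ v' ≠ 0 := by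
  rw [crossProduct_ne_zero_iff_linearIndependent, LinearIndependent.pair_iff' hv]
  exact fun c hc => h c hc.symm

/-- Two real polynomials with vanishing Wronskian are proportional. -/
lemma proportional_of_wronskian {f g : Polynomial ℝ}
    (h : Polynomial.derivative f * g = Polynomial.derivative g * f) (s t : ℝ) :
    f.eval s * g.eval t = f.eval t * g.eval s := by
  set H := Polynomial.C (f.eval s) * g - Polynomial.C (g.eval s) * f with hH
  suffices hz : H = 0 by
    have := congrArg (Polynomial.eval t) hz
    rw [hH] at this
    simp at this
    linarith
  by_contra hne
  -- `H` satisfies `H F' = H' F` for `F = f, g`; comparing multiplicities at its root `s` gives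
  -- `F s = 0` for both, hence `H = 0`.
  have hroot : H.IsRoot s := by
    rw [Polynomial.IsRoot, hH]; simp; ring
  have key : ∀ F : Polynomial ℝ, H * Polynomial.derivative F = Polynomial.derivative H * F →
      F.eval s = 0 := by
    intro F hF
    by_contra hFs
    have hm : 0 < H.rootMultiplicity s := (Polynomial.rootMultiplicity_pos hne).2 hroot
    have hF0 : F ≠ 0 := fun h => hFs (by rw [h]; simp)
    have hd := Polynomial.derivative_rootMultiplicity_of_root hroot
    have hdH : Polynomial.derivative H ≠ 0 := by
      intro h0
      have hcst := Polynomial.eq_C_of_derivative_eq_zero h0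
      rw [Polynomial.IsRoot, hcst, Polynomial.eval_C] at hroot
      exact hne (by rw [hcst, hroot, Polynomial.C_0])
    have hprod : Polynomial.derivative H * F ≠ 0 := mul_ne_zero hdH hF0
    have h1 := Polynomial.rootMultiplicity_mul (x := s) hprod
    have h2 := Polynomial.rootMultiplicity_mul (x := s) (hF ▸ hprod)
    rw [hF, h1, hd, Polynomial.rootMultiplicity_eq_zero (p := F) hFs] at h2
    omega
  have hf := key f (by
    rw [hH]
    simp only [Polynomial.derivative_sub, Polynomial.derivative_mul, Polynomial.derivative_C]
    linear_combination Polynomial.C (f.eval s) * h)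
  have hg := key g (by
    rw [hH]
    simp only [Polynomial.derivative_sub, Polynomial.derivative_mul, Polynomial.derivative_C]
    linear_combination Polynomial.C (g.eval s) * h)
  exact hne (by rw [hH, hf, hg]; simp)

/-- The gradient of `q` has constant direction along a line containing many flat points of `q`. At a flat
point the derivative of the gradient along the line is parallel to the gradient (`hflat`). The
corresponding minors have degree at most `2 δ`, so they vanish on the whole line, and
`proportional_of_wronskian` applies to pairs of partial derivatives. -/
lemma gradient_parallel_on_line {n δ : ℕ} {ℓ : Set (Fin n → ℝ)} {v : Fin n → ℝ}
    {q : MvPolynomial (Fin n) ℝ} (hv : HasDir n ℓ v) (hq : q.totalDegree ≤ δ)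
    (A : Finset (Fin n → ℝ)) (hA : ∀ x ∈ A, x ∈ ℓ) (hcard : 2 * δ < A.card)
    (hflat : ∀ x ∈ A, ∀ i j,
      (∑ k, v k * eval x (pderiv k (pderiv i q))) * eval x (pderiv j q) =
        (∑ k, v k * eval x (pderiv k (pderiv j q))) * eval x (pderiv i q))
    {x y : Fin n → ℝ} (hx : x ∈ ℓ) (hy : y ∈ ℓ) (i j : Fin n) :
    eval x (pderiv i q) * eval y (pderiv j q) = eval y (pderiv i q) * eval x (pderiv j q) := by
  set G : Fin n → MvPolynomial (Fin n) ℝ := fun i =>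
    ∑ k, MvPolynomial.C (v k) * pderiv k (pderiv i q) with hG
  set W := G i * pderiv j q - G j * pderiv i q with hW
  have hdeg1 : ∀ i, (pderiv i q).totalDegree ≤ δ := totalDegree_pderiv_le_self hq
  have hGdeg : ∀ i, (G i).totalDegree ≤ δ := by
    intro i
    refine (MvPolynomial.totalDegree_finsetSum _ _).trans (Finset.sup_le fun k _ => ?_)
    refine (MvPolynomial.totalDegree_mul _ _).trans ?_
    rw [MvPolynomial.totalDegree_C, zero_add]
    exact totalDegree_pderiv_le_self (hdeg1 i) k
  have hWdeg : W.totalDegree ≤ 2 * δ := by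
    refine (MvPolynomial.totalDegree_sub _ _).trans (max_le ?_ ?_) <;>
    refine (MvPolynomial.totalDegree_mul _ _).trans ?_
    · have := hGdeg i; have := hdeg1 j; omega
    · have := hGdeg j; have := hdeg1 i; omega
  have hline : IsLine n ℓ := by
    obtain ⟨hv0, a, ha⟩ := hv
    exact ⟨a, v, hv0, ha⟩
  have hWℓ : ∀ z ∈ ℓ, eval z W = 0 := by
    intro z hz
    by_contra hne
    refine absurd (card_zeros_on_line_le hline hWdeg hA (fun u hu => ?_) hz hne) (by omega)
    rw [hW]
    simp only [hG, map_sub, map_mul, map_sum, MvPolynomial.eval_C]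
    exact sub_eq_zero.2 (hflat u hu i j)
  have hL := hv.eq_through hx
  have hpoly : Polynomial.derivative (lineRestr x v (pderiv i q)) * lineRestr x v (pderiv j q) =
      Polynomial.derivative (lineRestr x v (pderiv j q)) * lineRestr x v (pderiv i q) := by
    refine Polynomial.funext fun t => ?_
    have := hWℓ (x + t • v) (by rw [hL]; exact ⟨t, rfl⟩)
    rw [hW] at this
    simp only [hG, map_sub, map_mul, map_sum, MvPolynomial.eval_C] at this
    simp only [derivative_lineRestr, Polynomial.eval_mul, Polynomial.eval_finsetSum,
      Polynomial.eval_C, eval_lineRestr]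
    exact sub_eq_zero.1 this
  rw [hL] at hy
  obtain ⟨t, rfl⟩ := hy
  have := proportional_of_wronskian hpoly 0 t
  simpa [eval_lineRestr] using this

end Flat

/-! ### Splitting flat points into planes -/

section Planes

open scoped Classical Matrix
open MvPolynomial (eval pderiv)

/-- If three distinct lines through `x` lie in the zero set of `q`, and `x` is a regular point
of `q`, then `x` is flat: the second fundamental form at `x` vanishes. The conclusion is the part used
later: the derivative of the gradient along `ℓ₁` is parallel to the gradient. -/
lemma flat_at_point {q : MvPolynomial (Fin 3) ℝ} {x v : Fin 3 → ℝ} {ℓ₁ ℓ₂ ℓ₃ : Set (Fin 3 → ℝ)}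
    (hL₂ : IsLine 3 ℓ₂) (hL₃ : IsLine 3 ℓ₃) (hv : HasDir 3 ℓ₁ v)
    (hx₁ : x ∈ ℓ₁) (hx₂ : x ∈ ℓ₂) (hx₃ : x ∈ ℓ₃) (h12 : ℓ₁ ≠ ℓ₂) (h13 : ℓ₁ ≠ ℓ₃) (h23 : ℓ₂ ≠ ℓ₃)
    (hq₁ : ∀ y ∈ ℓ₁, eval y q = 0) (hq₂ : ∀ y ∈ ℓ₂, eval y q = 0) (hq₃ : ∀ y ∈ ℓ₃, eval y q = 0)
    (hreg : ∃ i, eval x (pderiv i q) ≠ 0) (i j : Fin 3) :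
    (∑ k, v k * eval x (pderiv k (pderiv i q))) * eval x (pderiv j q) =
      (∑ k, v k * eval x (pderiv k (pderiv j q))) * eval x (pderiv i q) := by
  obtain ⟨v₂, hv₂⟩ := hL₂.exists_hasDir
  obtain ⟨v₃, hv₃⟩ := hL₃.exists_hasDir
  set H : Matrix (Fin 3) (Fin 3) ℝ := Matrix.of fun i k => eval x (pderiv k (pderiv i q)) with hH
  set g : Fin 3 → ℝ := fun i => eval x (pderiv i q) with hg
  have hmul : ∀ (w : Fin 3 → ℝ) i, (H *ᵥ w) i = ∑ k, w k * eval x (pderiv k (pderiv i q)) := by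
    intro w i
    simp only [Matrix.mulVec, dotProduct, hH, Matrix.of_apply]
    exact Finset.sum_congr rfl fun k _ => mul_comm _ _
  have hdot : ∀ w : Fin 3 → ℝ, ∑ k, w k * eval x (pderiv k q) = 0 → g ⬝ᵥ w = 0 := by
    intro w hw
    rw [dotProduct_comm]
    exact hw
  have hquad : ∀ w : Fin 3 → ℝ, ∑ i, w i * ∑ j, w j * eval x (pderiv j (pderiv i q)) = 0 →
      w ⬝ᵥ (H *ᵥ w) = 0 := by
    intro w hw
    simp only [dotProduct, hmul]
    exact hw
  have := flat_of_three (H := H) (g := g) (v₁ := v) (v₂ := v₂) (v₃ := v₃) ?_ ?_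
    (hdot _ (sum_dir_pderiv_eq_zero hv hx₁ hq₁)) (hdot _ (sum_dir_pderiv_eq_zero hv₂ hx₂ hq₂))
    (hdot _ (sum_dir_pderiv_eq_zero hv₃ hx₃ hq₃))
    (cross_ne_zero_of_not_parallel hv.1 (hv.not_parallel hv₂ hx₁ hx₂ h12))
    (cross_ne_zero_of_not_parallel hv.1 (hv.not_parallel hv₃ hx₁ hx₃ h13))
    (cross_ne_zero_of_not_parallel hv₂.1 (hv₂.not_parallel hv₃ hx₂ hx₃ h23))
    (hquad _ (sum_dir_pderiv2_eq_zero hv hx₁ hq₁)) (hquad _ (sum_dir_pderiv2_eq_zero hv₂ hx₂ hq₂))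
    (hquad _ (sum_dir_pderiv2_eq_zero hv₃ hx₃ hq₃)) i j
  · rw [hmul, hmul] at this
    exact this
  · ext a b
    simp only [Matrix.transpose_apply, hH, Matrix.of_apply]
    rw [pderiv_comm']
  · obtain ⟨i, hi⟩ := hreg
    exact fun h => hi (congrFun h i)

/-- Each point `x` of `X₁` carries the plane through `x` with normal `ν x`, which contains every line
of `R` related to `x` by `inc`, and points related to the same line carry the same plane. The points
then split into classes, one for each plane, no two of which have a related line in common, so that
`rich_points_in_plane` can be applied in each class and the bounds added. If each plane contains at
most `B` points, the second alternative of that bound gives `|X| k ≤ 10 L √(B / k)`. -/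
lemma sum_over_planes (k : ℕ) (hk : 2 ≤ k) (R : Finset (Set (Fin 3 → ℝ)))
    (hL : ∀ ℓ ∈ R, IsLine 3 ℓ) (X₁ X₂ : Finset (Fin 3 → ℝ)) (hX : X₂ ⊆ X₁)
    (inc : (Fin 3 → ℝ) → Set (Fin 3 → ℝ) → Prop) (ν : (Fin 3 → ℝ) → Fin 3 → ℝ)
    (hν : ∀ x ∈ X₁, ν x ≠ 0)
    (hinc : ∀ x ∈ X₁, ∀ ℓ ∈ R, inc x ℓ → x ∈ ℓ ∧ ∀ y ∈ ℓ, ν x ⬝ᵥ (y - x) = 0)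
    (hpar : ∀ x ∈ X₁, ∀ y ∈ X₁, ∀ ℓ ∈ R, inc x ℓ → inc y ℓ → ∀ i j,
      ν x i * ν y j = ν y i * ν x j)
    (hdeg : ∀ x ∈ X₂, k ≤ (R.filter fun ℓ => inc x ℓ).card) (B : ℝ)
    (hB : ∀ μ x₀ : Fin 3 → ℝ, μ ≠ 0 → ((X₂.filter fun x => μ ⬝ᵥ (x - x₀) = 0).card : ℝ) ≤ B) :
    (X₂.card : ℝ) * k ≤ R.card * (2 + 10 * √(B / k)) := by
  set Pl : (Fin 3 → ℝ) → Set (Fin 3 → ℝ) := fun x => {z | ν x ⬝ᵥ (z - x) = 0} with hPl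
  have hself : ∀ x, x ∈ Pl x := fun x => by simp [hPl]
  have hsub : ∀ x ∈ X₁, ∀ y ∈ X₁, ∀ ℓ ∈ R, inc x ℓ → inc y ℓ → Pl x ⊆ Pl y := by
    intro x hx y hy ℓ hℓ hxℓ hyℓ z hz
    have hz' : ν x ⬝ᵥ (z - x) = 0 := hz
    have h1 := (hinc x hx ℓ hℓ hxℓ).2 y (hinc y hy ℓ hℓ hyℓ).1
    have h2 : ν x ⬝ᵥ (z - y) = 0 := by
      rw [← sub_sub_sub_cancel_right z y x, dotProduct_sub, hz', h1, sub_zero]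
    obtain ⟨j, hj⟩ := Function.ne_iff.1 (hν x hx)
    have h3 : ν x j * (ν y ⬝ᵥ (z - y)) = ν y j * (ν x ⬝ᵥ (z - y)) := by
      simp only [dotProduct, Finset.mul_sum, ← mul_assoc]
      refine Finset.sum_congr rfl fun i _ => ?_
      rw [hpar x hx y hy ℓ hℓ hxℓ hyℓ]
    rw [h2, mul_zero] at h3
    exact (mul_eq_zero.1 h3).resolve_left hj
  have heq : ∀ x ∈ X₁, ∀ y ∈ X₁, ∀ ℓ ∈ R, inc x ℓ → inc y ℓ → Pl x = Pl y :=
    fun x hx y hy ℓ hℓ hxℓ hyℓ =>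
      (hsub x hx y hy ℓ hℓ hxℓ hyℓ).antisymm (hsub y hy x hx ℓ hℓ hyℓ hxℓ)
  set PS := X₂.image Pl with hPS
  set M : Set (Fin 3 → ℝ) → Finset (Set (Fin 3 → ℝ)) := fun P =>
    R.filter fun ℓ => ∃ x ∈ X₁, inc x ℓ ∧ Pl x = P with hM
  have hMsum : ∑ P ∈ PS, (M P).card ≤ R.card := by
    rw [← Finset.card_biUnion]
    · exact Finset.card_le_card (Finset.biUnion_subset.2 fun P _ => Finset.filter_subset _ _)
    · intro P _ P' _ hne
      refine Finset.disjoint_left.2 fun ℓ h h' => hne ?_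
      obtain ⟨hℓ, x, hx, hxℓ, rfl⟩ := Finset.mem_filter.1 h
      obtain ⟨-, y, hy, hyℓ, rfl⟩ := Finset.mem_filter.1 h'
      exact heq x hx y hy ℓ hℓ hxℓ hyℓ
  have hk0 : (0 : ℝ) < k := by exact_mod_cast (by omega : 0 < k)
  have hplane : ∀ P ∈ PS, ((X₂.filter fun x => Pl x = P).card : ℝ) * k ≤
      (M P).card * (2 + 10 * √(B / k)) := by
    intro P hP
    obtain ⟨x₀, hx₀, rfl⟩ := Finset.mem_image.1 hP
    set m := (X₂.filter fun x => Pl x = Pl x₀).card with hm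
    have hmem : ∀ x ∈ X₂.filter (fun x => Pl x = Pl x₀), ν x₀ ⬝ᵥ (x - x₀) = 0 := by
      intro x hx
      have h : x ∈ Pl x₀ := (Finset.mem_filter.1 hx).2 ▸ hself x
      exact h
    have hmB : (m : ℝ) ≤ B := by
      refine le_trans ?_ (hB (ν x₀) x₀ (hν x₀ (hX hx₀)))
      exact_mod_cast Finset.card_le_card fun x hx =>
        Finset.mem_filter.2 ⟨(Finset.mem_filter.1 hx).1, hmem x hx⟩
    have hs : 0 ≤ √(B / k) := Real.sqrt_nonneg _
    have hdegP : ∀ x ∈ X₂.filter (fun x => Pl x = Pl x₀),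
        k ≤ ((M (Pl x₀)).filter (x ∈ ·)).card := by
      intro x hx
      obtain ⟨hx2, hxP⟩ := Finset.mem_filter.1 hx
      refine (hdeg x hx2).trans (Finset.card_le_card fun ℓ hℓ => ?_)
      obtain ⟨hℓR, hxℓ⟩ := Finset.mem_filter.1 hℓ
      exact Finset.mem_filter.2 ⟨Finset.mem_filter.2 ⟨hℓR, x, hX hx2, hxℓ, hxP⟩,
        (hinc x (hX hx2) ℓ hℓR hxℓ).1⟩
    have hlines : ∀ ℓ ∈ M (Pl x₀), ∀ y ∈ ℓ, ν x₀ ⬝ᵥ (y - x₀) = 0 := by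
      intro ℓ hℓ y hy
      obtain ⟨hℓR, x, hx, hxℓ, hxP⟩ := Finset.mem_filter.1 hℓ
      have h : y ∈ Pl x := (hinc x hx ℓ hℓR hxℓ).2 y hy
      rw [hxP] at h
      exact h
    rcases rich_points_in_plane hk _ (M (Pl x₀))
      (fun ℓ hℓ => hL ℓ (Finset.mem_filter.1 hℓ).1) hdegP (hν x₀ (hX hx₀)) hmem hlines with h | h
    · have h' : (m : ℝ) * k ≤ 2 * (M (Pl x₀)).card := by exact_mod_cast h
      have : 0 ≤ ((M (Pl x₀)).card : ℝ) * (10 * √(B / k)) := by positivity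
      linarith
    · have h' : (m : ℝ) * k ^ 3 ≤ 100 * (M (Pl x₀)).card ^ 2 := by exact_mod_cast h
      have hB0 : 0 ≤ B := le_trans (Nat.cast_nonneg _) hmB
      have h2 : (m : ℝ) * k ≤ (M (Pl x₀)).card * (10 * √(B / k)) := by
        refine (sq_le_sq₀ (by positivity) (by positivity)).1 ?_
        rw [mul_pow, mul_pow, mul_pow, Real.sq_sqrt (by positivity)]
        calc (m : ℝ) ^ 2 * k ^ 2 = m * (m * k ^ 3) / k := by field_simp
          _ ≤ B * (100 * (M (Pl x₀)).card ^ 2) / k := by gcongr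
          _ = _ := by ring
      have : 0 ≤ ((M (Pl x₀)).card : ℝ) * 2 := by positivity
      linarith
  calc (X₂.card : ℝ) * k = ∑ P ∈ PS, ((X₂.filter fun x => Pl x = P).card : ℝ) * k := by
        rw [← Finset.sum_mul, Finset.card_eq_sum_card_image Pl X₂]
        push_cast; rfl
    _ ≤ ∑ P ∈ PS, ((M P).card : ℝ) * (2 + 10 * √(B / k)) := Finset.sum_le_sum hplane
    _ = (∑ P ∈ PS, (M P).card : ℕ) * (2 + 10 * √(B / k)) := by
        rw [← Finset.sum_mul]; push_cast; rfl
    _ ≤ _ := by gcongr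

end Planes

/-! ### Rich points in space -/

section RichPoints

open scoped Classical Matrix
open MvPolynomial (eval pderiv)

lemma card_mul_le_of_sum_le {α : Type*} {X : Finset α} {f : α → ℕ} {a k C : ℕ}
    (h : ∀ x ∈ X, k ≤ a * f x) (hC : ∑ x ∈ X, f x ≤ C) : X.card * k ≤ a * C :=
  calc X.card * k = ∑ _x ∈ X, k := by simp
    _ ≤ ∑ x ∈ X, a * f x := Finset.sum_le_sum h
    _ ≤ _ := by rw [← Finset.mul_sum]; exact Nat.mul_le_mul_left a hC

/-- Points of `ℝ³` on at least `k` of `L` lines, with at most `B` of them in any plane. The degree `d` is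
of order `(|X| / k)^(1/3)`. If `|X| k = O(d L)`, one gets the first alternative. Otherwise `X` is
dominated by the set `X₂` of points on at least `k / 4` good lines from `R`, where `R` consists of the
rich lines, those having more than `6 d` good incidences with the set `X₁` of points on at least
`k / 2` good lines. As `k ≥ 5`, points of `X₁` are on three good lines, hence flat, so the gradient has
constant direction along rich lines, and `sum_over_planes` applies with the tangent planes. -/
theorem rich_points_in_space {k : ℕ} (hk : 5 ≤ k) (X : Finset (Fin 3 → ℝ))
    (𝔏 : Finset (Set (Fin 3 → ℝ))) (hL : ∀ ℓ ∈ 𝔏, IsLine 3 ℓ)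
    (hdeg : ∀ x ∈ X, k ≤ (𝔏.filter (x ∈ ·)).card) (B : ℝ)
    (hB : ∀ μ x₀ : Fin 3 → ℝ, μ ≠ 0 → ((X.filter fun x => μ ⬝ᵥ (x - x₀) = 0).card : ℝ) ≤ B) :
    X.card ^ 2 * k ^ 4 ≤ 72 ^ 3 * 𝔏.card ^ 3 ∨
      (X.card : ℝ) * k ≤ 𝔏.card * (20 + 160 * √(B / k)) := by
  obtain ⟨d, hd, hd'⟩ := exists_degree 3 k X.card three_ne_zero (by omega)
  obtain ⟨Q, Y, hQd, hQeq, hYX, hXY, hY⟩ := exists_stratification d k X 𝔏 hL hdeg hd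
  obtain ⟨inc, hinc⟩ : ∃ inc : (Fin 3 → ℝ) → Set (Fin 3 → ℝ) → Prop,
      ∀ x ℓ, inc x ℓ ↔ x ∈ ℓ ∧ GoodInc Q x ℓ := ⟨_, fun _ _ => Iff.rfl⟩
  have hmem : ∀ {x ℓ}, inc x ℓ → x ∈ ℓ := fun h => ((hinc _ _).1 h).1
  have hgood : ∀ {x ℓ}, inc x ℓ → GoodInc Q x ℓ := fun h => ((hinc _ _).1 h).2
  set X₁ := Y.filter fun x => k ≤ 2 * (𝔏.filter fun ℓ => inc x ℓ).card with hX₁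
  set R := 𝔏.filter fun ℓ => 2 * (3 * d) < (X₁.filter fun x => inc x ℓ).card with hR
  set X₂ := X₁.filter fun x => k ≤ 4 * (R.filter fun ℓ => inc x ℓ).card with hX₂
  have hX₁Y : X₁ ⊆ Y := Finset.filter_subset _ _
  have hX₂X₁ : X₂ ⊆ X₁ := Finset.filter_subset _ _
  have hR𝔏 : R ⊆ 𝔏 := Finset.filter_subset _ _
  have c1 : (X \ Y).card * k ≤ 1 * (2 * (3 * d + 1) * 𝔏.card) :=
    card_mul_le_of_sum_le (fun x hx => by
      rw [one_mul]; exact hdeg x (Finset.sdiff_subset hx)) hXY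
  -- A point outside `X₁` is on at least `k / 2` lines with which its incidence is not good.
  have c2 : (Y \ X₁).card * k ≤ 2 * (3 * d * 𝔏.card) := by
    refine card_mul_le_of_sum_le (f := fun x => (𝔏.filter fun ℓ => x ∈ ℓ ∧ ¬ GoodInc Q x ℓ).card)
      (fun x hx => ?_) ((Finset.sum_le_sum_of_subset Finset.sdiff_subset).trans hY)
    obtain ⟨hxY, hx⟩ := Finset.mem_sdiff.1 hx
    have hx1 : ¬ k ≤ 2 * (𝔏.filter fun ℓ => inc x ℓ).card := fun h =>
      hx (Finset.mem_filter.2 ⟨hxY, h⟩)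
    have h1 := hdeg x (hYX hxY)
    have h3 : (𝔏.filter (x ∈ ·)).card = (𝔏.filter fun ℓ => inc x ℓ).card +
        (𝔏.filter fun ℓ => x ∈ ℓ ∧ ¬ GoodInc Q x ℓ).card := by
      simp only [hinc]
      rw [← Finset.filter_filter, ← Finset.filter_filter,
        Finset.card_filter_add_card_filter_not]
    omega
  -- A point outside `X₂` is on at least `k / 4` good lines that are not rich, and each of those has
  -- at most `6 d` good incidences with `X₁`.
  have c3 : (X₁ \ X₂).card * k ≤ 4 * (6 * d * 𝔏.card) := by
    have hpoor : ∑ x ∈ X₁, (𝔏.filter fun ℓ => inc x ℓ ∧ ℓ ∉ R).card ≤ 6 * d * 𝔏.card := by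
      have h := Finset.sum_card_bipartiteAbove_eq_sum_card_bipartiteBelow
        (s := X₁) (t := 𝔏) (fun x ℓ => inc x ℓ ∧ ℓ ∉ R)
      unfold Finset.bipartiteAbove Finset.bipartiteBelow at h
      rw [h]
      calc _ ≤ ∑ _ℓ ∈ 𝔏, 6 * d := by
            refine Finset.sum_le_sum fun ℓ hℓ => ?_
            by_cases hℓR : ℓ ∈ R
            · simp [hℓR]
            · have : ¬ 2 * (3 * d) < (X₁.filter fun x => inc x ℓ).card := fun h =>
                hℓR (Finset.mem_filter.2 ⟨hℓ, h⟩)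
              simp only [hℓR, not_false_eq_true, and_true]
              omega
        _ = _ := by simp [mul_comm]
    refine card_mul_le_of_sum_le (f := fun x => (𝔏.filter fun ℓ => inc x ℓ ∧ ℓ ∉ R).card)
      (fun x hx => ?_) ((Finset.sum_le_sum_of_subset Finset.sdiff_subset).trans hpoor)
    obtain ⟨hxX₁, hx⟩ := Finset.mem_sdiff.1 hx
    have hx1 : ¬ k ≤ 4 * (R.filter fun ℓ => inc x ℓ).card := fun h =>
      hx (Finset.mem_filter.2 ⟨hxX₁, h⟩)
    have h1 := (Finset.mem_filter.1 hxX₁).2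
    have h3 : (𝔏.filter fun ℓ => inc x ℓ).card = (R.filter fun ℓ => inc x ℓ).card +
        (𝔏.filter fun ℓ => inc x ℓ ∧ ℓ ∉ R).card := by
      have e : R.filter (fun ℓ => inc x ℓ) = (𝔏.filter fun ℓ => inc x ℓ).filter (· ∈ R) := by
        ext ℓ
        simp only [Finset.mem_filter]
        exact ⟨fun h => ⟨⟨hR𝔏 h.1, h.2⟩, h.1⟩, fun h => ⟨h.2, h.1.2⟩⟩
      rw [e, ← Finset.filter_filter, Finset.card_filter_add_card_filter_not]
    omega
  -- The normal at `x` is the gradient of the common polynomial of all good lines through `x`.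
  set ν : (Fin 3 → ℝ) → Fin 3 → ℝ := fun x i =>
    if h : ∃ ℓ ∈ 𝔏, inc x ℓ then eval x (pderiv i (Q h.choose)) else 0 with hν
  have hνeq : ∀ x, ∀ ℓ ∈ 𝔏, inc x ℓ → ∀ i, ν x i = eval x (pderiv i (Q ℓ)) := by
    intro x ℓ hℓ hxℓ i
    have h : ∃ ℓ ∈ 𝔏, inc x ℓ := ⟨ℓ, hℓ, hxℓ⟩
    have hc := h.choose_spec.2
    simp only [hν, dif_pos h]
    rw [hQeq x _ ℓ (hmem hc) (hmem hxℓ) (hgood hc) (hgood hxℓ)]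
  have hthree : ∀ x ∈ X₁, 2 < (𝔏.filter fun ℓ => inc x ℓ).card := by
    intro x hx
    have := (Finset.mem_filter.1 hx).2
    omega
  have hflat : ∀ x ∈ X₁, ∀ ℓ ∈ 𝔏, inc x ℓ → ∀ v, HasDir 3 ℓ v → ∀ i j,
      (∑ a, v a * eval x (pderiv a (pderiv i (Q ℓ)))) * eval x (pderiv j (Q ℓ)) =
        (∑ a, v a * eval x (pderiv a (pderiv j (Q ℓ)))) * eval x (pderiv i (Q ℓ)) := by
    intro x hx ℓ hℓ hxℓ v hv
    have h2 : 1 < ((𝔏.filter fun ℓ => inc x ℓ).erase ℓ).card := by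
      rw [Finset.card_erase_of_mem (Finset.mem_filter.2 ⟨hℓ, hxℓ⟩)]
      exact Nat.lt_sub_of_add_lt (hthree x hx)
    obtain ⟨ℓ₂, h₂, ℓ₃, h₃, h23⟩ := Finset.one_lt_card.1 h2
    rw [Finset.mem_erase, Finset.mem_filter] at h₂ h₃
    obtain ⟨hne₂, hℓ₂, hx₂⟩ := h₂
    obtain ⟨hne₃, hℓ₃, hx₃⟩ := h₃
    have e₂ := hQeq x ℓ ℓ₂ (hmem hxℓ) (hmem hx₂) (hgood hxℓ) (hgood hx₂)
    have e₃ := hQeq x ℓ ℓ₃ (hmem hxℓ) (hmem hx₃) (hgood hxℓ) (hgood hx₃)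
    exact flat_at_point (hL _ hℓ₂) (hL _ hℓ₃) hv (hmem hxℓ) (hmem hx₂) (hmem hx₃)
      hne₂.symm hne₃.symm h23 (hgood hxℓ).1 (e₂ ▸ (hgood hx₂).1) (e₃ ▸ (hgood hx₃).1) (hgood hxℓ).2
  -- `k / 4` rounded up; at least `2` because `k ≥ 5`
  set k' := (k + 3) / 4 with hk'
  have hmain := sum_over_planes k' (by omega) R (fun ℓ hℓ => hL ℓ (hR𝔏 hℓ)) X₁ X₂ hX₂X₁ inc ν
    (fun x hx => ?_) (fun x hx ℓ hℓ hxℓ => ?_) (fun x hx y hy ℓ hℓ hxℓ hyℓ i j => ?_)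
    (fun x hx => ?_) B (fun μ x₀ hμ => ?_)
  · have hk0 : (0 : ℝ) < k := by exact_mod_cast (by omega : 0 < k)
    have hk'0 : (0 : ℝ) < k' := by exact_mod_cast (by omega : 0 < k')
    have hkk' : (k : ℝ) ≤ 4 * k' := by exact_mod_cast (by omega : k ≤ 4 * k')
    have hRL : (R.card : ℝ) ≤ 𝔏.card := by exact_mod_cast Finset.card_le_card hR𝔏
    have hB0 : 0 ≤ B := le_trans (Nat.cast_nonneg _) (hB 1 0 one_ne_zero)
    have hsq : √(B / k') ≤ 2 * √(B / k) := by
      rw [show (2 : ℝ) = √4 by rw [show (4 : ℝ) = 2 ^ 2 by norm_num, Real.sqrt_sq (by norm_num)],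
        ← Real.sqrt_mul (by norm_num)]
      refine Real.sqrt_le_sqrt ?_
      rw [← mul_div_assoc, div_le_div_iff₀ hk'0 hk0]
      calc B * k ≤ B * (4 * k') := by gcongr
        _ = _ := by ring
    have h2 : (X₂.card : ℝ) * k ≤ 𝔏.card * (8 + 80 * √(B / k)) := by
      calc (X₂.card : ℝ) * k ≤ X₂.card * (4 * k') := by gcongr
        _ = 4 * (X₂.card * k') := by ring
        _ ≤ 4 * (R.card * (2 + 10 * √(B / k'))) := by gcongr
        _ ≤ 4 * (𝔏.card * (2 + 10 * (2 * √(B / k)))) := by gcongr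
        _ = _ := by ring
    have hsplit : X.card = (X \ Y).card + ((Y \ X₁).card + ((X₁ \ X₂).card + X₂.card)) := by
      rw [Finset.card_sdiff_add_card_eq_card hX₂X₁, Finset.card_sdiff_add_card_eq_card hX₁Y,
        Finset.card_sdiff_add_card_eq_card hYX]
    have hsum : X.card * k ≤ (36 * d + 2) * 𝔏.card + X₂.card * k := by
      rw [hsplit]
      nlinarith
    have hsum' : (X.card : ℝ) * k ≤ (36 * d + 2) * 𝔏.card + X₂.card * k := by
      exact_mod_cast hsum
    rcases le_or_gt (X.card * k) (72 * d * 𝔏.card) with hle | hgt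
    · rcases hd' with rfl | hd'
      · right
        have : X.card * k = 0 := by simpa using hle
        have h0 : (X.card : ℝ) * k = 0 := by exact_mod_cast this
        rw [h0]; positivity
      · left
        rcases Nat.eq_zero_or_pos X.card with h0 | hpos
        · rw [h0]; simp
        refine Nat.le_of_mul_le_mul_left ?_ hpos
        calc X.card * (X.card ^ 2 * k ^ 4) = (X.card * k) ^ 3 * k := by ring
          _ ≤ (72 * d * 𝔏.card) ^ 3 * k := by gcongr
          _ = (k * d ^ 3) * (72 ^ 3 * 𝔏.card ^ 3) := by ring
          _ ≤ X.card * (72 ^ 3 * 𝔏.card ^ 3) := Nat.mul_le_mul_right _ hd'.le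
    · right
      have hgt' : (72 * d * 𝔏.card : ℝ) < X.card * k := by exact_mod_cast hgt
      linarith
  · obtain ⟨ℓ, hℓ⟩ := Finset.card_pos.1 (lt_trans two_pos (hthree x hx))
    obtain ⟨hℓ𝔏, hxℓ⟩ := Finset.mem_filter.1 hℓ
    obtain ⟨i, hi⟩ := (hgood hxℓ).2
    refine fun h => hi ?_
    rw [← hνeq x ℓ hℓ𝔏 hxℓ, h]; rfl
  · refine ⟨hmem hxℓ, fun y hy => ?_⟩
    obtain ⟨v, hv⟩ := (hL ℓ (hR𝔏 hℓ)).exists_hasDir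
    have h0 := sum_dir_pderiv_eq_zero hv (hmem hxℓ) (hgood hxℓ).1
    rw [hv.eq_through (hmem hxℓ)] at hy
    obtain ⟨t, rfl⟩ := hy
    rw [add_sub_cancel_left, dotProduct_smul, dotProduct_comm]
    have : v ⬝ᵥ ν x = 0 := by
      rw [← h0]
      exact Finset.sum_congr rfl fun j _ => by rw [hνeq x ℓ (hR𝔏 hℓ) hxℓ]
    rw [this, smul_zero]
  · obtain ⟨v, hv⟩ := (hL ℓ (hR𝔏 hℓ)).exists_hasDir
    rw [hνeq x ℓ (hR𝔏 hℓ) hxℓ, hνeq x ℓ (hR𝔏 hℓ) hxℓ, hνeq y ℓ (hR𝔏 hℓ) hyℓ,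
      hνeq y ℓ (hR𝔏 hℓ) hyℓ]
    refine gradient_parallel_on_line hv (hQd ℓ) (X₁.filter fun x => inc x ℓ)
      (fun z hz => hmem (Finset.mem_filter.1 hz).2) (Finset.mem_filter.1 hℓ).2
      (fun z hz => ?_) (hmem hxℓ) (hmem hyℓ) i j
    obtain ⟨hz1, hz2⟩ := Finset.mem_filter.1 hz
    exact hflat z hz1 ℓ (hR𝔏 hℓ) hz2 v hv
  · have := (Finset.mem_filter.1 hx).2
    omega
  · refine le_trans ?_ (hB μ x₀ hμ)
    exact_mod_cast Finset.card_le_card (Finset.filter_subset_filter _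
      (hX₂X₁.trans (hX₁Y.trans hYX)))

end RichPoints

/-! ### Multiplicities and planes -/

section Assembly

open scoped Classical Matrix

lemma IsLine.subset_plane {ℓ : Set (Fin 3 → ℝ)} (h : IsLine 3 ℓ) {x y μ x₀ : Fin 3 → ℝ}
    (hx : x ∈ ℓ) (hy : y ∈ ℓ) (hne : x ≠ y) (hxμ : μ ⬝ᵥ (x - x₀) = 0) (hyμ : μ ⬝ᵥ (y - x₀) = 0) :
    ∀ z ∈ ℓ, μ ⬝ᵥ (z - x₀) = 0 := by
  obtain ⟨v, hv⟩ := h.exists_hasDir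
  rw [hv.eq_through hx] at hy ⊢
  obtain ⟨t, rfl⟩ := hy
  have ht : t ≠ 0 := by
    rintro rfl
    exact hne (by simp)
  rw [add_sub_right_comm, dotProduct_add, hxμ, zero_add, dotProduct_smul, smul_eq_mul] at hyμ
  have hμv := (mul_eq_zero.1 hyμ).resolve_left ht
  rintro z ⟨s, rfl⟩
  rw [add_sub_right_comm, dotProduct_add, hxμ, zero_add, dotProduct_smul, hμv, smul_zero]

lemma HasDir.orthogonal_of_subset_plane {ℓ : Set (Fin 3 → ℝ)} {v x μ x₀ : Fin 3 → ℝ}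
    (hv : HasDir 3 ℓ v) (hx : x ∈ ℓ) (h : ∀ z ∈ ℓ, μ ⬝ᵥ (z - x₀) = 0) : v ⬝ᵥ μ = 0 := by
  have h0 := h x hx
  have h1 := h (x + v) (by rw [hv.eq_through hx]; exact ⟨1, by rw [one_smul]⟩)
  rw [add_sub_right_comm, dotProduct_add, h0, zero_add] at h1
  rw [dotProduct_comm, h1]

/-- Three independent directions are not all parallel to a plane, so every triple counted by the
multiplicity contains a line leaving the plane through `x₀` with normal `μ`. -/
lemma jointMult_le (𝔏 : Finset (Set (Fin 3 → ℝ))) (x x₀ μ : Fin 3 → ℝ) (hμ : μ ≠ 0) :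
    jointMult 𝔏 x ≤ (𝔏.filter fun ℓ => x ∈ ℓ ∧ ¬ ∀ z ∈ ℓ, μ ⬝ᵥ (z - x₀) = 0).card *
      linesThrough 𝔏 x ^ 2 := by
  set U := 𝔏.filter fun ℓ => x ∈ ℓ ∧ ¬ ∀ z ∈ ℓ, μ ⬝ᵥ (z - x₀) = 0 with hU
  set T := 𝔏.filter fun ℓ => x ∈ ℓ with hT
  have hcard : (U ×ˢ T ×ˢ T).card = U.card * linesThrough 𝔏 x ^ 2 := by
    rw [Finset.card_product, Finset.card_product, sq]
    rfl
  rw [← hcard, jointMult]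
  refine le_trans (Finset.card_le_card ?_)
    (Finset.card_image_le (f := fun p : _ × _ × _ => {p.1, p.2.1, p.2.2}))
  intro A hA
  obtain ⟨hA, ℓ₁, ℓ₂, ℓ₃, rfl, hx₁, hx₂, hx₃, v₁, v₂, v₃, hv₁, hv₂, hv₃, hli⟩ :=
    Finset.mem_filter.1 hA
  have hsub := (Finset.mem_powersetCard.1 hA).1
  have m₁ : ℓ₁ ∈ T := Finset.mem_filter.2 ⟨hsub (by simp), hx₁⟩
  have m₂ : ℓ₂ ∈ T := Finset.mem_filter.2 ⟨hsub (by simp), hx₂⟩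
  have m₃ : ℓ₃ ∈ T := Finset.mem_filter.2 ⟨hsub (by simp), hx₃⟩
  have hUmem : ∀ ℓ ∈ T, ℓ ∉ U → ∀ z ∈ ℓ, μ ⬝ᵥ (z - x₀) = 0 := by
    intro ℓ hℓ hℓU
    obtain ⟨h1, h2⟩ := Finset.mem_filter.1 hℓ
    by_contra hcon
    exact hℓU (Finset.mem_filter.2 ⟨h1, h2, hcon⟩)
  rw [Finset.mem_image]
  by_cases h₁ : ℓ₁ ∈ U
  · exact ⟨(ℓ₁, ℓ₂, ℓ₃), by simp only [Finset.mem_product]; exact ⟨h₁, m₂, m₃⟩, rfl⟩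
  by_cases h₂ : ℓ₂ ∈ U
  · refine ⟨(ℓ₂, ℓ₁, ℓ₃), by simp only [Finset.mem_product]; exact ⟨h₂, m₁, m₃⟩, ?_⟩
    ext; simp; tauto
  by_cases h₃ : ℓ₃ ∈ U
  · refine ⟨(ℓ₃, ℓ₁, ℓ₂), by simp only [Finset.mem_product]; exact ⟨h₃, m₁, m₂⟩, ?_⟩
    ext; simp; tauto
  exfalso
  have e₁ := hv₁.orthogonal_of_subset_plane hx₁ (hUmem _ m₁ h₁)
  have e₂ := hv₂.orthogonal_of_subset_plane hx₂ (hUmem _ m₂ h₂)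
  have e₃ := hv₃.orthogonal_of_subset_plane hx₃ (hUmem _ m₃ h₃)
  have hinj : Function.Injective (Matrix.mulVec (Matrix.of ![v₁, v₂, v₃])) := by
    rw [Matrix.mulVec_injective_iff_isUnit, ← Matrix.linearIndependent_rows_iff_isUnit]
    exact hli
  refine hμ (hinj ?_)
  rw [Matrix.mulVec_zero]
  ext i
  fin_cases i
  · exact e₁
  · exact e₂
  · exact e₃

/-- Multiplicity bounds the number of joints in a plane: a joint of multiplicity at least `N` on at most
`2 k` lines is on at least `N / (2 k)^2` lines leaving the plane, each of which meets it only once. -/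
lemma card_plane_mul_le {k N : ℕ} (X : Finset (Fin 3 → ℝ)) (𝔏 : Finset (Set (Fin 3 → ℝ)))
    (hL : ∀ ℓ ∈ 𝔏, IsLine 3 ℓ) (hN : ∀ x ∈ X, N ≤ jointMult 𝔏 x)
    (hk : ∀ x ∈ X, linesThrough 𝔏 x ≤ 2 * k) (x₀ μ : Fin 3 → ℝ) (hμ : μ ≠ 0) :
    (X.filter fun x => μ ⬝ᵥ (x - x₀) = 0).card * N ≤ (2 * k) ^ 2 * 𝔏.card := by
  refine card_mul_le_of_sum_le
    (f := fun x => (𝔏.filter fun ℓ => x ∈ ℓ ∧ ¬ ∀ z ∈ ℓ, μ ⬝ᵥ (z - x₀) = 0).card)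
    (fun x hx => ?_) ?_
  · have hxX := (Finset.mem_filter.1 hx).1
    calc N ≤ _ := (hN x hxX).trans (jointMult_le 𝔏 x x₀ μ hμ)
      _ ≤ (𝔏.filter fun ℓ => x ∈ ℓ ∧ ¬ ∀ z ∈ ℓ, μ ⬝ᵥ (z - x₀) = 0).card * (2 * k) ^ 2 :=
          Nat.mul_le_mul_left _ (Nat.pow_le_pow_left (hk x hxX) 2)
      _ = _ := mul_comm _ _
  · have h := Finset.sum_card_bipartiteAbove_eq_sum_card_bipartiteBelow
      (s := X.filter fun x => μ ⬝ᵥ (x - x₀) = 0) (t := 𝔏)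
      (fun x ℓ => x ∈ ℓ ∧ ¬ ∀ z ∈ ℓ, μ ⬝ᵥ (z - x₀) = 0)
    unfold Finset.bipartiteAbove Finset.bipartiteBelow at h
    rw [h, Finset.card_eq_sum_ones]
    refine Finset.sum_le_sum fun ℓ hℓ => Finset.card_le_one.2 fun x hx y hy => ?_
    rw [Finset.mem_filter, Finset.mem_filter] at hx hy
    by_contra hne
    exact hx.2.2 ((hL ℓ hℓ).subset_plane hx.2.1 hy.2.1 hne hx.1.2 hy.1.2)

/-- The first term of the bound, from its square. -/
lemma final_of_sq {S L N k : ℝ} (hS : 0 ≤ S) (hL : 0 ≤ L) (hN : 0 ≤ N) (hk : 0 < k)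
    (h : S ^ 2 * N * k ≤ 1728 ^ 2 * L ^ 3) : S * √N ≤ 1728 * (L * √L / √k) := by
  rw [← mul_div_assoc, le_div_iff₀ (Real.sqrt_pos.2 hk)]
  refine (sq_le_sq₀ (by positivity) (by positivity)).1 ?_
  simp only [mul_pow]
  rw [Real.sq_sqrt hN, Real.sq_sqrt hk.le, Real.sq_sqrt hL]
  linarith

/-- The bound for a finite set of joints. Since `N ≤ 8 k^3`, the bound `|X|^2 k^4 = O(L^3)` implies
`|X|^2 N k = O(L^3)`; for `k ≤ 4` the latter follows from the joints theorem.
For `k ≥ 5`, `rich_points_in_space` applies with the plane bound `B = 4 k^2 L / N`, for which `L √(B / k)` is `2 L^(3/2) k^(1/2) / N^(1/2)`. -/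
lemma joints_bound_finset {k N : ℕ} (hk1 : 1 ≤ k) (hN1 : 1 ≤ N) (X : Finset (Fin 3 → ℝ))
    (𝔏 : Finset (Set (Fin 3 → ℝ))) (hL : ∀ ℓ ∈ 𝔏, IsLine 3 ℓ) (hX : ∀ x ∈ X, x ∈ JNk 𝔏 N k) :
    (X.card : ℝ) * √N ≤ 1728 * ((𝔏.card : ℝ) * √𝔏.card / √k + (𝔏.card : ℝ) / k * √N) := by
  have hk0 : (0 : ℝ) < k := by exact_mod_cast hk1
  have hN0 : (0 : ℝ) < N := by exact_mod_cast hN1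
  rcases X.eq_empty_or_nonempty with rfl | ⟨x, hx⟩
  · simp only [Finset.card_empty, Nat.cast_zero, zero_mul]; positivity
  have hN8 : N ≤ 8 * k ^ 3 := by
    obtain ⟨-, h1, -, -, h2⟩ := hX x hx
    have hU : (𝔏.filter fun ℓ => x ∈ ℓ ∧ ¬ ∀ z ∈ ℓ, (1 : Fin 3 → ℝ) ⬝ᵥ (z - x) = 0).card ≤
        linesThrough 𝔏 x :=
      Finset.card_le_card fun ℓ hℓ => by
        rw [Finset.mem_filter] at hℓ ⊢
        exact ⟨hℓ.1, hℓ.2.1⟩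
    calc N ≤ _ := h1.trans (jointMult_le 𝔏 x x 1 one_ne_zero)
      _ ≤ (2 * k) * (2 * k) ^ 2 :=
          Nat.mul_le_mul (hU.trans h2.le) (Nat.pow_le_pow_left h2.le 2)
      _ = _ := by ring
  have hsecond : 0 ≤ (𝔏.card : ℝ) / k * √N := by positivity
  have hsq : X.card ^ 2 * N * k ≤ 1728 ^ 2 * 𝔏.card ^ 3 →
      (X.card : ℝ) * √N ≤
        1728 * ((𝔏.card : ℝ) * √𝔏.card / √k + (𝔏.card : ℝ) / k * √N) := by
    intro h
    have := final_of_sq (S := X.card) (L := 𝔏.card) (by positivity) (by positivity) hN0.le hk0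
      (by exact_mod_cast h)
    linarith
  rcases Nat.lt_or_ge k 5 with hk5 | hk5
  · refine hsq ?_
    have hj := joints_theorem 𝔏 hL X fun x hx => (hX x hx).1
    have hk4 : k ≤ 4 := by omega
    calc X.card ^ 2 * N * k ≤ (1331 * 𝔏.card ^ 3) * (8 * 4 ^ 3) * 4 := by
          gcongr
          exact hN8.trans (by gcongr)
      _ ≤ _ := by
          rw [show 1331 * 𝔏.card ^ 3 * (8 * 4 ^ 3) * 4 = 2725888 * 𝔏.card ^ 3 by ring]
          exact Nat.mul_le_mul_right _ (by norm_num)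
  have hplane : ∀ μ x₀ : Fin 3 → ℝ, μ ≠ 0 →
      ((X.filter fun x => μ ⬝ᵥ (x - x₀) = 0).card : ℝ) ≤ (2 * k : ℝ) ^ 2 * 𝔏.card / N := by
    intro μ x₀ hμ
    rw [le_div_iff₀ hN0]
    exact_mod_cast card_plane_mul_le X 𝔏 hL (fun x hx => (hX x hx).2.1)
      (fun x hx => (hX x hx).2.2.2.2.le) x₀ μ hμ
  rcases rich_points_in_space hk5 X 𝔏 hL (fun x hx => (hX x hx).2.2.2.1) _ hplane with h | h
  · refine hsq ?_
    calc X.card ^ 2 * N * k ≤ X.card ^ 2 * (8 * k ^ 3) * k := by gcongr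
      _ = 8 * (X.card ^ 2 * k ^ 4) := by ring
      _ ≤ 8 * (72 ^ 3 * 𝔏.card ^ 3) := Nat.mul_le_mul_left _ h
      _ = _ := by ring
  · have hr : √((2 * k : ℝ) ^ 2 * 𝔏.card / N / k) = 2 * √𝔏.card * √k / √N := by
      rw [show (2 * k : ℝ) ^ 2 * 𝔏.card / N / k = 2 ^ 2 * 𝔏.card * k / N by field_simp,
        Real.sqrt_div (by positivity), Real.sqrt_mul (by positivity), Real.sqrt_mul (by positivity),
        Real.sqrt_sq (by norm_num)]
    rw [hr] at h
    have hsN := Real.sqrt_pos.2 hN0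
    have hsk := Real.sqrt_pos.2 hk0
    have h2 : (X.card : ℝ) * √N ≤
        320 * ((𝔏.card : ℝ) * √𝔏.card / √k) + 20 * ((𝔏.card : ℝ) / k * √N) := by
      calc (X.card : ℝ) * √N = (X.card * k) * (√N / k) := by field_simp
        _ ≤ (𝔏.card * (20 + 160 * (2 * √𝔏.card * √k / √N))) * (√N / k) := by gcongr
        _ = 320 * ((𝔏.card : ℝ) * √𝔏.card * (√k / k)) + 20 * ((𝔏.card : ℝ) / k * √N) := by
            field_simp; ring
        _ = _ := by rw [Real.sqrt_div_self', mul_one_div]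
    have : 0 ≤ (𝔏.card : ℝ) * √𝔏.card / √k := by positivity
    linarith

end Assembly

/-- There is a constant `c > 0` such that for every finite collection `𝔏` of `L` lines in
`ℝ³` and all `N, k ≥ 1`, `|J_N^k| · N^{1/2} ≤ c (L^{3/2}/k^{1/2} + (L/k) N^{1/2})`. -/
theorem joints_JNk_bound :
    ∃ c : ℝ, 0 < c ∧ ∀ 𝔏 : Finset (Set (Fin 3 → ℝ)), (∀ ℓ ∈ 𝔏, IsLine 3 ℓ) →
      ∀ N k : ℕ, 1 ≤ N → 1 ≤ k →
        ((JNk 𝔏 N k).ncard : ℝ) * Real.sqrt N ≤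
          c * ((𝔏.card : ℝ) ^ (3 / 2 : ℝ) / (k : ℝ) ^ (1 / 2 : ℝ) +
            ((𝔏.card : ℝ) / (k : ℝ)) * Real.sqrt N) := by
  refine ⟨1728, by norm_num, fun 𝔏 hL N k hN hk => ?_⟩
  have hpow : (𝔏.card : ℝ) ^ (3 / 2 : ℝ) = 𝔏.card * √𝔏.card := by
    rw [Real.sqrt_eq_rpow, show (3 / 2 : ℝ) = 1 + 1 / 2 by norm_num,
      Real.rpow_add' (Nat.cast_nonneg _) (by norm_num), Real.rpow_one]
  rw [hpow, ← Real.sqrt_eq_rpow]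
  -- `ncard` of an infinite set is `0`, so finiteness of the set of joints is not needed.
  rcases (JNk 𝔏 N k).finite_or_infinite with hfin | hinf
  · rw [Set.ncard_eq_toFinset_card _ hfin]
    exact joints_bound_finset hk hN _ 𝔏 hL fun x hx => hfin.mem_toFinset.1 hx
  · rw [hinf.ncard, Nat.cast_zero, zero_mul]
    positivity
end
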